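/- arXiv:1510.06328 — 2 statements merged into one kernel-verified Lean document; each statement's English description precedes it below -/
import Mathlib

section
/- Let d(n) denote the number of permutations of length n avoiding the patterns 4213 and 2143. Then d(n) is asymptotically equivalent to (60/121)·√(5/π)·5ⁿ·n^{−3/2}, i.e. d(n)·n^{3/2}/5ⁿ tends to (60/121)·√(5/π) as n → ∞. -/
open Filter Topology PowerSeries

/-- `σ` contains the pattern `π`. -/
def PatternContains {n k : ℕ} (σ : Equiv.Perm (Fin n)) (π : Fin k → Fin k) : Prop :=
  ∃ f : Fin k → Fin n, StrictMono f ∧ ∀ a b : Fin k, π a < π b ↔ σ (f a) < σ (f b)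

/-- `σ` avoids the pattern `π`. -/
def PatternAvoids {n k : ℕ} (σ : Equiv.Perm (Fin n)) (π : Fin k → Fin k) : Prop :=
  ¬ PatternContains σ π

/-- The pattern 4213 (zero-indexed values). -/
def p4213 : Fin 4 → Fin 4 := ![3, 1, 0, 2]

/-- The pattern 2413 (zero-indexed values). -/
def p2413 : Fin 4 → Fin 4 := ![1, 3, 0, 2]

/-- The pattern 2143 (zero-indexed values). -/
def p2143 : Fin 4 → Fin 4 := ![1, 0, 3, 2]

/-- The pattern 213 (zero-indexed values). -/
def p213 : Fin 3 → Fin 3 := ![1, 0, 2]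

/-- `σ` avoids 4213, 2413 and 2143. -/
def AvoidsH {n : ℕ} (σ : Equiv.Perm (Fin n)) : Prop :=
  PatternAvoids σ p4213 ∧ PatternAvoids σ p2413 ∧ PatternAvoids σ p2143

/-- `σ` avoids 4213 and 2143. -/
def AvoidsD {n : ℕ} (σ : Equiv.Perm (Fin n)) : Prop :=
  PatternAvoids σ p4213 ∧ PatternAvoids σ p2143

/-- An H-gridding of `σ`: a value cutoff `k ∈ {0,…,n}` such that the subsequence of
entries with (1-based) values `> k` is increasing and the subsequence of entries with
values `≤ k` avoids 213. -/
def HGridding {n : ℕ} (σ : Equiv.Perm (Fin n)) (k : ℕ) : Prop :=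
  k ≤ n ∧
  (∀ i j : Fin n, i < j → k < (σ i : ℕ) + 1 → k < (σ j : ℕ) + 1 → σ i < σ j) ∧
  ¬ ∃ f : Fin 3 → Fin n, StrictMono f ∧ (∀ a, (σ (f a) : ℕ) + 1 ≤ k) ∧
      (∀ a b : Fin 3, p213 a < p213 b ↔ σ (f a) < σ (f b))

/-- A G-gridding of `σ`: a pair `(j, k)` with `0 ≤ j, k ≤ n` such that (i) the first `j`
entries have values `≤ k` and are increasing, (ii) the subsequence of entries at
(1-based) positions `> j` with values `> k` is increasing, and (iii) the subsequence of
entries at positions `> j` with values `≤ k` avoids 213. -/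
def GGridding {n : ℕ} (σ : Equiv.Perm (Fin n)) (j k : ℕ) : Prop :=
  j ≤ n ∧ k ≤ n ∧
  (∀ i : Fin n, (i : ℕ) < j → (σ i : ℕ) + 1 ≤ k) ∧
  (∀ i₁ i₂ : Fin n, i₁ < i₂ → (i₂ : ℕ) < j → σ i₁ < σ i₂) ∧
  (∀ i₁ i₂ : Fin n, i₁ < i₂ → j ≤ (i₁ : ℕ) → k < (σ i₁ : ℕ) + 1 → k < (σ i₂ : ℕ) + 1 →
      σ i₁ < σ i₂) ∧
  ¬ ∃ f : Fin 3 → Fin n, StrictMono f ∧ (∀ a, j ≤ ((f a) : ℕ) ∧ (σ (f a) : ℕ) + 1 ≤ k) ∧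
      (∀ a b : Fin 3, p213 a < p213 b ↔ σ (f a) < σ (f b))

/-- The number of permutations of length `n` avoiding 4213, 2413 and 2143. -/
noncomputable def hCount (n : ℕ) : ℕ :=
  Nat.card {σ : Equiv.Perm (Fin n) // AvoidsH σ}

/-- The number of permutations of length `n` avoiding 4213 and 2143. -/
noncomputable def dCount (n : ℕ) : ℕ :=
  Nat.card {σ : Equiv.Perm (Fin n) // AvoidsD σ}

/-- The minimal number of top points over all H-griddings of `σ`. -/
noncomputable def topPts {n : ℕ} (σ : Equiv.Perm (Fin n)) : ℕ :=
  n - sSup {k | HGridding σ k}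

/-- The minimal number of left points over all G-griddings of `σ`. -/
noncomputable def leftPts {n : ℕ} (σ : Equiv.Perm (Fin n)) : ℕ :=
  sInf {j | ∃ k, GGridding σ j k}

namespace MaxInsertion

open Finset

/-- The word `f` with the letter `m` inserted at position `p`. -/
def insertAt (f : ℕ → ℕ) (p m : ℕ) : ℕ → ℕ :=
  fun i => if i < p then f i else if i = p then m else f (i - 1)

/-- The letters of `f` at the positions in `[a, b)` increase. -/
def IncrOn (f : ℕ → ℕ) (a b : ℕ) : Prop :=
  ∀ i j, a ≤ i → i < j → j < b → f i < f j

/-- Every occurrence of 213 among the first `n` letters of `f` either ends before the site `p`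
or has `p` between its first two letters. -/
def ActiveSite (f : ℕ → ℕ) (n p : ℕ) : Prop :=
  ∀ i j k, i < j → j < k → k < n → f j < f i → f i < f k → (i < p ∧ p ≤ j) ∨ k < p

/-- The first `n` letters of `f` avoid 4213 and 2143. -/
def Avoiding (f : ℕ → ℕ) (n : ℕ) : Prop :=
  ∀ i j k l, i < j → j < k → k < l → l < n →
    ¬ (f k < f j ∧ f j < f l ∧ f l < f i) ∧ ¬ (f j < f i ∧ f i < f l ∧ f l < f k)

/-- The first `n` letters of `f` are distinct and less than `n`. -/
structure IsWord (f : ℕ → ℕ) (n : ℕ) : Prop where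
  lt : ∀ i < n, f i < n
  inj : ∀ i < n, ∀ j < n, f i = f j → i = j

section insertAt

variable {f : ℕ → ℕ} {n p q a b m : ℕ}

/-- The position in the enlarged word of the letter formerly at position `i`. -/
def shift (p i : ℕ) : ℕ := if i < p then i else i + 1

lemma insertAt_shift (i : ℕ) : insertAt f p m (shift p i) = f i := by
  unfold insertAt shift; split_ifs <;> first | rfl | omega

lemma insertAt_self : insertAt f p m p = m := by simp [insertAt]

lemma shift_lt_shift {i j : ℕ} : shift p i < shift p j ↔ i < j := by
  unfold shift; split_ifs <;> omega

lemma shift_lt (hp : p ≤ n) {i : ℕ} : shift p i < n + 1 ↔ i < n := by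
  unfold shift; split_ifs <;> omega

lemma eq_or_eq_shift (p i : ℕ) : i = p ∨ ∃ j, i = shift p j := by
  rcases lt_trichotomy i p with h | h | h
  · exact Or.inr ⟨i, by simp [shift, h]⟩
  · exact Or.inl h
  · exact Or.inr ⟨i - 1, by unfold shift; split_ifs <;> omega⟩

lemma shift_lt_self {i : ℕ} : shift p i < p ↔ i < p := by
  unfold shift; split_ifs <;> omega

lemma self_lt_shift {i : ℕ} : p < shift p i ↔ p ≤ i := by
  unfold shift; split_ifs <;> omega

lemma IsWord.insertAt (hf : IsWord f n) (hp : p ≤ n) : IsWord (insertAt f p n) (n + 1) := by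
  constructor
  · intro i hi
    rcases eq_or_eq_shift p i with rfl | ⟨i, rfl⟩
    · simp [insertAt_self]
    · rw [insertAt_shift]
      have := hf.lt i ((shift_lt hp).1 hi)
      omega
  · intro i hi j hj h
    have hi' := eq_or_eq_shift p i
    have hj' := eq_or_eq_shift p j
    rcases hi' with rfl | ⟨i, rfl⟩ <;> rcases hj' with rfl | ⟨j, rfl⟩
    · rfl
    · rw [insertAt_shift, insertAt_self] at h
      have := hf.lt j ((shift_lt hp).1 hj)
      omega
    · rw [insertAt_shift, insertAt_self] at h
      have := hf.lt i ((shift_lt hp).1 hi)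
      omega
    · rw [insertAt_shift, insertAt_shift] at h
      rw [hf.inj i ((shift_lt hp).1 hi) j ((shift_lt hp).1 hj) h]

lemma avoiding_insertAt (hf : IsWord f n) (hp : p ≤ n) :
    Avoiding (insertAt f p n) (n + 1) ↔ Avoiding f n ∧ ActiveSite f n p := by
  constructor
  · intro h
    refine ⟨fun i j k l hij hjk hkl hl => ?_, fun i j k hij hjk hk hji hik => ?_⟩
    · simpa only [insertAt_shift] using h (shift p i) (shift p j) (shift p k) (shift p l)
        (shift_lt_shift.2 hij) (shift_lt_shift.2 hjk) (shift_lt_shift.2 hkl) ((shift_lt hp).2 hl)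
    · have hkn := hf.lt k hk
      by_contra hc
      rcases lt_or_ge i p with hi | hi
      · have := (h (shift p i) (shift p j) p (shift p k) (shift_lt_shift.2 hij)
          (shift_lt_self.2 (by omega)) (self_lt_shift.2 (by omega)) ((shift_lt hp).2 hk)).2
        simp only [insertAt_shift, insertAt_self] at this
        omega
      · have := (h p (shift p i) (shift p j) (shift p k) (self_lt_shift.2 hi)
          (shift_lt_shift.2 hij) (shift_lt_shift.2 hjk) ((shift_lt hp).2 hk)).1
        simp only [insertAt_shift, insertAt_self] at this
        omega
  · rintro ⟨h, hs⟩ i j k l hij hjk hkl hl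
    have key : ∀ x, shift p x < n + 1 → f x < n := fun x hx => hf.lt x ((shift_lt hp).1 hx)
    rcases eq_or_eq_shift p i with rfl | ⟨i, rfl⟩
    · obtain ⟨j, rfl⟩ := (eq_or_eq_shift i j).resolve_left (by omega)
      obtain ⟨k, rfl⟩ := (eq_or_eq_shift i k).resolve_left (by omega)
      obtain ⟨l, rfl⟩ := (eq_or_eq_shift i l).resolve_left (by omega)
      have h1 := key j (by omega)
      have h2 := key k (by omega)
      have h3 := key l (by omega)
      rw [shift_lt_shift] at hjk hkl
      rw [self_lt_shift] at hij
      rw [shift_lt hp] at hl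
      have := hs j k l hjk hkl hl
      simp only [insertAt_shift, insertAt_self]
      constructor <;> intro <;> omega
    rcases eq_or_eq_shift p k with rfl | ⟨k, rfl⟩
    · obtain ⟨j, rfl⟩ := (eq_or_eq_shift k j).resolve_left (by omega)
      obtain ⟨l, rfl⟩ := (eq_or_eq_shift k l).resolve_left (by omega)
      have h1 := key j (by omega)
      have h2 := key i (by omega)
      have h3 := key l (by omega)
      rw [shift_lt_shift] at hij
      rw [self_lt_shift] at hkl
      rw [shift_lt_self] at hjk
      rw [shift_lt hp] at hl
      have := hs i j l hij (by omega) hl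
      simp only [insertAt_shift, insertAt_self]
      constructor <;> intro <;> omega
    rcases eq_or_eq_shift p j with rfl | ⟨j, rfl⟩
    · obtain ⟨l, rfl⟩ := (eq_or_eq_shift j l).resolve_left (by omega)
      have h1 := key i (by omega)
      have h2 := key k (by omega)
      have h3 := key l (by omega)
      simp only [insertAt_shift, insertAt_self]
      constructor <;> intro <;> omega
    rcases eq_or_eq_shift p l with rfl | ⟨l, rfl⟩
    · have h1 := key i (by omega)
      have h2 := key k (by omega)
      have h3 := key j (by omega)
      simp only [insertAt_shift, insertAt_self]
      constructor <;> intro <;> omega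
    simp only [insertAt_shift]
    rw [shift_lt_shift] at hij hjk hkl
    exact h i j k l hij hjk hkl ((shift_lt hp).1 hl)

lemma activeSite_insertAt_succ (hf : IsWord f n) (hp : p ≤ n) (hq : p ≤ q) :
    ActiveSite (insertAt f p n) (n + 1) (q + 1) ↔ ActiveSite f n q := by
  constructor
  · intro h i j k hij hjk hk hji hik
    have := h (shift p i) (shift p j) (shift p k) (shift_lt_shift.2 hij) (shift_lt_shift.2 hjk)
      ((shift_lt hp).2 hk) (by simpa only [insertAt_shift]) (by simpa only [insertAt_shift])
    unfold shift at this
    split_ifs at this <;> omega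
  · intro h i j k hij hjk hk hji hik
    have key : ∀ x, shift p x < n + 1 → f x < n := fun x hx => hf.lt x ((shift_lt hp).1 hx)
    rcases eq_or_eq_shift p k with rfl | ⟨k, rfl⟩
    · right; omega
    rcases eq_or_eq_shift p i with rfl | ⟨i, rfl⟩
    · rw [insertAt_self, insertAt_shift] at hik
      have := key k hk
      omega
    rcases eq_or_eq_shift p j with rfl | ⟨j, rfl⟩
    · rw [insertAt_self, insertAt_shift] at hji
      have := key i (by omega)
      omega
    rw [shift_lt_shift] at hij hjk
    rw [shift_lt hp] at hk
    rw [insertAt_shift, insertAt_shift] at hji hik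
    have := h i j k hij hjk hk hji hik
    unfold shift
    split_ifs <;> omega

lemma activeSite_insertAt_of_le (hf : IsWord f n) (hp : p ≤ n) (hq : q ≤ p) :
    ActiveSite (insertAt f p n) (n + 1) q ↔ ActiveSite f n q ∧ IncrOn f 0 q ∧ IncrOn f q p := by
  have key : ∀ x, shift p x < n + 1 → f x < n := fun x hx => hf.lt x ((shift_lt hp).1 hx)
  constructor
  · intro h
    have inversion : ∀ i j, i < j → j < p → f j < f i → i < q ∧ q ≤ j := by
      intro i j hij hj hji
      have := h (shift p i) (shift p j) p (shift_lt_shift.2 hij) (shift_lt_self.2 hj) (by omega)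
        (by simpa only [insertAt_shift])
        (by rw [insertAt_shift, insertAt_self]; exact hf.lt _ (by omega))
      unfold shift at this
      split_ifs at this <;> omega
    have incr : ∀ i j, i < j → j < p → ¬ (i < q ∧ q ≤ j) → f i < f j := by
      intro i j hij hj hc
      by_contra hlt
      have hne : f i ≠ f j := fun he => by
        have := hf.inj i (by omega) j (by omega) he
        omega
      exact hc (inversion i j hij hj (by omega))
    refine ⟨fun i j k hij hjk hk hji hik => ?_, fun i j _ hij hj => ?_, fun i j hi hij hj => ?_⟩
    · have := h (shift p i) (shift p j) (shift p k) (shift_lt_shift.2 hij) (shift_lt_shift.2 hjk)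
        ((shift_lt hp).2 hk) (by simpa only [insertAt_shift]) (by simpa only [insertAt_shift])
      by_cases hjp : j < p
      · have := inversion i j hij hjp hji
        omega
      unfold shift at this
      split_ifs at this <;> omega
    · exact incr i j hij (by omega) (by omega)
    · exact incr i j hij (by omega) (by omega)
  · rintro ⟨h, h₀, h₁⟩ i j k hij hjk hk hji hik
    rcases eq_or_eq_shift p i with rfl | ⟨i, rfl⟩
    · obtain ⟨k, rfl⟩ := (eq_or_eq_shift i k).resolve_left (by omega)
      rw [insertAt_self, insertAt_shift] at hik
      have := key k hk
      omega
    rcases eq_or_eq_shift p j with rfl | ⟨j, rfl⟩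
    · rw [insertAt_self, insertAt_shift] at hji
      have := key i (by omega)
      omega
    rw [insertAt_shift, insertAt_shift] at hji
    rw [shift_lt_shift] at hij
    rcases eq_or_eq_shift p k with rfl | ⟨k, rfl⟩
    · rw [shift_lt_self] at hjk
      left
      by_contra hc
      have h2 : f i < f j := by
        by_cases hjq : j < q
        · exact h₀ i j (by omega) hij hjq
        · refine h₁ i j ?_ hij hjk
          unfold shift at hc
          split_ifs at hc <;> omega
      omega
    · rw [insertAt_shift, insertAt_shift] at hik
      rw [shift_lt_shift] at hjk
      rw [shift_lt hp] at hk
      have := h i j k hij hjk hk hji hik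
      unfold shift
      split_ifs <;> omega

lemma incrOn_insertAt_of_le (hb : b ≤ p) : IncrOn (insertAt f p m) a b ↔ IncrOn f a b := by
  have key : ∀ i < b, insertAt f p m i = f i := fun i hi => by
    simp [insertAt, show i < p by omega]
  constructor
  · intro h i j hi hij hj
    simpa only [key i (by omega), key j hj] using h i j hi hij hj
  · intro h i j hi hij hj
    simpa only [key i (by omega), key j hj] using h i j hi hij hj

lemma incrOn_insertAt_succ (ha : p ≤ a) :
    IncrOn (insertAt f p m) (a + 1) (b + 1) ↔ IncrOn f a b := by
  have key : ∀ i, a ≤ i → insertAt f p m (i + 1) = f i := fun i hi => by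
    simp [insertAt, show ¬ i + 1 < p by omega, show i + 1 ≠ p by omega]
  constructor
  · intro h i j hi hij hj
    simpa only [key i hi, key j (by omega)] using
      h (i + 1) (j + 1) (by omega) (by omega) (by omega)
  · intro h i j hi hij hj
    obtain ⟨i, rfl⟩ : ∃ i', i = i' + 1 := ⟨i - 1, by omega⟩
    obtain ⟨j, rfl⟩ : ∃ j', j = j' + 1 := ⟨j - 1, by omega⟩
    simpa only [key i (by omega), key j (by omega)] using
      h i j (by omega) (by omega) (by omega)

lemma incrOn_insertAt_succ_self (hf : IsWord f n) (hp : p ≤ n) :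
    IncrOn (insertAt f p n) a (p + 1) ↔ IncrOn f a p := by
  have key : ∀ i < p, insertAt f p n i = f i := fun i hi => by simp [insertAt, hi]
  constructor
  · intro h i j hi hij hj
    simpa only [key i (by omega), key j hj] using h i j hi hij (by omega)
  · intro h i j hi hij hj
    rcases Nat.lt_succ_iff_lt_or_eq.1 hj with hj | rfl
    · simpa only [key i (by omega), key j hj] using h i j hi hij hj
    · rw [insertAt_self, key i hij]
      exact hf.lt i (by omega)

lemma not_incrOn_insertAt (hf : IsWord f n) (ha : a ≤ p) (hpb : p + 1 < b) (hb : b ≤ n + 1) :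
    ¬ IncrOn (insertAt f p n) a b := by
  intro h
  have h1 := h p (p + 1) ha (by omega) hpb
  rw [insertAt_self] at h1
  have h2 : insertAt f p n (p + 1) = f p := by simp [insertAt]
  have := hf.lt p (by omega)
  omega

lemma IncrOn.mono {a' b' : ℕ} (h : IncrOn f a b) (ha : a ≤ a') (hb : b' ≤ b) : IncrOn f a' b' :=
  fun i j hi hij hj => h i j (by omega) hij (by omega)

end insertAt

/-- Any increasing window meeting a descent at `c` on both sides is impossible. -/
lemma not_incrOn_of_descent {f : ℕ → ℕ} {a b c : ℕ} (hc : IncrOn f 0 c)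
    (hd : ¬ IncrOn f 0 (c + 1)) (ha : a < c) (hb : c < b) : ¬ IncrOn f a b := by
  intro h
  refine hd fun i j _ hij hj => ?_
  rcases Nat.lt_succ_iff_lt_or_eq.1 hj with hj | rfl
  · exact hc i j (by omega) hij hj
  · have h1 := h (j - 1) j (by omega) (by omega) hb
    rcases Nat.lt_or_ge i (j - 1) with h2 | h2
    · exact (hc i (j - 1) (by omega) h2 (by omega)).trans h1
    · rwa [show i = j - 1 by omega]

section sites

open Classical in
/-- The sites at which a new maximum may be inserted. -/
noncomputable def sites (f : ℕ → ℕ) (n : ℕ) : Finset ℕ :=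
  (range (n + 1)).filter (ActiveSite f n)

lemma mem_sites {f : ℕ → ℕ} {n p : ℕ} : p ∈ sites f n ↔ p ≤ n ∧ ActiveSite f n p := by
  simp [sites]

lemma mem_sites_insertAt {f : ℕ → ℕ} {n p q : ℕ} (hf : IsWord f n) (hp : p ≤ n) :
    q ∈ sites (insertAt f p n) (n + 1) ↔
      (q ≤ p ∧ q ∈ sites f n ∧ IncrOn f 0 q ∧ IncrOn f q p) ∨
        ∃ q', p ≤ q' ∧ q' ∈ sites f n ∧ q = q' + 1 := by
  simp only [mem_sites]
  rcases Nat.lt_or_ge p q with hq | hq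
  · obtain ⟨q, rfl⟩ : ∃ q', q = q' + 1 := ⟨q - 1, by omega⟩
    rw [activeSite_insertAt_succ hf hp (by omega)]
    constructor
    · rintro ⟨h1, h2⟩
      exact Or.inr ⟨q, by omega, ⟨by omega, h2⟩, rfl⟩
    · rintro (h | ⟨q', h1, h2, h3⟩)
      · omega
      · obtain rfl : q = q' := by omega
        exact ⟨by omega, h2.2⟩
  · rw [activeSite_insertAt_of_le hf hp hq]
    constructor
    · rintro ⟨h1, h2, h3, h4⟩
      exact Or.inl ⟨hq, ⟨by omega, h2⟩, h3, h4⟩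
    · rintro (⟨_, ⟨_, h2⟩, h3, h4⟩ | ⟨q', h1, h2, h3⟩)
      · exact ⟨by omega, h2, h3, h4⟩
      · omega

/-- The number of words obtained from `f` by `m` successive insertions of a new maximum at an
active site. -/
noncomputable def descendants : ℕ → (ℕ → ℕ) → ℕ → ℕ
  | 0, _, _ => 1
  | m + 1, f, n => ∑ p ∈ sites f n, descendants m (insertAt f p n) (n + 1)

end sites

section states

variable {f : ℕ → ℕ} {n p a r q : ℕ} {rest : Finset ℕ}

/-- Every active site is preceded by an inversion. -/
def Dead (f : ℕ → ℕ) (n : ℕ) : Prop := ∀ p ∈ sites f n, ¬ IncrOn f 0 p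

/-- The active sites are `a, …, a + r + q` together with `rest`; the word increases up to the
site `a + r`, and after it increases up to `a + r + q` and, if `q = 0`, up to the least element of
`rest`, but not further. -/
structure Live (f : ℕ → ℕ) (n a r q : ℕ) (rest : Finset ℕ) : Prop where
  sites_eq : sites f n = Icc a (a + r + q) ∪ rest
  lt_rest : ∀ p ∈ rest, a + r + q < p
  incr : IncrOn f 0 (a + r)
  descent : 0 < q ∨ rest.Nonempty → ¬ IncrOn f 0 (a + r + 1)
  incr_second : IncrOn f (a + r) (a + r + q)
  not_incr_rest : 0 < q → ∀ p ∈ rest, ¬ IncrOn f (a + r) p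
  incr_rest : q = 0 → ∀ p ∈ rest, (IncrOn f (a + r) p ↔ ∀ p' ∈ rest, p ≤ p')

lemma sites_insertAt_of_dead (hf : IsWord f n) (hp : p ≤ n)
    (hl : ∀ q ∈ sites f n, q ≤ p → IncrOn f 0 q → ¬ IncrOn f q p) :
    sites (insertAt f p n) (n + 1) = ((sites f n).filter (p ≤ ·)).image (· + 1) := by
  ext x
  rw [mem_sites_insertAt hf hp]
  simp only [mem_image, mem_filter]
  constructor
  · rintro (⟨h1, h2, h3, h4⟩ | ⟨y, h1, h2, rfl⟩)
    · exact absurd h4 (hl x h2 h1 h3)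
    · exact ⟨y, ⟨h2, h1⟩, rfl⟩
  · rintro ⟨y, ⟨h2, h1⟩, rfl⟩
    exact Or.inr ⟨y, h1, h2, rfl⟩

lemma dead_insertAt (hf : IsWord f n) (hp : p ≤ n) (hinv : ¬ IncrOn f 0 p)
    (hl : ∀ q ∈ sites f n, q ≤ p → IncrOn f 0 q → ¬ IncrOn f q p) :
    Dead (insertAt f p n) (n + 1) := by
  intro x hx
  have hxn := (mem_sites.1 hx).1
  rw [sites_insertAt_of_dead hf hp hl] at hx
  simp only [mem_image, mem_filter] at hx
  obtain ⟨y, ⟨h2, h1⟩, rfl⟩ := hx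
  rcases h1.eq_or_lt with rfl | h1
  · rwa [incrOn_insertAt_succ_self hf hp]
  · exact not_incrOn_insertAt hf (by omega) (by omega) hxn

lemma card_sites_insertAt_of_dead (hf : IsWord f n) (hp : p ≤ n)
    (hl : ∀ q ∈ sites f n, q ≤ p → IncrOn f 0 q → ¬ IncrOn f q p) :
    #(sites (insertAt f p n) (n + 1)) = #((sites f n).filter (p ≤ ·)) := by
  rw [sites_insertAt_of_dead hf hp hl, card_image_of_injective _ (add_left_injective 1)]

lemma Live.le (h : Live f n a r q rest) {x : ℕ} (hx : x ≤ a + r + q) (ha : a ≤ x) : x ≤ n := by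
  have : x ∈ sites f n := by
    rw [h.sites_eq]; simp; omega
  exact (mem_sites.1 this).1

lemma Live.rest_le (h : Live f n a r q rest) {x : ℕ} (hx : x ∈ rest) : x ≤ n := by
  have : x ∈ sites f n := by
    rw [h.sites_eq]; exact mem_union_right _ hx
  exact (mem_sites.1 this).1

lemma Live.mem_sites_iff (h : Live f n a r q rest) {x : ℕ} :
    x ∈ sites f n ↔ (a ≤ x ∧ x ≤ a + r + q) ∨ x ∈ rest := by
  rw [h.sites_eq]; simp

lemma Live.insert_first (hf : IsWord f n) (h : Live f n a r q rest) {i : ℕ} (hi : i < r) :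
    Live (insertAt f (a + i) n) (n + 1) a (i + 1) (r - i)
      ((Ioc (a + r) (a + r + q) ∪ rest).image (· + 1)) := by
  have hp : a + i ≤ n := h.le (by omega) (by omega)
  have hr : a + r ≤ n := h.le (by omega) (by omega)
  constructor
  · ext x
    rw [mem_sites_insertAt hf hp]
    simp only [h.mem_sites_iff, mem_union, mem_Icc, mem_image, mem_Ioc]
    constructor
    · rintro (⟨h1, h2 | h2, h3, h4⟩ | ⟨y, h1, h2 | h2, rfl⟩)
      · left; omega
      · have := h.lt_rest x h2; omega
      · by_cases hy : y ≤ a + r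
        · left; omega
        · right; exact ⟨y, by omega, rfl⟩
      · right; exact ⟨y, Or.inr h2, rfl⟩
    · rintro (h1 | ⟨y, h1 | h1, rfl⟩)
      · by_cases hx : x ≤ a + i
        · exact Or.inl ⟨hx, by omega, h.incr.mono (by omega) (by omega),
            h.incr.mono (by omega) (by omega)⟩
        · exact Or.inr ⟨x - 1, by omega, by omega, by omega⟩
      · exact Or.inr ⟨y, by omega, by omega, rfl⟩
      · have := h.lt_rest y h1
        exact Or.inr ⟨y, by omega, Or.inr h1, rfl⟩
  · simp only [mem_image, mem_union, mem_Ioc]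
    rintro x ⟨y, h1 | h1, rfl⟩
    · omega
    · have := h.lt_rest y h1; omega
  · rw [← add_assoc, incrOn_insertAt_succ_self hf hp]
    exact h.incr.mono (by omega) (by omega)
  · intro _
    exact not_incrOn_insertAt hf (by omega) (by omega) (by omega)
  · rw [show a + (i + 1) = a + i + 1 by omega, show a + i + 1 + (r - i) = a + r + 1 by omega,
      incrOn_insertAt_succ le_rfl]
    exact h.incr.mono (by omega) (by omega)
  · simp only [mem_image, mem_union, mem_Ioc]
    rintro - x ⟨y, h1, rfl⟩
    rw [show a + (i + 1) = a + i + 1 by omega, incrOn_insertAt_succ le_rfl]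
    refine not_incrOn_of_descent h.incr (h.descent ?_) (by omega) ?_
    · rcases h1 with h1 | h1
      · left; omega
      · exact Or.inr ⟨y, h1⟩
    · rcases h1 with h1 | h1
      · omega
      · have := h.lt_rest y h1; omega
  · intro hc; omega

lemma Live.insert_peak (hf : IsWord f n) (h : Live f n a r q rest) :
    Live (insertAt f (a + r) n) (n + 1) a (r + 1) q (rest.image (· + 1)) := by
  have hp : a + r ≤ n := h.le (by omega) (by omega)
  have hrq : a + r + q ≤ n := h.le (by omega) (by omega)
  constructor
  · ext x
    rw [mem_sites_insertAt hf hp]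
    simp only [h.mem_sites_iff, mem_union, mem_Icc, mem_image]
    constructor
    · rintro (⟨h1, h2 | h2, h3, h4⟩ | ⟨y, h1, h2 | h2, rfl⟩)
      · left; omega
      · have := h.lt_rest x h2; omega
      · left; omega
      · right; exact ⟨y, h2, rfl⟩
    · rintro (h1 | ⟨y, h1, rfl⟩)
      · by_cases hx : x ≤ a + r
        · exact Or.inl ⟨hx, by omega, h.incr.mono (by omega) (by omega),
            h.incr.mono (by omega) (by omega)⟩
        · exact Or.inr ⟨x - 1, by omega, by omega, by omega⟩
      · have := h.lt_rest y h1
        exact Or.inr ⟨y, by omega, Or.inr h1, rfl⟩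
  · simp only [mem_image]
    rintro x ⟨y, h1, rfl⟩
    have := h.lt_rest y h1; omega
  · rw [← add_assoc, incrOn_insertAt_succ_self hf hp]
    exact h.incr
  · intro hc
    refine not_incrOn_insertAt hf (by omega) (by omega) ?_
    rcases hc with hc | ⟨x, hx⟩
    · omega
    · obtain ⟨y, h1, rfl⟩ := mem_image.1 hx
      have := h.lt_rest y h1
      have := h.rest_le h1
      omega
  · rw [show a + (r + 1) = a + r + 1 by omega, show a + r + 1 + q = a + r + q + 1 by omega,
      incrOn_insertAt_succ le_rfl]
    exact h.incr_second
  · simp only [mem_image]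
    rintro hq x ⟨y, h1, rfl⟩
    rw [show a + (r + 1) = a + r + 1 by omega, incrOn_insertAt_succ le_rfl]
    exact h.not_incr_rest hq y h1
  · simp only [mem_image]
    rintro hq x ⟨y, h1, rfl⟩
    rw [show a + (r + 1) = a + r + 1 by omega, incrOn_insertAt_succ le_rfl, h.incr_rest hq y h1]
    simp

lemma Live.insert_second (hf : IsWord f n) (h : Live f n a r q rest) {j : ℕ} (hj0 : 0 < j)
    (hj : j ≤ q) :
    Live (insertAt f (a + r + j) n) (n + 1) (a + r) 0 0
      ((Icc (a + r + j) (a + r + q) ∪ rest).image (· + 1)) := by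
  have hp : a + r + j ≤ n := h.le (by omega) (by omega)
  have hrq : a + r + q ≤ n := h.le (by omega) (by omega)
  have hd := h.descent (Or.inl (by omega))
  constructor
  · ext x
    rw [mem_sites_insertAt hf hp]
    simp only [h.mem_sites_iff, mem_union, mem_Icc, mem_image]
    constructor
    · rintro (⟨h1, h2, h3, h4⟩ | ⟨y, h1, h2 | h2, rfl⟩)
      · have hx1 : ¬ a + r < x := fun hx => hd (h3.mono le_rfl hx)
        have hx2 : ¬ x < a + r := fun hx => not_incrOn_of_descent h.incr hd hx (by omega) h4
        left; omega
      · right; exact ⟨y, by omega, rfl⟩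
      · right; exact ⟨y, Or.inr h2, rfl⟩
    · rintro (h1 | ⟨y, h1 | h1, rfl⟩)
      · obtain rfl : x = a + r := by omega
        exact Or.inl ⟨by omega, by omega, h.incr, h.incr_second.mono le_rfl (by omega)⟩
      · exact Or.inr ⟨y, by omega, by omega, rfl⟩
      · have := h.lt_rest y h1
        exact Or.inr ⟨y, by omega, Or.inr h1, rfl⟩
  · simp only [mem_image, mem_union, mem_Icc]
    rintro x ⟨y, h1 | h1, rfl⟩
    · omega
    · have := h.lt_rest y h1; omega
  · rw [incrOn_insertAt_of_le (by omega)]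
    exact h.incr
  · intro _
    rwa [incrOn_insertAt_of_le (by omega)]
  · intro i j hi hij hj
    omega
  · intro hc; omega
  · simp only [mem_image, mem_union, mem_Icc, add_zero]
    rintro - x ⟨y, h1, rfl⟩
    have hy : a + r + j ≤ y := by
      rcases h1 with h1 | h1
      · omega
      · have := h.lt_rest y h1; omega
    have hyn : y ≤ n := by
      rcases h1 with h1 | h1
      · omega
      · exact h.rest_le h1
    rcases hy.eq_or_lt with rfl | hy
    · rw [incrOn_insertAt_succ_self hf hp]
      refine iff_of_true (h.incr_second.mono le_rfl (by omega)) ?_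
      rintro p ⟨z, h2 | h2, rfl⟩
      · omega
      · have := h.lt_rest z h2; omega
    · refine iff_of_false (not_incrOn_insertAt hf (by omega) (by omega) (by omega)) ?_
      intro hc
      have := hc (a + r + j + 1) ⟨a + r + j, by omega, rfl⟩
      omega

lemma Live.insert_rest_min (hf : IsWord f n) (h : Live f n a r 0 rest) (hp : p ∈ rest)
    (hmin : ∀ x ∈ rest, p ≤ x) :
    Live (insertAt f p n) (n + 1) (a + r) 0 0 (rest.image (· + 1)) := by
  have hpn := h.rest_le hp
  have hlt := h.lt_rest p hp
  have hd := h.descent (Or.inr ⟨p, hp⟩)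
  have hincr := (h.incr_rest rfl p hp).2 hmin
  constructor
  · ext x
    rw [mem_sites_insertAt hf hpn]
    simp only [h.mem_sites_iff, mem_union, mem_Icc, mem_image]
    constructor
    · rintro (⟨h1, h2, h3, h4⟩ | ⟨y, h1, h2 | h2, rfl⟩)
      · have hx1 : ¬ a + r < x := fun hx => hd (h3.mono le_rfl hx)
        have hx2 : ¬ x < a + r := fun hx => not_incrOn_of_descent h.incr hd hx (by omega) h4
        left; omega
      · omega
      · right; exact ⟨y, h2, rfl⟩
    · rintro (h1 | ⟨y, h1, rfl⟩)
      · obtain rfl : x = a + r := by omega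
        exact Or.inl ⟨by omega, by omega, h.incr, hincr⟩
      · exact Or.inr ⟨y, hmin y h1, Or.inr h1, rfl⟩
  · simp only [mem_image]
    rintro x ⟨y, h1, rfl⟩
    have := h.lt_rest y h1; omega
  · rw [incrOn_insertAt_of_le (by omega)]
    exact h.incr
  · intro _
    rwa [incrOn_insertAt_of_le (by omega)]
  · intro i j hi hij hj
    omega
  · intro hc; omega
  · simp only [mem_image, add_zero]
    rintro - x ⟨y, h1, rfl⟩
    rcases (hmin y h1).eq_or_lt with rfl | hy
    · rw [incrOn_insertAt_succ_self hf hpn]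
      refine iff_of_true hincr ?_
      rintro x ⟨z, h2, rfl⟩
      have := hmin z h2; omega
    · have := h.rest_le h1
      refine iff_of_false (not_incrOn_insertAt hf (by omega) (by omega) (by omega)) ?_
      intro hc
      have := hc (p + 1) ⟨p, hp, rfl⟩
      omega

lemma Live.not_incrOn_of_mem_rest (h : Live f n a r q rest) (hp : p ∈ rest)
    (hq : ¬ IncrOn f (a + r) p) : ¬ IncrOn f 0 p ∧
      ∀ x ∈ sites f n, x ≤ p → IncrOn f 0 x → ¬ IncrOn f x p := by
  have hlt := h.lt_rest p hp
  have hd := h.descent (Or.inr ⟨p, hp⟩)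
  refine ⟨fun hc => hd (hc.mono le_rfl (by omega)), fun x _ _ h0 h1 => ?_⟩
  rcases lt_trichotomy x (a + r) with hx | rfl | hx
  · exact not_incrOn_of_descent h.incr hd hx (by omega) h1
  · exact hq h1
  · exact hd (h0.mono le_rfl hx)

lemma Live.filter_sites (h : Live f n a r q rest) (hp : p ∈ rest) :
    (sites f n).filter (p ≤ ·) = rest.filter (p ≤ ·) := by
  have hlt := h.lt_rest p hp
  ext x
  simp only [mem_filter, h.mem_sites_iff]
  constructor
  · rintro ⟨h1 | h1, h2⟩
    · omega
    · exact ⟨h1, h2⟩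
  · rintro ⟨h1, h2⟩
    exact ⟨Or.inr h1, h2⟩

end states

/-- The sum of a function of the rank from above over a finite set of naturals. -/
lemma sum_card_filter_le {M : Type*} [AddCommMonoid M] (F : ℕ → M) (s : Finset ℕ) :
    ∑ p ∈ s, F #(s.filter (p ≤ ·)) = ∑ j ∈ range #s, F (j + 1) := by
  induction s using Finset.induction_on_min with
  | empty => simp
  | insert b s hb ih =>
    have hbs : b ∉ s := fun hc => lt_irrefl _ (hb b hc)
    rw [sum_insert hbs, card_insert_of_notMem hbs, sum_range_succ, ← ih, add_comm]
    congr 1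
    · refine sum_congr rfl fun p hp => ?_
      rw [filter_insert, if_neg (by have := hb p hp; omega)]
    · rw [filter_true_of_mem, card_insert_of_notMem hbs]
      intro x hx
      rcases mem_insert.1 hx with rfl | hx
      · exact le_rfl
      · exact (hb x hx).le

/-- Power series satisfying the recurrences of the generating tree: `dead k` for a dead word with
`k` active sites, `live r q t` for a live word with parameters `r`, `q` and `t` remaining sites. -/
structure TreeSeries (dead : ℕ → ℝ⟦X⟧) (live : ℕ → ℕ → ℕ → ℝ⟦X⟧) : Prop where
  dead_eq : ∀ k, dead k = 1 + X * ∑ j ∈ range k, dead (j + 1)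
  live_succ : ∀ r q t, live r (q + 1) t = 1 + X * (∑ i ∈ range r, live (i + 1) (r - i) (q + 1 + t) +
    live (r + 1) (q + 1) t + ∑ j ∈ range (q + 1), live 0 0 (j + 1 + t) +
    ∑ j ∈ range t, dead (j + 1))
  live_zero_succ : ∀ r t, live r 0 (t + 1) = 1 + X * (∑ i ∈ range r, live (i + 1) (r - i) (t + 1) +
    live (r + 1) 0 (t + 1) + live 0 0 (t + 1) + ∑ j ∈ range t, dead (j + 1))
  live_zero_zero : ∀ r, live r 0 0 = 1 + X * (∑ i ∈ range r, live (i + 1) (r - i) 0 +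
    live (r + 1) 0 0)

section counting

variable {dead : ℕ → ℝ⟦X⟧} {live : ℕ → ℕ → ℕ → ℝ⟦X⟧} {f : ℕ → ℕ} {n a r q : ℕ}
  {rest : Finset ℕ}

lemma coeff_succ_one_add_X_mul (m : ℕ) (s : ℝ⟦X⟧) : coeff (m + 1) (1 + X * s) = coeff m s := by
  simp [coeff_succ_X_mul, coeff_one]

lemma coeff_zero_one_add_X_mul (s : ℝ⟦X⟧) : coeff 0 (1 + X * s) = 1 := by
  simp

lemma TreeSeries.coeff_zero_live (h : TreeSeries dead live) (r q t : ℕ) :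
    coeff 0 (live r q t) = 1 := by
  rcases q with _ | q
  · rcases t with _ | t
    · rw [h.live_zero_zero, coeff_zero_one_add_X_mul]
    · rw [h.live_zero_succ, coeff_zero_one_add_X_mul]
  · rw [h.live_succ, coeff_zero_one_add_X_mul]

lemma TreeSeries.descendants_of_dead (h : TreeSeries dead live) (m : ℕ) (hf : IsWord f n)
    (hd : Dead f n) : (descendants m f n : ℝ) = coeff m (dead #(sites f n)) := by
  induction m generalizing f n with
  | zero => rw [h.dead_eq, coeff_zero_one_add_X_mul]; simp [descendants]
  | succ m ih =>
    rw [h.dead_eq, coeff_succ_one_add_X_mul, descendants, map_sum,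
      ← sum_card_filter_le (fun j => coeff m (dead j)), Nat.cast_sum]
    refine sum_congr rfl fun p hp => ?_
    have hpn := (mem_sites.1 hp).1
    have hl : ∀ q ∈ sites f n, q ≤ p → IncrOn f 0 q → ¬ IncrOn f q p :=
      fun q hq _ h0 => absurd h0 (hd q hq)
    rw [ih (hf.insertAt hpn) (dead_insertAt hf hpn (hd p hp) hl),
      card_sites_insertAt_of_dead hf hpn hl]

lemma Live.sum_sites {M : Type*} [AddCommMonoid M] (h : Live f n a r q rest) (F : ℕ → M) :
    ∑ p ∈ sites f n, F p = ∑ i ∈ range r, F (a + i) + F (a + r) +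
      ∑ j ∈ range q, F (a + r + (q - j)) + ∑ p ∈ rest, F p := by
  have hdisj : Disjoint (Icc a (a + r + q)) rest := by
    rw [Finset.disjoint_left]
    intro x hx hx'
    have := h.lt_rest x hx'
    have := (mem_Icc.1 hx).2
    omega
  rw [h.sites_eq, sum_union hdisj]
  congr 1
  rw [← sum_range_succ (fun i => F (a + i)), ← Ico_succ_right_eq_Icc, sum_Ico_eq_sum_range,
    show Order.succ (a + r + q) - a = (r + 1) + q by simp; omega, sum_range_add]
  congr 1
  rw [← sum_range_reflect]
  refine sum_congr rfl fun j hj => ?_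
  have := mem_range.1 hj
  congr 1
  omega

lemma card_image_succ (s : Finset ℕ) : #(s.image (· + 1)) = #s :=
  card_image_of_injective _ (add_left_injective 1)

lemma Live.card_rest_first (h : Live f n a r q rest) :
    #((Ioc (a + r) (a + r + q) ∪ rest).image (· + 1)) = q + #rest := by
  rw [card_image_succ, card_union_of_disjoint]
  · simp
  · rw [Finset.disjoint_left]
    intro x hx hx'
    have := h.lt_rest x hx'
    have := (mem_Ioc.1 hx).2
    omega

lemma Live.card_rest_second (h : Live f n a r q rest) {j : ℕ} (hj : j < q) :
    #((Icc (a + r + (q - j)) (a + r + q) ∪ rest).image (· + 1)) = j + 1 + #rest := by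
  rw [card_image_succ, card_union_of_disjoint]
  · simp; omega
  · rw [Finset.disjoint_left]
    intro x hx hx'
    have := h.lt_rest x hx'
    have := (mem_Icc.1 hx).2
    omega

lemma TreeSeries.descendants_of_mem_rest (h : TreeSeries dead live) (m : ℕ) (hf : IsWord f n)
    (hl : Live f n a r q rest) {p : ℕ} (hp : p ∈ rest) (hn : ¬ IncrOn f (a + r) p) :
    (descendants m (insertAt f p n) (n + 1) : ℝ) = coeff m (dead #(rest.filter (p ≤ ·))) := by
  have hpn := hl.rest_le hp
  obtain ⟨h1, h2⟩ := hl.not_incrOn_of_mem_rest hp hn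
  rw [h.descendants_of_dead m (hf.insertAt hpn) (dead_insertAt hf hpn h1 h2),
    card_sites_insertAt_of_dead hf hpn h2, hl.filter_sites hp]

theorem TreeSeries.descendants_of_live (h : TreeSeries dead live) (m : ℕ) (hf : IsWord f n)
    (hl : Live f n a r q rest) :
    (descendants m f n : ℝ) = coeff m (live r q #rest) := by
  induction m generalizing f n a r q rest with
  | zero => simp [h.coeff_zero_live, descendants]
  | succ m ih =>
    have first : ∀ i ∈ range r, (descendants m (insertAt f (a + i) n) (n + 1) : ℝ) =
        coeff m (live (i + 1) (r - i) (q + #rest)) := by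
      intro i hi
      have hi := mem_range.1 hi
      rw [ih (hf.insertAt (hl.le (by omega) (by omega))) (hl.insert_first hf hi),
        hl.card_rest_first]
    have peak : (descendants m (insertAt f (a + r) n) (n + 1) : ℝ) =
        coeff m (live (r + 1) q #rest) := by
      rw [ih (hf.insertAt (hl.le (by omega) (by omega))) (hl.insert_peak hf), card_image_succ]
    have second : ∀ j ∈ range q, (descendants m (insertAt f (a + r + (q - j)) n) (n + 1) : ℝ) =
        coeff m (live 0 0 (j + 1 + #rest)) := by
      intro j hj
      have hj := mem_range.1 hj
      rw [ih (hf.insertAt (hl.le (by omega) (by omega)))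
        (hl.insert_second hf (by omega) (by omega)), hl.card_rest_second hj]
    rw [descendants, Nat.cast_sum, hl.sum_sites, sum_congr rfl first, peak,
      sum_congr rfl second]
    rcases q with _ | q
    · rcases rest.eq_empty_or_nonempty with rfl | hne
      · simp [h.live_zero_zero r, coeff_succ_X_mul, coeff_one]
      · obtain ⟨p, hp, hmin⟩ : ∃ p ∈ rest, ∀ x ∈ rest, p ≤ x :=
          ⟨rest.min' hne, rest.min'_mem hne, fun x hx => rest.min'_le x hx⟩
        have hcard : #rest = #(rest.erase p) + 1 := (card_erase_add_one hp).symm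
        have hrest : ∀ x ∈ rest.erase p, (descendants m (insertAt f x n) (n + 1) : ℝ) =
            coeff m (dead #((rest.erase p).filter (x ≤ ·))) := by
          intro x hx
          obtain ⟨hxp, hx⟩ := mem_erase.1 hx
          rw [h.descendants_of_mem_rest m hf hl hx]
          · congr 3
            ext y
            have := hmin x hx
            simp only [mem_filter, mem_erase]
            constructor
            · rintro ⟨h1, h2⟩
              exact ⟨⟨by omega, h1⟩, h2⟩
            · rintro ⟨⟨_, h1⟩, h2⟩
              exact ⟨h1, h2⟩
          · rw [hl.incr_rest rfl x hx]
            intro hc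
            have := hc p hp
            have := hmin x hx
            omega
        have hpmin : (descendants m (insertAt f p n) (n + 1) : ℝ) =
            coeff m (live 0 0 #rest) := by
          rw [ih (hf.insertAt (hl.rest_le hp)) (hl.insert_rest_min hf hp hmin), card_image_succ]
        rw [← sum_erase_add _ _ hp, sum_congr rfl hrest,
          sum_card_filter_le (fun j => coeff m (dead j)), hpmin, hcard, h.live_zero_succ r,
          coeff_succ_one_add_X_mul]
        simp only [map_add, map_sum, range_zero, sum_empty, zero_add]
        ring
    · have hrest : ∀ p ∈ rest, (descendants m (insertAt f p n) (n + 1) : ℝ) =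
          coeff m (dead #(rest.filter (p ≤ ·))) := fun p hp =>
        h.descendants_of_mem_rest m hf hl hp (hl.not_incr_rest (by omega) p hp)
      rw [sum_congr rfl hrest, sum_card_filter_le (fun j => coeff m (dead j)), h.live_succ r,
        coeff_succ_one_add_X_mul]
      simp only [map_add, map_sum]

lemma live_zero (f : ℕ → ℕ) : Live f 0 0 0 0 ∅ := by
  have hs : sites f 0 = {0} := by
    ext x
    rw [mem_sites, mem_singleton]
    constructor
    · rintro ⟨h, -⟩; omega
    · rintro rfl
      exact ⟨le_rfl, fun i j k _ _ hk => by omega⟩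
  constructor
  · simp [hs]
  · simp
  · intro i j _ _ hj; omega
  · simp
  · intro i j _ _ hj; omega
  · simp
  · simp

end counting

/-! ### Permutations as words -/

section perm

variable {n : ℕ}

/-- The word of a permutation. -/
def toWord (σ : Equiv.Perm (Fin n)) : ℕ → ℕ := fun i => if h : i < n then σ ⟨i, h⟩ else 0

lemma toWord_coe (σ : Equiv.Perm (Fin n)) (i : Fin n) : toWord σ i = σ i := by
  simp [toWord]

lemma isWord_toWord (σ : Equiv.Perm (Fin n)) : IsWord (toWord σ) n := by
  constructor
  · intro i hi
    rw [toWord_coe σ ⟨i, hi⟩]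
    exact (σ ⟨i, hi⟩).isLt
  · intro i hi j hj h
    rw [toWord_coe σ ⟨i, hi⟩, toWord_coe σ ⟨j, hj⟩] at h
    simpa using σ.injective (Fin.ext h)

lemma avoidsD_iff (σ : Equiv.Perm (Fin n)) : AvoidsD σ ↔ Avoiding (toWord σ) n := by
  constructor
  · rintro ⟨h1, h2⟩ i j k l hij hjk hkl hl
    have hmono : StrictMono ![(⟨i, by omega⟩ : Fin n), ⟨j, by omega⟩, ⟨k, by omega⟩, ⟨l, hl⟩] := by
      rw [Fin.strictMono_iff_lt_succ]
      intro x
      fin_cases x <;> simpa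
    rw [toWord_coe σ ⟨i, by omega⟩, toWord_coe σ ⟨j, by omega⟩, toWord_coe σ ⟨k, by omega⟩,
      toWord_coe σ ⟨l, hl⟩]
    simp only [Fin.val_fin_lt]
    refine ⟨fun hc => h1 ⟨_, hmono, fun x y => ?_⟩, fun hc => h2 ⟨_, hmono, fun x y => ?_⟩⟩ <;>
    fin_cases x <;> fin_cases y <;> simp [p4213, p2143] <;> order
  · intro h
    constructor
    · rintro ⟨f, hf, hp⟩
      have := (h (f 0) (f 1) (f 2) (f 3) (hf (by decide)) (hf (by decide)) (hf (by decide))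
        (f 3).isLt).1
      simp only [toWord_coe] at this
      exact this ⟨(hp 2 1).1 (by decide), (hp 1 3).1 (by decide), (hp 3 0).1 (by decide)⟩
    · rintro ⟨f, hf, hp⟩
      have := (h (f 0) (f 1) (f 2) (f 3) (hf (by decide)) (hf (by decide)) (hf (by decide))
        (f 3).isLt).2
      simp only [toWord_coe] at this
      exact this ⟨(hp 1 0).1 (by decide), (hp 0 3).1 (by decide), (hp 3 2).1 (by decide)⟩

/-- The permutation with a new maximum inserted at position `p`. -/
def insertMax (p : Fin (n + 1)) (σ : Equiv.Perm (Fin n)) : Equiv.Perm (Fin (n + 1)) :=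
  (finSuccEquiv' p).trans ((Equiv.optionCongr σ).trans (finSuccEquiv' (Fin.last n)).symm)

lemma insertMax_self (p : Fin (n + 1)) (σ : Equiv.Perm (Fin n)) :
    insertMax p σ p = Fin.last n := by
  simp [insertMax]

lemma insertMax_succAbove (p : Fin (n + 1)) (σ : Equiv.Perm (Fin n)) (i : Fin n) :
    insertMax p σ (p.succAbove i) = (σ i).castSucc := by
  simp [insertMax]

lemma toWord_insertMax (p : Fin (n + 1)) (σ : Equiv.Perm (Fin n)) :
    toWord (insertMax p σ) = insertAt (toWord σ) p n := by
  ext i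
  rcases eq_or_eq_shift p i with rfl | ⟨j, rfl⟩
  · rw [toWord_coe, insertMax_self, insertAt_self, Fin.val_last]
  · rw [insertAt_shift]
    by_cases hj : j < n
    · have : shift p j = (p.succAbove ⟨j, hj⟩ : Fin (n + 1)) := by
        unfold shift Fin.succAbove
        simp only [Fin.lt_def, Fin.val_castSucc]
        split_ifs <;> simp
      rw [this, toWord_coe, insertMax_succAbove, toWord_coe σ ⟨j, hj⟩, Fin.val_castSucc]
    · have hp := p.isLt
      rw [toWord, dif_neg (by unfold shift; split_ifs <;> omega), toWord, dif_neg hj]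

lemma insertMax_bijective :
    Function.Bijective fun x : Fin (n + 1) × Equiv.Perm (Fin n) => insertMax x.1 x.2 := by
  rw [Fintype.bijective_iff_injective_and_card]
  refine ⟨?_, by simp [Fintype.card_perm, Nat.factorial_succ]⟩
  rintro ⟨p, σ⟩ ⟨q, τ⟩ h
  simp only at h
  obtain rfl : p = q := by
    apply (insertMax p σ).injective
    rw [insertMax_self, h, insertMax_self]
  congr 1
  ext i
  have := congrArg (fun ρ => ((ρ (p.succAbove i) : Fin (n + 1)) : ℕ)) h
  simpa only [insertMax_succAbove, Fin.val_castSucc] using this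

open Classical in
lemma dCount_eq_sum (n : ℕ) : dCount n = ∑ σ : Equiv.Perm (Fin n), if AvoidsD σ then 1 else 0 := by
  rw [dCount, Nat.card_eq_fintype_card, Fintype.card_subtype, Finset.card_filter]

open Classical in
lemma sum_avoidsD_succ (F : (ℕ → ℕ) → ℕ) :
    (∑ τ : Equiv.Perm (Fin (n + 1)), if AvoidsD τ then F (toWord τ) else 0) =
      ∑ σ : Equiv.Perm (Fin n), if AvoidsD σ then
        ∑ p ∈ sites (toWord σ) n, F (insertAt (toWord σ) p n) else 0 := by
  rw [← (insertMax_bijective (n := n)).sum_comp fun τ => if AvoidsD τ then F (toWord τ) else 0,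
    Fintype.sum_prod_type_right]
  refine sum_congr rfl fun σ _ => ?_
  have key : ∀ p : Fin (n + 1), AvoidsD (insertMax p σ) ↔
      AvoidsD σ ∧ ActiveSite (toWord σ) n p := fun p => by
    rw [avoidsD_iff, avoidsD_iff, toWord_insertMax,
      avoiding_insertAt (isWord_toWord σ) (Nat.lt_succ_iff.1 p.isLt)]
  simp only [key, toWord_insertMax]
  by_cases hσ : AvoidsD σ
  · simp only [hσ, true_and, if_true]
    rw [sites, sum_filter,
      ← Fin.sum_univ_eq_sum_range (fun p => if ActiveSite (toWord σ) n p then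
        F (insertAt (toWord σ) p n) else 0)]
  · simp [hσ]

open Classical in
lemma dCount_add (n m : ℕ) : dCount (n + m) =
    ∑ σ : Equiv.Perm (Fin n), if AvoidsD σ then descendants m (toWord σ) n else 0 := by
  induction m generalizing n with
  | zero => rw [add_zero, dCount_eq_sum]; rfl
  | succ m ih =>
    rw [show n + (m + 1) = n + 1 + m by ring, ih (n + 1),
      sum_avoidsD_succ (fun f => descendants m f (n + 1))]
    rfl

theorem TreeSeries.dCount_eq {dead : ℕ → ℝ⟦X⟧} {live : ℕ → ℕ → ℕ → ℝ⟦X⟧}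
    (h : TreeSeries dead live) (n : ℕ) : (dCount n : ℝ) = coeff n (live 0 0 0) := by
  have hav : AvoidsD (1 : Equiv.Perm (Fin 0)) := by
    rw [avoidsD_iff]
    intro i j k l _ _ _ hl
    omega
  rw [← zero_add n, dCount_add 0 n, Fintype.sum_unique, zero_add, if_pos]
  · exact h.descendants_of_live n (isWord_toWord _) (live_zero _)
  · rwa [Subsingleton.elim default (1 : Equiv.Perm (Fin 0))]

end perm

end MaxInsertion

namespace TreeSolution

open Finset

/-- The algebraic relations between the ingredients of the solution of the generating tree
recurrences: `u = 1 / (1 - z)`, `w = 1 / (2 - z)`, `κ` is the reciprocal of a quartic and `x` is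
the root of the kernel `z x² - x + u`. -/
structure KernelData {R : Type*} [CommRing R] (z u w κ x : R) : Prop where
  hu : u * (1 - z) = 1
  hw : w * (2 - z) = 1
  hκ : (1 - 10 * z + 24 * z ^ 2 - 20 * z ^ 3 + 4 * z ^ 4) * κ = 1
  hx : z * x ^ 2 = x - u

section Ring

variable {R : Type*} [CommRing R] (z u w κ x : R)

/-- The series `live 0 0 t / u ^ t`, independent of `t ≥ 1`. -/
def base : R :=
  1 + (1 - z) * (z * (3 - 6 * z + 2 * z ^ 2) - 2 * (1 - z) ^ 2 * z * x) * κ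

/-- The coefficient `z * slope` governs the linear part of `profile`. -/
def slope : R := u * w * (1 - base z κ x)

/-- The constant part of `profile`. -/
def offset : R := -w * (u - slope z u w κ x * (1 - z + z ^ 2))

/-- The amplitude of the geometric part of `profile`. -/
def amplitude : R :=
  x * (1 - z) * (z ^ 2 * slope z u w κ x - (1 - z) * offset z u w κ x)

/-- The dependence of the solution on the first label. -/
def profile (r : ℕ) : R :=
  z * slope z u w κ x * r + offset z u w κ x + amplitude z u w κ x * x ^ r

/-- The part of the solution that does not depend on the second label. -/
def plateau : R := u * (1 - base z κ x)

/-- The solution for live nodes. -/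
def liveSol (r : ℕ) : ℕ → ℕ → R
  | 0, 0 => u + profile z u w κ x r
  | 0, t + 1 => u ^ (t + 1) * (1 + z * u * base z κ x + profile z u w κ x r)
  | q + 1, t => u ^ t * (plateau z u κ x + u ^ (q + 1) * (u * base z κ x + profile z u w κ x r))

variable {z u w κ x}

namespace KernelData

theorem base_eq (h : KernelData z u w κ x) :
    base z κ x = 1 + z * u * base z κ x + profile z u w κ x 0 := by
  obtain ⟨hu, hw, hκ, hx⟩ := h
  have cancel : ∀ t : R,
      (1 - z) ^ 2 * (2 - z) ^ 2 * (1 - 10 * z + 24 * z ^ 2 - 20 * z ^ 3 + 4 * z ^ 4) * t = 0 →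
        t = 0 := by
    intro t ht
    linear_combination u ^ 2 * w ^ 2 * κ * ht - (u ^ 2 * w ^ 2 * (1 - z) ^ 2 * (2 - z) ^ 2 * t) * hκ
      - (u * (1 - z) + 1) * w ^ 2 * (2 - z) ^ 2 * t * hu - (w * (2 - z) + 1) * t * hw
  have hH : amplitude z u w κ x =
    x * (1 - z) * (z ^ 2 * slope z u w κ x - (1 - z) * offset z u w κ x) := rfl
  have hC : base z κ x =
    1 + (1 - z) * (z * (3 - 6 * z + 2 * z ^ 2) - 2 * (1 - z) ^ 2 * z * x) * κ := rfl
  have ha : slope z u w κ x = u * w * (1 - base z κ x) := rfl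
  have hB : offset z u w κ x = -w * (u - slope z u w κ x * (1 - z + z ^ 2)) := rfl
  simp only [profile, Nat.cast_zero, mul_zero, zero_add, pow_zero, mul_one]
  rw [hH]
  generalize offset z u w κ x = B at *
  generalize slope z u w κ x = a at *
  generalize base z κ x = C at *
  rw [← sub_eq_zero]
  apply cancel
  set K := 1 - 10 * z + 24 * z ^ 2 - 20 * z ^ 3 + 4 * z ^ 4 with hK
  set N := z * (3 - 6 * z + 2 * z ^ 2) - 2 * (1 - z) ^ 2 * z * x with hN
  have hCK : K * (1 - C) = -(1 - z) * N := by
    linear_combination (-(1 - z) * N) * hκ - K * hC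
  have haK : (2 - z) * (1 - z) * K * a = -(1 - z) * N := by
    linear_combination (2 - z) * (1 - z) * K * ha + (1 - C) * (1 - z) * K * u * hw +
      (1 - C) * K * hu + hCK
  have hBK : (2 - z) ^ 2 * (1 - z) * K * B =
      -(2 - z) * K - (1 - z) * N * (1 - z + z ^ 2) := by
    linear_combination (2 - z) ^ 2 * (1 - z) * K * hB +
      (-(1 - z) * (2 - z) * K * (u - a * (1 - z + z ^ 2))) * hw - (2 - z) * K * hu +
      (1 - z + z ^ 2) * haK
  have hx' : (1 - z) * z * x ^ 2 = (1 - z) * x - 1 := by linear_combination (1 - z) * hx - hu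
  have hd : (1 - z) * K * (C - (1 + z * u * C)) =
      (1 - 2 * z) * (K + (1 - z) * N) - (1 - z) * K := by
    linear_combination (-(1 - 2 * z)) * hCK - z * C * K * hu
  rw [hK, hN] at *
  linear_combination (1 - z) * (2 - z) ^ 2 * hd - (1 - z) * hBK -
    x * (1 - z) * ((1 - z) * (2 - z) * z ^ 2 * haK - (1 - z) ^ 2 * hBK) +
    (2 * z * (1 - z) ^ 4 * (1 - 2 * z) -
      2 * (1 - z) ^ 5 * ((2 - z) * z ^ 2 - (1 - z) * (1 - z + z ^ 2))) * hx'

theorem profile_zero (h : KernelData z u w κ x) :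
    profile z u w κ x 0 = z * profile z u w κ x 1 := by
  obtain ⟨hu, -, -, hx⟩ := h
  simp only [profile, amplitude, Nat.cast_zero, Nat.cast_one, mul_zero, mul_one, zero_add,
    pow_zero, pow_one]
  generalize offset z u w κ x = B
  generalize slope z u w κ x = a
  linear_combination (-(1 - z) * (z ^ 2 * a - (1 - z) * B)) * hx +
    (z ^ 2 * a - (1 - z) * B) * hu

theorem profile_step (h : KernelData z u w κ x) (r : ℕ) :
    z * (plateau z u κ x * ((r + 1) - u * r) +
        u * (u * base z κ x + profile z u w κ x (r + 1))) =
      (profile z u w κ x (r + 1) - z * profile z u w κ x (r + 2)) -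
        u * (profile z u w κ x r - z * profile z u w κ x (r + 1)) := by
  obtain ⟨hu, hw, -, hx⟩ := h
  have ha : slope z u w κ x = u * w * (1 - base z κ x) := rfl
  have hB : offset z u w κ x = -w * (u - slope z u w κ x * (1 - z + z ^ 2)) := rfl
  simp only [profile, plateau, Nat.cast_add, Nat.cast_one, Nat.cast_ofNat]
  generalize amplitude z u w κ x = H at *
  generalize offset z u w κ x = B at *
  generalize slope z u w κ x = a at *
  generalize base z κ x = C at *
  have hpoly : z * (u * (1 - C) * ((r + 1) - u * r) + u * (u * C + z * a * (r + 1) + B)) =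
      (z * a * (r + 1) + B) - z * (z * a * (r + 2) + B) -
        u * ((z * a * r + B) - z * (z * a * (r + 1) + B)) := by
    clear hx
    generalize (r : R) = y at *
    grind
  linear_combination hpoly + H * x ^ r * hx

theorem sum_live (h : KernelData z u w κ x) (r : ℕ) :
    z * ∑ i ∈ range r, (plateau z u κ x +
        u ^ (r - i) * (u * base z κ x + profile z u w κ x (i + 1))) =
      profile z u w κ x r - z * profile z u w κ x (r + 1) := by
  induction r with
  | zero => simp [← h.profile_zero]
  | succ r ih =>
    have hstep : ∑ i ∈ range (r + 1), (plateau z u κ x +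
        u ^ (r + 1 - i) * (u * base z κ x + profile z u w κ x (i + 1))) =
        u * ∑ i ∈ range r, (plateau z u κ x +
          u ^ (r - i) * (u * base z κ x + profile z u w κ x (i + 1))) +
        (plateau z u κ x * ((r + 1) - u * r) +
          u * (u * base z κ x + profile z u w κ x (r + 1))) := by
      rw [sum_range_succ, mul_sum]
      have : ∀ i ∈ range r, plateau z u κ x +
          u ^ (r + 1 - i) * (u * base z κ x + profile z u w κ x (i + 1)) =
          u * (plateau z u κ x + u ^ (r - i) * (u * base z κ x + profile z u w κ x (i + 1))) +
            (plateau z u κ x - u * plateau z u κ x) := by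
        intro i hi
        rw [Nat.succ_sub (mem_range.1 hi).le, pow_succ]
        ring
      rw [sum_congr rfl this, sum_add_distrib, sum_const, card_range, nsmul_eq_mul,
        Nat.add_sub_cancel_left, pow_one]
      ring
    rw [hstep]
    linear_combination u * ih + h.profile_step r

theorem sum_liveSol (h : KernelData z u w κ x) (r t : ℕ) :
    z * ∑ i ∈ range r, liveSol z u w κ x (i + 1) (r - i) t =
      u ^ t * (profile z u w κ x r - z * profile z u w κ x (r + 1)) := by
  rw [← h.sum_live, mul_left_comm, mul_sum (a := u ^ t)]
  congr 1
  refine sum_congr rfl fun i hi => ?_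
  obtain ⟨q, hq⟩ : ∃ q, r - i = q + 1 := ⟨r - i - 1, by have := mem_range.1 hi; omega⟩
  rw [hq, liveSol]

theorem sum_pow (h : KernelData z u w κ x) (k : ℕ) :
    z * ∑ j ∈ range k, u ^ (j + 1) = u ^ k - 1 := by
  induction k with
  | zero => simp
  | succ k ih =>
    rw [sum_range_succ]
    linear_combination ih - u ^ k * h.hu

theorem liveSol_zero_zero_succ (h : KernelData z u w κ x) (t : ℕ) :
    liveSol z u w κ x 0 0 (t + 1) = u ^ (t + 1) * base z κ x := by
  rw [liveSol, ← h.base_eq]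

theorem liveSol_zero (h : KernelData z u w κ x) :
    liveSol z u w κ x 0 0 0 =
      1 + (1 - 2 * z) * (z * (3 - 6 * z + 2 * z ^ 2) - (1 - z) ^ 2 * (2 * z * x)) * κ := by
  have hbase := h.base_eq
  have hC : base z κ x =
    1 + (1 - z) * (z * (3 - 6 * z + 2 * z ^ 2) - 2 * (1 - z) ^ 2 * z * x) * κ := rfl
  rw [liveSol]
  linear_combination -hbase + (1 - z * u) * hC +
    (1 - z * (z * (3 - 6 * z + 2 * z ^ 2) - 2 * (1 - z) ^ 2 * z * x) * κ) * h.hu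

end KernelData

end Ring

open PowerSeries in
theorem KernelData.treeSeries {u w κ x : ℝ⟦X⟧} (h : KernelData X u w κ x) :
    MaxInsertion.TreeSeries (fun k => u ^ k) (liveSol X u w κ x) where
  dead_eq k := by rw [h.sum_pow]; ring
  live_succ r q t := by
    have hbase : (X : ℝ⟦X⟧) * ∑ j ∈ range (q + 1), liveSol X u w κ x 0 0 (j + 1 + t) =
        base X κ x * u ^ t * (u ^ (q + 1) - 1) := by
      rw [← h.sum_pow, mul_left_comm, mul_sum (a := base X κ x * u ^ t)]
      congr 1
      refine sum_congr rfl fun j _ => ?_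
      rw [add_right_comm, h.liveSol_zero_zero_succ]
      ring
    simp only [mul_add, h.sum_liveSol, hbase, h.sum_pow]
    simp only [liveSol, plateau]
    linear_combination (u ^ t * (1 - base X κ x) + u ^ (t + q + 1) * base X κ x) * h.hu
  live_zero_succ r t := by
    simp only [mul_add, h.sum_liveSol, h.sum_pow, h.liveSol_zero_zero_succ]
    simp only [liveSol]
    linear_combination (u ^ t + u ^ (t + 1) * X * base X κ x) * h.hu
  live_zero_zero r := by
    simp only [mul_add, h.sum_liveSol]
    simp only [liveSol]
    linear_combination h.hu

open PowerSeries in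
/-- The generating function of `dCount` is `1 + (1 - 2 * X) * b / K`. -/
theorem dCount_eq_coeff {u w κ s : ℝ⟦X⟧} (hu : u * (1 - X) = 1) (hw : w * (2 - X) = 1)
    (hκ : (1 - 10 * X + 24 * X ^ 2 - 20 * X ^ 3 + 4 * X ^ 4) * κ = 1)
    (hs : s ^ 2 * (1 - X) = 1 - 5 * X) (hs0 : constantCoeff s = 1) (n : ℕ) :
    (dCount n : ℝ) = coeff n
      (1 + (1 - 2 * X) * (-1 + 5 * X - 7 * X ^ 2 + 2 * X ^ 3 + (1 - X) ^ 2 * s) * κ) := by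
  obtain ⟨y, hy⟩ : (X : ℝ⟦X⟧) ∣ 1 - s := by simp [X_dvd_iff, hs0]
  have hyx : 2 * X * (C (1 / 2 : ℝ) * y) = 1 - s := by
    have : (2 : ℝ⟦X⟧) * C (1 / 2 : ℝ) = 1 := by
      rw [← map_ofNat (C (R := ℝ)) 2, ← map_mul]; norm_num
    rw [hy]
    linear_combination X * y * this
  generalize C (1 / 2 : ℝ) * y = x at hyx
  have hx : X * x ^ 2 = x - u := by
    have h4 : (4 * X : ℝ⟦X⟧) ≠ 0 := by
      rw [← map_ofNat (C (R := ℝ)) 4]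
      exact mul_ne_zero ((map_ne_zero_iff _ C_injective).2 (by norm_num)) X_ne_zero
    refine mul_left_cancel₀ h4 ?_
    have hs' : s ^ 2 = (1 - 5 * X) * u := by linear_combination u * hs - s ^ 2 * hu
    linear_combination (2 * X * x - 1 - s) * hyx + hs' + hu
  have h : KernelData X u w κ x := ⟨hu, hw, hκ, hx⟩
  rw [h.treeSeries.dCount_eq, h.liveSol_zero, hyx]
  congr 1
  ring

end TreeSolution

namespace SingularityAnalysis

open Finset

section sequences

theorem tendsto_centralBinom :
    Tendsto (fun n : ℕ => (n.centralBinom : ℝ) * √n / 4 ^ n) atTop (𝓝 (1 / √Real.pi)) := by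
  have hst := Stirling.tendsto_stirlingSeq_sqrt_pi
  have hst2 : Tendsto (fun n : ℕ => Stirling.stirlingSeq (2 * n)) atTop (𝓝 √Real.pi) :=
    hst.comp (tendsto_id.const_mul_atTop' (by norm_num : 0 < 2))
  have hpi : √Real.pi ≠ 0 := (Real.sqrt_pos.2 Real.pi_pos).ne'
  have hdiv := hst2.div (hst.pow 2) (pow_ne_zero 2 hpi)
  rw [show √Real.pi / √Real.pi ^ 2 = 1 / √Real.pi by field_simp] at hdiv
  refine hdiv.congr' ?_
  filter_upwards [eventually_ge_atTop 1] with n hn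
  have hn0 : (0 : ℝ) < n := by exact_mod_cast hn
  have hcb : (n.centralBinom : ℝ) = (2 * n).factorial / (n.factorial : ℝ) ^ 2 := by
    rw [Nat.centralBinom_eq_two_mul_choose, Nat.cast_choose ℝ (by omega)]
    rw [show 2 * n - n = n by omega, sq]
  have hfac : (n.factorial : ℝ) ≠ 0 := by exact_mod_cast n.factorial_ne_zero
  have h4 : √(2 * ((2 * n : ℕ) : ℝ)) = 2 * √n := by
    rw [show (2 * ((2 * n : ℕ) : ℝ)) = 2 ^ 2 * n by push_cast; ring, Real.sqrt_mul (by norm_num),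
      Real.sqrt_sq (by norm_num)]
  have h2 : √(2 * (n : ℝ)) ^ 2 = 2 * n := Real.sq_sqrt (by positivity)
  have hs : √(n : ℝ) ^ 2 = n := Real.sq_sqrt hn0.le
  have hs0 : √(n : ℝ) ≠ 0 := (Real.sqrt_pos.2 hn0).ne'
  simp only [Pi.div_apply, Stirling.stirlingSeq, hcb, div_pow, mul_pow, h2, h4]
  have he : Real.exp 1 ≠ 0 := Real.exp_ne_zero 1
  have h44 : (4 : ℝ) ^ n = 2 ^ (2 * n) := by rw [pow_mul]; norm_num
  rw [h44]
  push_cast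
  rw [mul_pow]
  field_simp
  rw [hs]
  ring

theorem rpow_three_halves (n : ℕ) : (n : ℝ) ^ (3 / 2 : ℝ) = n * √n := by
  rw [Real.sqrt_eq_rpow]
  rcases Nat.eq_zero_or_pos n with rfl | hn
  · norm_num
  · rw [show (3 / 2 : ℝ) = 1 + 1 / 2 by norm_num, Real.rpow_add (by exact_mod_cast hn),
      Real.rpow_one]

theorem tendsto_catalan :
    Tendsto (fun n : ℕ => (catalan n : ℝ) / 4 ^ n * (n : ℝ) ^ (3 / 2 : ℝ)) atTop
      (𝓝 (1 / √Real.pi)) := by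
  have h := tendsto_centralBinom.mul (tendsto_natCast_div_add_atTop (1 : ℝ))
  rw [mul_one] at h
  refine h.congr fun n => ?_
  have hc : ((n : ℝ) + 1) * catalan n = n.centralBinom := by
    exact_mod_cast succ_mul_catalan_eq_centralBinom n
  rw [rpow_three_halves, ← hc]
  have : (n : ℝ) + 1 ≠ 0 := by positivity
  field_simp

theorem tendsto_succ_div_rpow (k : ℕ) :
    Tendsto (fun n : ℕ => (n : ℝ) ^ (3 / 2 : ℝ) / ((n + k : ℕ) : ℝ) ^ (3 / 2 : ℝ)) atTop
      (𝓝 1) := by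
  have h := (tendsto_natCast_div_add_atTop (k : ℝ)).rpow_const (p := (3 / 2 : ℝ)) (by norm_num)
  rw [Real.one_rpow] at h
  refine h.congr fun n => ?_
  rw [Real.div_rpow (by positivity) (by positivity)]
  push_cast
  rfl

theorem tendsto_shift {a : ℕ → ℝ} {L : ℝ}
    (ha : Tendsto (fun n : ℕ => a n * (n : ℝ) ^ (3 / 2 : ℝ)) atTop (𝓝 L)) (k : ℕ) :
    Tendsto (fun n : ℕ => a (n + k) * (n : ℝ) ^ (3 / 2 : ℝ)) atTop (𝓝 L) := by
  have h := ((tendsto_add_atTop_iff_nat k).2 ha).mul (tendsto_succ_div_rpow k)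
  rw [mul_one] at h
  refine h.congr' ?_
  filter_upwards [eventually_ge_atTop 1] with n hn
  have : (0 : ℝ) < ((n + k : ℕ) : ℝ) ^ (3 / 2 : ℝ) :=
    Real.rpow_pos_of_pos (by exact_mod_cast (by omega)) _
  field_simp

theorem tendsto_of_shift_one {a : ℕ → ℝ} {L : ℝ}
    (ha : Tendsto (fun n : ℕ => a (n + 1) * (n : ℝ) ^ (3 / 2 : ℝ)) atTop (𝓝 L)) :
    Tendsto (fun n : ℕ => a n * (n : ℝ) ^ (3 / 2 : ℝ)) atTop (𝓝 L) := by
  rw [← tendsto_add_atTop_iff_nat 1]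
  have h := ha.div (tendsto_succ_div_rpow 1) one_ne_zero
  rw [div_one] at h
  refine h.congr' ?_
  filter_upwards [eventually_ge_atTop 1] with n hn
  have : (0 : ℝ) < (n : ℝ) ^ (3 / 2 : ℝ) :=
    Real.rpow_pos_of_pos (by exact_mod_cast (by omega)) _
  simp only [Pi.div_apply]
  field_simp

theorem exists_bound {a : ℕ → ℝ} {L : ℝ}
    (ha : Tendsto (fun n : ℕ => a n * (n : ℝ) ^ (3 / 2 : ℝ)) atTop (𝓝 L)) :
    ∃ B, 0 ≤ B ∧ ∀ n, |a n| * ((n : ℝ) + 1) ^ (3 / 2 : ℝ) ≤ B := by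
  have h := ha.div (tendsto_succ_div_rpow 1) one_ne_zero
  obtain ⟨B, hB⟩ := (h.abs).isBoundedUnder_le.bddAbove_range
  refine ⟨max B |a 0|, le_max_of_le_right (abs_nonneg _), fun n => ?_⟩
  rcases Nat.eq_zero_or_pos n with rfl | hn
  · simp
  · refine le_max_of_le_left (le_trans (le_of_eq ?_) (hB ⟨n, rfl⟩))
    have h0 : (0 : ℝ) < (n : ℝ) ^ (3 / 2 : ℝ) := Real.rpow_pos_of_pos (by exact_mod_cast hn) _
    have h1 : (0 : ℝ) < ((n : ℝ) + 1) ^ (3 / 2 : ℝ) := Real.rpow_pos_of_pos (by positivity) _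
    simp only [Pi.div_apply]
    push_cast
    rw [abs_div, abs_mul, abs_div, abs_of_pos h0, abs_of_pos h1]
    field_simp

theorem tendsto_convolution {a b : ℕ → ℝ} {L : ℝ}
    (ha : Tendsto (fun n : ℕ => a n * (n : ℝ) ^ (3 / 2 : ℝ)) atTop (𝓝 L))
    (hb : Summable fun j : ℕ => |b j| * ((j : ℝ) + 1) ^ (3 / 2 : ℝ)) :
    Tendsto (fun n : ℕ => (∑ p ∈ antidiagonal n, a p.1 * b p.2) * (n : ℝ) ^ (3 / 2 : ℝ)) atTop
      (𝓝 (L * ∑' j, b j)) := by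
  obtain ⟨B, hB0, hB⟩ := exists_bound ha
  set F : ℕ → ℕ → ℝ := fun n j => if j ≤ n then a (n - j) * b j * (n : ℝ) ^ (3 / 2 : ℝ) else 0
  have hF : ∀ n : ℕ, (∑ p ∈ antidiagonal n, a p.1 * b p.2) * (n : ℝ) ^ (3 / 2 : ℝ) =
      ∑' j, F n j := by
    intro n
    rw [tsum_eq_sum (s := range (n + 1)), Nat.sum_antidiagonal_eq_sum_range_succ_mk,
      ← sum_range_reflect, sum_mul]
    · refine sum_congr rfl fun j hj => ?_
      have := mem_range.1 hj
      simp only [F]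
      rw [if_pos (by omega)]
      congr 3
      omega
    · intro j hj
      simp only [F]
      rw [if_neg (by simpa using hj)]
  simp_rw [hF]
  rw [← tsum_mul_left]
  refine tendsto_tsum_of_dominated_convergence (hb.mul_left B) ?_ ?_
  · intro j
    have h := (tendsto_shift (a := fun n => a (n - j)) (k := 0) (L := L) ?_ ).mul_const (b j)
    · refine h.congr' ?_
      filter_upwards [eventually_ge_atTop j] with n hn
      simp only [F]
      rw [if_pos hn, add_zero]
      ring
    · clear hF hB
      induction j with
      | zero => simpa using ha
      | succ j ih =>
        refine tendsto_of_shift_one ?_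
        simpa [Nat.add_sub_add_right] using ih
  · refine Eventually.of_forall fun n j => ?_
    simp only [F]
    split_ifs with hj
    · rw [Real.norm_eq_abs, abs_mul, abs_mul,
        abs_of_nonneg (by positivity : (0 : ℝ) ≤ n ^ (3 / 2 : ℝ))]
      have hle : (n : ℝ) ^ (3 / 2 : ℝ) ≤
          (((n - j : ℕ) : ℝ) + 1) ^ (3 / 2 : ℝ) * ((j : ℝ) + 1) ^ (3 / 2 : ℝ) := by
        rw [← Real.mul_rpow (by positivity) (by positivity)]
        refine Real.rpow_le_rpow (by positivity) ?_ (by norm_num)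
        obtain ⟨m, rfl⟩ := Nat.exists_eq_add_of_le hj
        rw [Nat.add_sub_cancel_left]
        push_cast
        nlinarith [(Nat.cast_nonneg m : (0 : ℝ) ≤ m), (Nat.cast_nonneg j : (0 : ℝ) ≤ j),
          mul_nonneg (Nat.cast_nonneg m : (0 : ℝ) ≤ m) (Nat.cast_nonneg j : (0 : ℝ) ≤ j)]
      calc |a (n - j)| * |b j| * (n : ℝ) ^ (3 / 2 : ℝ)
          ≤ |a (n - j)| * |b j| *
            ((((n - j : ℕ) : ℝ) + 1) ^ (3 / 2 : ℝ) * ((j : ℝ) + 1) ^ (3 / 2 : ℝ)) := by gcongr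
        _ = (|a (n - j)| * (((n - j : ℕ) : ℝ) + 1) ^ (3 / 2 : ℝ)) *
            (|b j| * ((j : ℝ) + 1) ^ (3 / 2 : ℝ)) := by ring
        _ ≤ B * (|b j| * ((j : ℝ) + 1) ^ (3 / 2 : ℝ)) := by
            gcongr
            exact hB _
    · simp only [norm_zero]
      positivity

theorem tendsto_tail {a c : ℕ → ℝ} {L β : ℝ}
    (ha : Tendsto (fun n : ℕ => a n * (n : ℝ) ^ (3 / 2 : ℝ)) atTop (𝓝 L))
    (hβ0 : 0 < β) (hβ1 : β < 1) (hsum : HasSum (fun n => a n * β ^ n) 0)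
    (hc0 : c 0 = a 0) (hc : ∀ n, c (n + 1) = a (n + 1) + c n / β) :
    Tendsto (fun n : ℕ => c n * (n : ℝ) ^ (3 / 2 : ℝ)) atTop (𝓝 (L / (1 - 1 / β))) := by
  obtain ⟨B, hB0, hB⟩ := exists_bound ha
  have hpartial : ∀ n, c n * β ^ n = ∑ k ∈ range (n + 1), a k * β ^ k := by
    intro n
    induction n with
    | zero => simp [hc0]
    | succ n ih =>
      rw [sum_range_succ, ← ih, hc, pow_succ]
      field_simp
      ring
  have htail : ∀ n, c n = ∑' j, -(a (n + (j + 1)) * β ^ (j + 1)) := by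
    intro n
    have h := hsum.summable.sum_add_tsum_nat_add (n + 1)
    rw [hsum.tsum_eq, ← hpartial] at h
    have hpow : β ^ n ≠ 0 := (pow_pos hβ0 n).ne'
    refine mul_right_cancel₀ hpow ?_
    rw [← tsum_mul_right, eq_neg_of_add_eq_zero_left h, ← tsum_neg]
    congr 1
    ext j
    rw [show j + (n + 1) = n + (j + 1) by ring, pow_add]
    ring
  have hgeom : L / (1 - 1 / β) = ∑' j : ℕ, -(L * β ^ (j + 1)) := by
    rw [tsum_neg, tsum_mul_left]
    simp_rw [pow_succ]
    rw [tsum_mul_right, tsum_geometric_of_lt_one hβ0.le hβ1]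
    have h1 : 1 - β ≠ 0 := by linarith
    have h2 : β - 1 ≠ 0 := by linarith
    have h3 : 1 - 1 / β = (β - 1) / β := by field_simp
    rw [h3]
    field_simp
    ring
  rw [hgeom]
  have hmul : ∀ n : ℕ, c n * (n : ℝ) ^ (3 / 2 : ℝ) =
      ∑' j, -(a (n + (j + 1)) * (n : ℝ) ^ (3 / 2 : ℝ) * β ^ (j + 1)) := by
    intro n
    rw [htail, ← tsum_mul_right]
    congr 1
    ext j
    ring
  simp_rw [hmul]
  have hsummable : Summable fun j : ℕ => B * β ^ (j + 1) :=
    ((summable_nat_add_iff 1).2 (summable_geometric_of_lt_one hβ0.le hβ1)).mul_left B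
  refine tendsto_tsum_of_dominated_convergence hsummable ?_ ?_
  · exact fun j => ((tendsto_shift ha (j + 1)).mul_const _).neg
  · refine Eventually.of_forall fun n j => ?_
    rw [norm_neg, Real.norm_eq_abs, abs_mul, abs_mul, abs_of_pos (pow_pos hβ0 _),
      abs_of_nonneg (by positivity : (0 : ℝ) ≤ n ^ (3 / 2 : ℝ))]
    gcongr
    refine le_trans ?_ (hB (n + (j + 1)))
    gcongr
    push_cast
    linarith [(Nat.cast_nonneg j : (0 : ℝ) ≤ j)]

end sequences

/-- The power series `f` converges absolutely at `r`, with sum `v`. -/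
def EvalsTo (f : ℝ⟦X⟧) (r v : ℝ) : Prop := HasSum (fun n => coeff n f * r ^ n) v

namespace EvalsTo

variable {f g : ℝ⟦X⟧} {r v v' : ℝ}

theorem unique (h : EvalsTo f r v) (h' : EvalsTo f r v') : v = v' := HasSum.unique h h'

theorem add (hf : EvalsTo f r v) (hg : EvalsTo g r v') : EvalsTo (f + g) r (v + v') := by
  simpa only [EvalsTo, map_add, add_mul] using HasSum.add hf hg

theorem mul (hf : EvalsTo f r v) (hg : EvalsTo g r v') : EvalsTo (f * g) r (v * v') := by
  have hf' := hf.summable.norm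
  have hg' := hg.summable.norm
  have hs := (summable_norm_sum_mul_antidiagonal_of_summable_norm hf' hg').of_norm
  have hv := tsum_mul_tsum_eq_tsum_sum_antidiagonal_of_summable_norm hf' hg'
  have hfv : ∑' n, coeff n f * r ^ n = v := hf.tsum_eq
  have hgv : ∑' n, coeff n g * r ^ n = v' := hg.tsum_eq
  rw [hfv, hgv] at hv
  rw [EvalsTo, hv]
  refine hs.hasSum.congr_fun ?_
  intro n
  rw [coeff_mul, sum_mul]
  refine sum_congr rfl fun p hp => ?_
  rw [← mem_antidiagonal.1 hp, pow_add]
  ring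

theorem polynomial (p : Polynomial ℝ) (r : ℝ) : EvalsTo (p : ℝ⟦X⟧) r (p.eval r) := by
  rw [EvalsTo, Polynomial.eval_eq_sum_range]
  simp only [Polynomial.coeff_coe]
  refine hasSum_sum_of_ne_finset_zero fun n hn => ?_
  rw [Polynomial.coeff_eq_zero_of_natDegree_lt (by simpa using hn), zero_mul]

theorem rescale {c : ℝ} (hf : EvalsTo f (c * r) v) : EvalsTo (PowerSeries.rescale c f) r v := by
  refine HasSum.congr_fun hf fun n => ?_
  rw [coeff_rescale, mul_pow]
  ring

end EvalsTo

/-- The coefficients of `f` are asymptotic to `L * 5 ^ n * n ^ (-3 / 2)`. -/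
def Asymp (f : ℝ⟦X⟧) (L : ℝ) : Prop :=
  Tendsto (fun n : ℕ => coeff n f / 5 ^ n * (n : ℝ) ^ (3 / 2 : ℝ)) atTop (𝓝 L)

namespace Asymp

variable {f g : ℝ⟦X⟧} {L L' : ℝ}

theorem add (hf : Asymp f L) (hg : Asymp g L') : Asymp (f + g) (L + L') := by
  simpa only [Asymp, map_add, add_div, add_mul] using Tendsto.add hf hg

theorem polynomial (p : Polynomial ℝ) : Asymp (p : ℝ⟦X⟧) 0 := by
  refine tendsto_const_nhds.congr' ?_
  filter_upwards [eventually_gt_atTop p.natDegree] with n hn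
  rw [Polynomial.coeff_coe, Polynomial.coeff_eq_zero_of_natDegree_lt hn, zero_div, zero_mul]

theorem mul {r v v' : ℝ} (hf : Asymp f L) (hr : 1 / 5 < r) (hr' : EvalsTo g r v')
    (hg : EvalsTo g (1 / 5) v) : Asymp (f * g) (L * v) := by
  have hr0 : 0 < r := by linarith
  have hv : ∑' j, coeff j g / 5 ^ j = v := by
    rw [← hg.tsum_eq]
    congr 1
    ext j
    rw [div_pow, one_pow, mul_one_div]
  have hsum : Summable fun j : ℕ => |coeff j g / 5 ^ j| * ((j : ℝ) + 1) ^ (3 / 2 : ℝ) := by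
    have hpoly : Tendsto (fun j : ℕ => ((j + 1 : ℕ) : ℝ) ^ 2 * (1 / (5 * r)) ^ (j + 1)) atTop
        (𝓝 0) := by
      refine (tendsto_add_atTop_iff_nat 1).2
        (tendsto_pow_const_mul_const_pow_of_abs_lt_one 2 ?_)
      rw [abs_of_pos (by positivity), div_lt_one (by positivity)]
      linarith
    obtain ⟨M, hM⟩ := hpoly.isBoundedUnder_le.bddAbove_range
    refine Summable.of_nonneg_of_le (fun j => by positivity) (fun j => ?_)
      (hr'.summable.abs.mul_left (5 * r * M))
    have hMj : ((j + 1 : ℕ) : ℝ) ^ 2 * (1 / (5 * r)) ^ (j + 1) ≤ M := hM ⟨j, rfl⟩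
    have hrp : ((j : ℝ) + 1) ^ (3 / 2 : ℝ) ≤ ((j : ℝ) + 1) ^ 2 := by
      rw [← Real.rpow_two]
      exact Real.rpow_le_rpow_of_exponent_le (by linarith [(Nat.cast_nonneg j : (0 : ℝ) ≤ j)])
        (by norm_num)
    have hle : ((j : ℝ) + 1) ^ 2 / 5 ^ j ≤ 5 * r * M * r ^ j := by
      push_cast at hMj
      rw [one_div, inv_pow, mul_pow, ← div_eq_mul_inv, div_le_iff₀ (by positivity)] at hMj
      rw [div_le_iff₀ (by positivity)]
      calc ((j : ℝ) + 1) ^ 2 ≤ M * (5 ^ (j + 1) * r ^ (j + 1)) := hMj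
        _ = 5 * r * M * r ^ j * 5 ^ j := by ring
    rw [abs_div, abs_mul, abs_of_pos (by positivity : (0 : ℝ) < 5 ^ j), abs_of_pos (pow_pos hr0 j)]
    calc |coeff j g| / 5 ^ j * ((j : ℝ) + 1) ^ (3 / 2 : ℝ)
        ≤ |coeff j g| / 5 ^ j * ((j : ℝ) + 1) ^ 2 := by gcongr
      _ = |coeff j g| * (((j : ℝ) + 1) ^ 2 / 5 ^ j) := by ring
      _ ≤ |coeff j g| * (5 * r * M * r ^ j) := by gcongr
      _ = 5 * r * M * (|coeff j g| * r ^ j) := by ring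
  have h := tendsto_convolution hf hsum
  rw [hv] at h
  refine h.congr fun n => ?_
  rw [coeff_mul, sum_div]
  congr 1
  refine sum_congr rfl fun p hp => ?_
  rw [← mem_antidiagonal.1 hp, pow_add]
  field_simp

theorem mul_polynomial (hf : Asymp f L) (p : Polynomial ℝ) :
    Asymp (f * (p : ℝ⟦X⟧)) (L * p.eval (1 / 5)) :=
  hf.mul (r := 1) (by norm_num) (.polynomial p 1) (.polynomial p _)

theorem div_linear {α : ℝ} (hf : Asymp f L) (hα0 : 0 < α) (hα : α < 1 / 5) (h0 : EvalsTo f α 0)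
    (hg : (1 - C (1 / α) * X) * g = f) : Asymp g (L / (1 - 1 / (5 * α))) := by
  refine tendsto_tail (a := fun n => coeff n f / 5 ^ n) hf (by positivity) (by linarith)
    (HasSum.congr_fun h0 fun n => ?_) ?_ fun n => ?_
  · rw [mul_pow]
    field_simp
  · simp [← hg]
  · have : coeff (n + 1) f = coeff (n + 1) g - 1 / α * coeff n g := by
      rw [← hg, sub_mul, one_mul, map_sub, mul_assoc, coeff_C_mul, coeff_succ_X_mul]
    rw [this, pow_succ]
    field_simp
    ring

end Asymp

/-- The power series of `√(1 - X)`. -/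
noncomputable def sqrtSeries : ℝ⟦X⟧ :=
  1 - C (1 / 2) * (X * rescale (1 / 4) (catalanSeries.map (Nat.castRingHom ℝ)))

theorem sqrtSeries_sq : sqrtSeries ^ 2 = 1 - X := by
  have h := congrArg (fun f => rescale (1 / 4 : ℝ) (f.map (Nat.castRingHom ℝ)))
    catalanSeries_sq_mul_X_add_one
  simp only [map_add, map_mul, map_pow, map_one, map_X, rescale_X] at h
  rw [sqrtSeries]
  generalize rescale (1 / 4 : ℝ) (catalanSeries.map (Nat.castRingHom ℝ)) = c at *
  have h2 : 2 * C (1 / 2 : ℝ) = 1 := by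
    rw [← map_ofNat (C (R := ℝ)) 2, ← map_mul]; norm_num
  have h4 : C (1 / 2 : ℝ) ^ 2 = C (1 / 4 : ℝ) := by rw [← map_pow]; norm_num
  linear_combination X * h + X ^ 2 * c ^ 2 * h4 - X * c * h2

theorem coeff_succ_sqrtSeries (n : ℕ) :
    coeff (n + 1) sqrtSeries = -(1 / 2) * (catalan n / 4 ^ n) := by
  rw [sqrtSeries, map_sub, coeff_C_mul, coeff_succ_X_mul, coeff_rescale, coeff_map]
  simp [coeff_one, catalanSeries_coeff]
  ring

theorem tendsto_coeff_sqrtSeries :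
    Tendsto (fun n : ℕ => coeff n sqrtSeries * (n : ℝ) ^ (3 / 2 : ℝ)) atTop
      (𝓝 (-(1 / 2) * (1 / √Real.pi))) := by
  refine tendsto_of_shift_one ((tendsto_catalan.const_mul _).congr fun n => ?_)
  rw [coeff_succ_sqrtSeries]
  ring

theorem summable_coeff_sqrtSeries : Summable fun n => coeff n sqrtSeries := by
  obtain ⟨B, -, hB⟩ := exists_bound tendsto_coeff_sqrtSeries
  rw [← summable_abs_iff]
  have hs : Summable fun n : ℕ => B * (1 / ((n + 1 : ℕ) : ℝ) ^ (3 / 2 : ℝ)) :=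
    ((summable_nat_add_iff 1).2 (Real.summable_one_div_nat_rpow.2 (by norm_num))).mul_left B
  refine hs.of_nonneg_of_le (fun n => abs_nonneg _) fun n => ?_
  have : (0 : ℝ) < ((n + 1 : ℕ) : ℝ) ^ (3 / 2 : ℝ) := Real.rpow_pos_of_pos (by positivity) _
  rw [mul_one_div, le_div_iff₀ this]
  exact_mod_cast hB n

theorem evalsTo_sqrtSeries {r : ℝ} (h0 : 0 ≤ r) (h1 : r ≤ 1) :
    EvalsTo sqrtSeries r √(1 - r) := by
  have hsummable : ∀ {r : ℝ}, 0 ≤ r → r ≤ 1 → Summable fun n => coeff n sqrtSeries * r ^ n := by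
    intro r h0 h1
    refine Summable.of_norm_bounded summable_coeff_sqrtSeries.norm fun n => ?_
    rw [norm_mul, norm_pow, Real.norm_of_nonneg h0]
    exact mul_le_of_le_one_right (norm_nonneg _) (pow_le_one₀ h0 h1)
  have hsq : ∀ {r v : ℝ}, EvalsTo sqrtSeries r v → v * v = 1 - r := by
    intro r v h
    have hmul := h.mul h
    rw [← sq, sqrtSeries_sq] at hmul
    have hpoly := EvalsTo.polynomial (1 - Polynomial.X) r
    rw [Polynomial.coe_sub, Polynomial.coe_one, Polynomial.coe_X, Polynomial.eval_sub,
      Polynomial.eval_one, Polynomial.eval_X] at hpoly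
    exact hmul.unique hpoly
  have hev : EvalsTo sqrtSeries r _ := (hsummable h0 h1).hasSum
  have hev1 : EvalsTo sqrtSeries 1 _ := (hsummable zero_le_one le_rfl).hasSum
  have hone := hsq hev1
  have hsq' := hsq hev
  have hle : ∑' n, coeff n sqrtSeries * 1 ^ n ≤ ∑' n, coeff n sqrtSeries * r ^ n := by
    refine hev1.summable.tsum_le_tsum (fun n => ?_) hev.summable
    cases n with
    | zero => simp
    | succ n =>
      rw [one_pow]
      refine mul_le_mul_of_nonpos_left (pow_le_one₀ h0 h1) ?_
      rw [coeff_succ_sqrtSeries]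
      have : (0 : ℝ) ≤ catalan n / 4 ^ n := by positivity
      linarith
  rw [sub_self, mul_self_eq_zero] at hone
  rw [hone] at hle
  rw [← hsq', Real.sqrt_mul_self hle]
  exact hev

theorem evalsTo_geometric {r : ℝ} (h0 : 0 ≤ r) (h1 : r < 1) :
    EvalsTo (PowerSeries.mk 1 : ℝ⟦X⟧) r (1 / (1 - r)) := by
  simpa [EvalsTo] using hasSum_geometric_of_lt_one h0 h1

theorem abs_coeff_le_of_cubic_mul_eq_one {ι : ℝ⟦X⟧} {c₁ c₂ c₃ : ℝ}
    (hι : (1 + C c₁ * X + C c₂ * X ^ 2 + C c₃ * X ^ 3) * ι = 1)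
    (hc : |c₁| * 16 + |c₂| * 4 + |c₃| ≤ 64) (n : ℕ) : |coeff n ι| ≤ 4 ^ n := by
  have hexp : ι = 1 - C c₁ * (X * ι) - C c₂ * (X * (X * ι)) - C c₃ * (X * (X * (X * ι))) := by
    linear_combination hι
  have h0 : coeff 0 ι = 1 := by rw [hexp]; simp
  have h1 : coeff 1 ι = -(c₁ * coeff 0 ι) := by
    conv_lhs => rw [hexp]
    simp [coeff_succ_X_mul, coeff_one]
  have h2 : coeff 2 ι = -(c₁ * coeff 1 ι) - c₂ * coeff 0 ι := by
    conv_lhs => rw [hexp]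
    simp [coeff_succ_X_mul, coeff_one]
  have h3 : ∀ n, coeff (n + 3) ι =
      -(c₁ * coeff (n + 2) ι) - c₂ * coeff (n + 1) ι - c₃ * coeff n ι := by
    intro n
    conv_lhs => rw [hexp]
    simp [coeff_succ_X_mul, coeff_one]
  have hb1 : |c₁| ≤ 4 := by linarith [abs_nonneg c₂, abs_nonneg c₃]
  have key : ∀ n, |coeff n ι| ≤ 4 ^ n ∧ |coeff (n + 1) ι| ≤ 4 ^ (n + 1) ∧
      |coeff (n + 2) ι| ≤ 4 ^ (n + 2) := by
    intro n
    induction n with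
    | zero =>
      have hb1' : |coeff 1 ι| ≤ 4 := by simpa [h1, h0] using hb1
      refine ⟨by simp [h0], by simpa using hb1', ?_⟩
      rw [zero_add, h2, h0]
      calc |(-(c₁ * coeff 1 ι) - c₂ * 1)| ≤ |c₁| * |coeff 1 ι| + |c₂| := by
            rw [mul_one, ← abs_mul, ← abs_neg (c₁ * _)]
            exact abs_sub _ _
        _ ≤ |c₁| * 4 + |c₂| := by gcongr
        _ ≤ 4 ^ 2 := by linarith [abs_nonneg c₃]
    | succ n ih =>
      obtain ⟨ha, hb, hd⟩ := ih
      refine ⟨hb, hd, ?_⟩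
      rw [show n + 1 + 2 = n + 3 by rfl, h3]
      calc |(-(c₁ * coeff (n + 2) ι) - c₂ * coeff (n + 1) ι - c₃ * coeff n ι)|
          ≤ |c₁| * |coeff (n + 2) ι| + |c₂| * |coeff (n + 1) ι| + |c₃| * |coeff n ι| := by
            rw [← abs_mul, ← abs_mul, ← abs_mul, ← abs_neg (c₁ * _)]
            exact (abs_sub _ _).trans (add_le_add_left (abs_sub _ _) _)
        _ ≤ |c₁| * 4 ^ (n + 2) + |c₂| * 4 ^ (n + 1) + |c₃| * 4 ^ n := by gcongr
        _ = (|c₁| * 16 + |c₂| * 4 + |c₃|) * 4 ^ n := by ring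
        _ ≤ 64 * 4 ^ n := by gcongr
        _ = 4 ^ (n + 3) := by ring
  exact (key n).1

theorem exists_evalsTo_of_coeff_le {f : ℝ⟦X⟧} (hf : ∀ n, |coeff n f| ≤ 4 ^ n) {r : ℝ}
    (h0 : 0 ≤ r) (h1 : r < 1 / 4) : ∃ v, EvalsTo f r v := by
  refine ⟨_, (Summable.of_norm_bounded
    (summable_geometric_of_lt_one (r := 4 * r) (by positivity) (by linarith)) fun n => ?_).hasSum⟩
  rw [norm_mul, norm_pow, Real.norm_of_nonneg h0, mul_pow]
  gcongr
  exact hf n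

theorem exists_quartic_root : ∃ α : ℝ, 143 / 1000 < α ∧ α < 145 / 1000 ∧
    1 - 10 * α + 24 * α ^ 2 - 20 * α ^ 3 + 4 * α ^ 4 = 0 := by
  have hcont : ContinuousOn
      (fun α : ℝ => 1 - 10 * α + 24 * α ^ 2 - 20 * α ^ 3 + 4 * α ^ 4)
      (Set.Icc (143 / 1000) (145 / 1000)) := by fun_prop
  obtain ⟨α, hα, h⟩ := intermediate_value_Ioo' (by norm_num) hcont
    (show (0 : ℝ) ∈ Set.Ioo _ _ by constructor <;> norm_num)
  exact ⟨α, hα.1, hα.2, h⟩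

/-- The power series of `√((1 - 5 X) / (1 - X))`. -/
noncomputable def sqrtQuotient : ℝ⟦X⟧ := rescale 5 sqrtSeries * sqrtSeries * PowerSeries.mk 1

theorem sqrtQuotient_sq : sqrtQuotient ^ 2 * (1 - X) = 1 - 5 * X := by
  have h5 : rescale 5 sqrtSeries ^ 2 = 1 - 5 * X := by
    rw [← map_pow, sqrtSeries_sq, map_sub, map_one, rescale_X, map_ofNat]
  have hu : (PowerSeries.mk 1 : ℝ⟦X⟧) * (1 - X) = 1 := mk_one_mul_one_sub_eq_one ℝ
  rw [sqrtQuotient]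
  linear_combination (PowerSeries.mk 1 : ℝ⟦X⟧) ^ 2 * (1 - X) * sqrtSeries ^ 2 * h5 +
    (PowerSeries.mk 1 : ℝ⟦X⟧) ^ 2 * (1 - X) * (1 - 5 * X) * sqrtSeries_sq +
    (1 - 5 * X) * ((PowerSeries.mk 1 : ℝ⟦X⟧) * (1 - X) + 1) * hu

theorem constantCoeff_sqrtQuotient : constantCoeff sqrtQuotient = 1 := by
  have h : constantCoeff sqrtSeries = 1 := by simp [sqrtSeries]
  have h5 : constantCoeff (rescale 5 sqrtSeries) = 1 := by
    rw [← coeff_zero_eq_constantCoeff_apply, coeff_rescale, pow_zero, one_mul,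
      coeff_zero_eq_constantCoeff_apply, h]
  have hu : constantCoeff (PowerSeries.mk 1 : ℝ⟦X⟧) = 1 := by
    simp [← coeff_zero_eq_constantCoeff_apply, -coeff_zero_eq_constantCoeff]
  rw [sqrtQuotient, map_mul, map_mul, h, h5, hu, one_mul, one_mul]

theorem evalsTo_sqrtQuotient {r : ℝ} (h0 : 0 ≤ r) (h1 : r ≤ 1 / 5) :
    EvalsTo sqrtQuotient r (√(1 - 5 * r) * √(1 - r) * (1 / (1 - r))) :=
  ((evalsTo_sqrtSeries (by linarith) (by linarith)).rescale.mul
    (evalsTo_sqrtSeries h0 (by linarith))).mul (evalsTo_geometric h0 (by linarith))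

theorem asymp_sqrtQuotient : Asymp sqrtQuotient
    (-(1 / 2) * (1 / √Real.pi) * √(1 - 1 / 5) * (1 / (1 - 1 / 5))) := by
  have h : Asymp (rescale 5 sqrtSeries) (-(1 / 2) * (1 / √Real.pi)) := by
    refine tendsto_coeff_sqrtSeries.congr fun n => ?_
    rw [coeff_rescale]
    field_simp
  exact (h.mul (r := 1 / 2) (by norm_num) (evalsTo_sqrtSeries (by norm_num) (by norm_num))
    (evalsTo_sqrtSeries (by norm_num) (by norm_num))).mul (r := 1 / 2) (by norm_num)
    (evalsTo_geometric (by norm_num) (by norm_num)) (evalsTo_geometric (by norm_num) (by norm_num))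

/-- The numerator series `b` in the generating function `1 + (1 - 2 * X) * b / K`. -/
noncomputable def numerator : ℝ⟦X⟧ :=
  -1 + 5 * X - 7 * X ^ 2 + 2 * X ^ 3 + (1 - X) ^ 2 * sqrtQuotient

theorem numerator_eq : numerator = ((-1 + Polynomial.C 5 * Polynomial.X -
    Polynomial.C 7 * Polynomial.X ^ 2 + Polynomial.C 2 * Polynomial.X ^ 3 : Polynomial ℝ) : ℝ⟦X⟧) +
    sqrtQuotient * (((1 - Polynomial.X) ^ 2 : Polynomial ℝ) : ℝ⟦X⟧) := by
  rw [numerator]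
  simp only [Polynomial.coe_add, Polynomial.coe_sub, Polynomial.coe_neg, Polynomial.coe_one,
    Polynomial.coe_mul, Polynomial.coe_pow, Polynomial.coe_X, Polynomial.coe_C]
  simp only [map_ofNat]
  ring

theorem evalsTo_numerator {α : ℝ} (h0 : 143 / 1000 < α) (h1 : α < 145 / 1000)
    (hK : 1 - 10 * α + 24 * α ^ 2 - 20 * α ^ 3 + 4 * α ^ 4 = 0) : EvalsTo numerator α 0 := by
  have h := (EvalsTo.polynomial (-1 + Polynomial.C 5 * Polynomial.X -
    Polynomial.C 7 * Polynomial.X ^ 2 + Polynomial.C 2 * Polynomial.X ^ 3) α).add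
    ((evalsTo_sqrtQuotient (by linarith) (by linarith)).mul
      (EvalsTo.polynomial ((1 - Polynomial.X) ^ 2) α))
  rw [← numerator_eq] at h
  simp only [Polynomial.eval_add, Polynomial.eval_sub, Polynomial.eval_neg, Polynomial.eval_one,
    Polynomial.eval_mul, Polynomial.eval_pow, Polynomial.eval_X, Polynomial.eval_C] at h
  convert h using 1
  have hpos : 0 < 1 - 5 * α + 7 * α ^ 2 - 2 * α ^ 3 := by nlinarith
  have hsq : (1 - 5 * α + 7 * α ^ 2 - 2 * α ^ 3) ^ 2 = (1 - α) ^ 2 * ((1 - 5 * α) * (1 - α)) := by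
    linear_combination (-2 * α + α ^ 2) * hK
  have hroot : 1 - 5 * α + 7 * α ^ 2 - 2 * α ^ 3 = (1 - α) * (√(1 - 5 * α) * √(1 - α)) := by
    rw [← Real.sqrt_sq hpos.le, hsq, Real.sqrt_mul (by positivity), Real.sqrt_sq (by linarith),
      Real.sqrt_mul (by linarith)]
  have hne : 1 - α ≠ 0 := by linarith
  field_simp
  linear_combination hroot

theorem asymp_numerator : Asymp numerator
    (-(1 / 2) * (1 / √Real.pi) * √(1 - 1 / 5) * (1 / (1 - 1 / 5)) * (16 / 25)) := by
  have h := (Asymp.polynomial (-1 + Polynomial.C 5 * Polynomial.X -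
    Polynomial.C 7 * Polynomial.X ^ 2 + Polynomial.C 2 * Polynomial.X ^ 3)).add
    (asymp_sqrtQuotient.mul_polynomial ((1 - Polynomial.X) ^ 2))
  rw [← numerator_eq, zero_add] at h
  simp only [Polynomial.eval_sub, Polynomial.eval_one, Polynomial.eval_pow,
    Polynomial.eval_X] at h
  convert h using 2
  norm_num

theorem tendsto_dCount :
    Tendsto (fun n : ℕ => (dCount n : ℝ) / 5 ^ n * (n : ℝ) ^ (3 / 2 : ℝ)) atTop
      (𝓝 ((60 / 121) * √(5 / Real.pi))) := by
  obtain ⟨α, h0, h1, hK⟩ := exists_quartic_root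
  have hα : α ≠ 0 := by linarith
  set c₃ : ℝ := -4 * α with hc₃
  set c₂ : ℝ := 20 * α - 4 * α ^ 2 with hc₂
  set c₁ : ℝ := 1 / α - 10 with hc₁
  have hc₁' : c₁ = (c₂ - 24) * α := by
    rw [hc₁, hc₂]
    field_simp
    linear_combination hK
  set Q : Polynomial ℝ := 1 + Polynomial.C c₁ * Polynomial.X + Polynomial.C c₂ * Polynomial.X ^ 2 +
    Polynomial.C c₃ * Polynomial.X ^ 3 with hQ
  have hQcoe : (Q : ℝ⟦X⟧) = 1 + C c₁ * X + C c₂ * X ^ 2 + C c₃ * X ^ 3 := by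
    simp only [hQ, Polynomial.coe_add, Polynomial.coe_one, Polynomial.coe_mul, Polynomial.coe_pow,
      Polynomial.coe_X, Polynomial.coe_C]
  set ι : ℝ⟦X⟧ := (Q : ℝ⟦X⟧)⁻¹
  have hι : (Q : ℝ⟦X⟧) * ι = 1 := PowerSeries.mul_inv_cancel _ (by rw [hQcoe]; simp)
  set l : ℝ⟦X⟧ := (1 - C (1 / α) * X)⁻¹
  have hl : (1 - C (1 / α) * X) * l = 1 := PowerSeries.mul_inv_cancel _ (by simp)
  have hfactor : (1 - 10 * X + 24 * X ^ 2 - 20 * X ^ 3 + 4 * X ^ 4 : ℝ⟦X⟧) =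
      (1 - C (1 / α) * X) * (Q : ℝ⟦X⟧) := by
    have e1 : C c₁ = C (1 / α) - 10 := by rw [hc₁, map_sub, map_ofNat]
    have e2 : C c₂ - C (1 / α) * C c₁ = (24 : ℝ⟦X⟧) := by
      rw [← map_mul, ← map_sub, ← map_ofNat (C (R := ℝ)) 24, hc₁']
      congr 1
      field_simp
      ring
    have e3 : C c₃ - C (1 / α) * C c₂ = (-20 : ℝ⟦X⟧) := by
      rw [← map_mul, ← map_sub, ← map_ofNat (C (R := ℝ)) 20, ← map_neg, hc₂, hc₃]
      congr 1
      field_simp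
      ring
    have e4 : C (1 / α) * C c₃ = (-4 : ℝ⟦X⟧) := by
      rw [← map_mul, ← map_ofNat (C (R := ℝ)) 4, ← map_neg, hc₃]
      congr 1
      field_simp
    rw [hQcoe]
    linear_combination -X * e1 - X ^ 2 * e2 - X ^ 3 * e3 + X ^ 4 * e4
  have hκ : (1 - 10 * X + 24 * X ^ 2 - 20 * X ^ 3 + 4 * X ^ 4) * (l * ι) = 1 := by
    rw [hfactor]
    linear_combination (Q : ℝ⟦X⟧) * ι * hl + hι
  have hbound : ∀ n, |coeff n ι| ≤ 4 ^ n := by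
    refine abs_coeff_le_of_cubic_mul_eq_one (c₁ := c₁) (c₂ := c₂) (c₃ := c₃)
      (by rw [← hQcoe, hι]) ?_
    have hneg : c₁ ≤ 0 := by rw [hc₁', hc₂]; nlinarith
    rw [abs_of_nonpos hneg, abs_of_nonneg (by rw [hc₂]; nlinarith),
      abs_of_nonpos (by rw [hc₃]; linarith), hc₁', hc₂, hc₃]
    nlinarith [mul_pos (sub_pos.2 h0) (sub_pos.2 h1), pow_pos (by linarith : 0 < α) 3]
  obtain ⟨v', hv'⟩ := exists_evalsTo_of_coeff_le hbound (r := 6 / 25) (by norm_num) (by norm_num)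
  obtain ⟨v, hv⟩ := exists_evalsTo_of_coeff_le hbound (r := 1 / 5) (by norm_num) (by norm_num)
  have hvQ : Q.eval (1 / 5) * v = 1 := by
    have h := (EvalsTo.polynomial Q (1 / 5)).mul hv
    rw [hι, ← Polynomial.coe_one] at h
    have h' := EvalsTo.polynomial 1 (1 / 5)
    rw [Polynomial.eval_one] at h'
    exact h.unique h'
  have hG := asymp_numerator.div_linear (g := numerator * l) (by linarith) (by linarith)
    (evalsTo_numerator h0 h1 hK) (by linear_combination numerator * hl)
  have hD := (Asymp.polynomial 1).add ((hG.mul (by norm_num) hv' hv).mul_polynomial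
    (1 - Polynomial.C 2 * Polynomial.X))
  have hw : ((2 - X : ℝ⟦X⟧)⁻¹) * (2 - X) = 1 := PowerSeries.inv_mul_cancel _
    (by rw [map_sub, map_ofNat, constantCoeff_X]; norm_num)
  have hgf : ∀ n, (dCount n : ℝ) = coeff n (((1 : Polynomial ℝ) : ℝ⟦X⟧) +
      numerator * l * ι * ((1 - Polynomial.C 2 * Polynomial.X : Polynomial ℝ) : ℝ⟦X⟧)) := by
    intro n
    rw [TreeSolution.dCount_eq_coeff (mk_one_mul_one_sub_eq_one ℝ) hw hκ sqrtQuotient_sq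
      constantCoeff_sqrtQuotient]
    simp only [Polynomial.coe_sub, Polynomial.coe_one, Polynomial.coe_mul, Polynomial.coe_X,
      Polynomial.coe_C]
    simp only [map_ofNat]
    rw [← numerator]
    congr 1
    ring
  simp_rw [hgf]
  refine (?_ : Asymp _ _)
  convert hD using 1
  have hpi : √Real.pi ≠ 0 := (Real.sqrt_pos.2 Real.pi_pos).ne'
  have h45 : √(1 - 1 / 5 : ℝ) = 2 * √5 / 5 := by
    rw [show (1 - 1 / 5 : ℝ) = (2 / 5) ^ 2 * 5 by norm_num, Real.sqrt_mul (by norm_num),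
      Real.sqrt_sq (by norm_num)]
    ring
  have hprod : (1 - 1 / (5 * α)) * Q.eval (1 / 5) = -121 / 625 := by
    simp only [hQ, Polynomial.eval_add, Polynomial.eval_one, Polynomial.eval_mul,
      Polynomial.eval_pow, Polynomial.eval_X, Polynomial.eval_C]
    rw [hc₁', hc₂, hc₃]
    field_simp
    linear_combination (-78125) * hK
  have hlin : 1 - 1 / (5 * α) ≠ 0 := by
    intro h
    rw [h, zero_mul] at hprod
    norm_num at hprod
  have hquot : v / (1 - 1 / (5 * α)) = -625 / 121 := by
    rw [div_eq_iff hlin]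
    linear_combination (-625 / 121 * (1 - 1 / (5 * α))) * hvQ + 625 / 121 * v * hprod
  simp only [Polynomial.eval_sub, Polynomial.eval_one, Polynomial.eval_mul, Polynomial.eval_X,
    Polynomial.eval_C]
  rw [Real.sqrt_div (by norm_num), h45, zero_add, div_mul_eq_mul_div _ _ v,
    mul_div_assoc _ v, hquot]
  field_simp
  norm_num

end SingularityAnalysis

theorem dCount_asymptotics :
    Tendsto (fun n : ℕ => (dCount n : ℝ) * (n : ℝ) ^ ((3 : ℝ) / 2) / 5 ^ n)
      atTop (nhds ((60 / 121) * Real.sqrt (5 / Real.pi))) :=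
  SingularityAnalysis.tendsto_dCount.congr fun n => by ring
end

section
/- Let h(n) denote the number of permutations of length n avoiding 4213, 2413 and 2143, and let d(n) denote the number of permutations of length n avoiding 4213 and 2143. Then the ratio h(n)/d(n) tends to 121/216 as n → ∞; in particular, since 121/216 > 1/2, for all sufficiently large n more than half of the permutations of length n avoiding 4213 and 2143 also avoid 2413. -/
open Filter Topology PowerSeries

/-! ### Appending a last entry -/

/-- The permutation obtained from `σ` by appending a last entry of value `v`,
the values `≥ v` of `σ` being shifted up by one. -/
def appendLast {n : ℕ} (σ : Equiv.Perm (Fin n)) (v : Fin (n + 1)) : Equiv.Perm (Fin (n + 1)) :=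
  finSuccEquivLast.trans ((Equiv.optionCongr σ).trans (finSuccEquiv' v).symm)

@[simp] lemma appendLast_last {n : ℕ} (σ : Equiv.Perm (Fin n)) (v : Fin (n + 1)) :
    appendLast σ v (Fin.last n) = v := by
  simp [appendLast]

@[simp] lemma appendLast_castSucc {n : ℕ} (σ : Equiv.Perm (Fin n)) (v : Fin (n + 1)) (k : Fin n) :
    appendLast σ v k.castSucc = v.succAbove (σ k) := by
  simp [appendLast]

lemma appendLast_castSucc_val {n : ℕ} (σ : Equiv.Perm (Fin n)) (v : Fin (n + 1)) (k : Fin n) :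
    (appendLast σ v k.castSucc : ℕ) = if (σ k : ℕ) < v then (σ k : ℕ) else (σ k : ℕ) + 1 := by
  rw [appendLast_castSucc, Fin.succAbove]
  simp only [Fin.lt_def, Fin.val_castSucc]
  split_ifs <;> simp

lemma appendLast_bijective (n : ℕ) :
    Function.Bijective
      (fun p : Equiv.Perm (Fin n) × Fin (n + 1) => appendLast p.1 p.2) := by
  rw [Fintype.bijective_iff_injective_and_card]
  constructor
  · rintro ⟨σ, v⟩ ⟨τ, w⟩ h
    have hv : v = w := by
      have := congrArg (fun ρ : Equiv.Perm (Fin (n + 1)) => ρ (Fin.last n)) h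
      simpa using this
    subst hv
    have : σ = τ := by
      ext k
      have := congrArg (fun ρ : Equiv.Perm (Fin (n + 1)) => ρ k.castSucc) h
      simp only [appendLast_castSucc] at this
      rw [Fin.succAbove_right_injective this]
    rw [this]
  · simp [Fintype.card_perm, Nat.factorial_succ, mul_comm]

lemma sum_perm_succ {n : ℕ} (f : Equiv.Perm (Fin (n + 1)) → ℕ) :
    ∑ ρ, f ρ = ∑ σ : Equiv.Perm (Fin n), ∑ v, f (appendLast σ v) := by
  rw [← Fintype.sum_prod_type', ← (appendLast_bijective n).sum_comp f]

open Classical in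
/-- The number of permutations satisfying `P` obtained from `σ` by appending `r` entries
in succession. -/
noncomputable def descendants (P : ∀ n, Equiv.Perm (Fin n) → Prop) :
    ℕ → ∀ {n : ℕ}, Equiv.Perm (Fin n) → ℕ
  | 0, n, σ => if P n σ then 1 else 0
  | r + 1, _, σ => ∑ v, descendants P r (appendLast σ v)

lemma sum_descendants (P : ∀ n, Equiv.Perm (Fin n) → Prop) (r : ℕ) : ∀ n : ℕ,
    ∑ σ : Equiv.Perm (Fin n), descendants P r σ
      = Nat.card {σ : Equiv.Perm (Fin (n + r)) // P (n + r) σ} := by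
  classical
  induction r with
  | zero =>
    intro n
    simp [descendants, Nat.card_eq_fintype_card, Fintype.card_subtype]
  | succ r ih =>
    intro n
    have h := ih (n + 1)
    rw [sum_perm_succ] at h
    rw [show n + (r + 1) = n + 1 + r by omega, ← h]
    rfl

lemma card_eq_descendants (P : ∀ n, Equiv.Perm (Fin n) → Prop) (r : ℕ) :
    Nat.card {σ : Equiv.Perm (Fin r) // P r σ}
      = descendants P r (1 : Equiv.Perm (Fin 0)) := by
  have h := sum_descendants P r 0
  rw [Fintype.sum_unique, Nat.zero_add] at h
  rw [← h]
  congr 1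

lemma descendants_eq_zero {P : ∀ n, Equiv.Perm (Fin n) → Prop}
    (hP : ∀ n (σ : Equiv.Perm (Fin n)) v, P (n + 1) (appendLast σ v) → P n σ) (r : ℕ) :
    ∀ {n : ℕ} {σ : Equiv.Perm (Fin n)}, ¬ P n σ → descendants P r σ = 0 := by
  induction r with
  | zero => intro n σ h; simp [descendants, h]
  | succ r ih =>
    intro n σ h
    simp only [descendants]
    exact Finset.sum_eq_zero fun v _ => ih fun h' => h (hP _ _ _ h')

/-! ### Sites -/

/-- The values below `m` appear in increasing order. -/
def LowIncreasing {n : ℕ} (σ : Equiv.Perm (Fin n)) (m : ℕ) : Prop :=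
  ∀ a b : Fin n, a < b → (σ a : ℕ) < m → (σ b : ℕ) < m → σ a < σ b

/-- Every inversion among the values below `m` straddles all the values that are at least `m`. -/
def Straddles {n : ℕ} (σ : Equiv.Perm (Fin n)) (m : ℕ) : Prop :=
  ∀ a b : Fin n, a < b → σ b < σ a → (σ a : ℕ) < m → ∀ c : Fin n, m ≤ (σ c : ℕ) → a < c ∧ c < b

/-- The values in `[u, m)` appear before all the values that are at least `m`. -/
def Precedes {n : ℕ} (σ : Equiv.Perm (Fin n)) (u m : ℕ) : Prop :=
  ∀ a c : Fin n, u ≤ (σ a : ℕ) → (σ a : ℕ) < m → m ≤ (σ c : ℕ) → a < c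

lemma patternContains_four {n : ℕ} (σ : Equiv.Perm (Fin n)) (π : Fin 4 → Fin 4) :
    PatternContains σ π ↔ ∃ a b c d : Fin n, a < b ∧ b < c ∧ c < d ∧
      ∀ x y : Fin 4, π x < π y ↔ σ (![a, b, c, d] x) < σ (![a, b, c, d] y) := by
  constructor
  · rintro ⟨f, hf, h⟩
    have hfe : ![f 0, f 1, f 2, f 3] = f := by
      ext i; fin_cases i <;> rfl
    refine ⟨f 0, f 1, f 2, f 3, hf (by decide), hf (by decide), hf (by decide), ?_⟩
    rwa [hfe]
  · rintro ⟨a, b, c, d, hab, hbc, hcd, h⟩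
    refine ⟨![a, b, c, d], ?_, h⟩
    rw [Fin.strictMono_iff_lt_succ]
    intro i
    fin_cases i
    · exact hab
    · exact hbc
    · exact hcd

lemma contains_p4213 {n : ℕ} (σ : Equiv.Perm (Fin n)) : PatternContains σ p4213 ↔
    ∃ a b c d : Fin n, a < b ∧ b < c ∧ c < d ∧ σ c < σ b ∧ σ b < σ d ∧ σ d < σ a := by
  rw [patternContains_four]
  constructor
  · rintro ⟨a, b, c, d, hab, hbc, hcd, h⟩
    exact ⟨a, b, c, d, hab, hbc, hcd, (h 2 1).1 (by decide), (h 1 3).1 (by decide),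
      (h 3 0).1 (by decide)⟩
  · rintro ⟨a, b, c, d, hab, hbc, hcd, h1, h2, h3⟩
    refine ⟨a, b, c, d, hab, hbc, hcd, ?_⟩
    simp only [Fin.lt_def] at h1 h2 h3 ⊢
    intro x y
    fin_cases x <;> fin_cases y <;> simp [p4213] <;> omega

lemma contains_p2413 {n : ℕ} (σ : Equiv.Perm (Fin n)) : PatternContains σ p2413 ↔
    ∃ a b c d : Fin n, a < b ∧ b < c ∧ c < d ∧ σ c < σ a ∧ σ a < σ d ∧ σ d < σ b := by
  rw [patternContains_four]
  constructor
  · rintro ⟨a, b, c, d, hab, hbc, hcd, h⟩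
    exact ⟨a, b, c, d, hab, hbc, hcd, (h 2 0).1 (by decide), (h 0 3).1 (by decide),
      (h 3 1).1 (by decide)⟩
  · rintro ⟨a, b, c, d, hab, hbc, hcd, h1, h2, h3⟩
    refine ⟨a, b, c, d, hab, hbc, hcd, ?_⟩
    simp only [Fin.lt_def] at h1 h2 h3 ⊢
    intro x y
    fin_cases x <;> fin_cases y <;> simp [p2413] <;> omega

lemma contains_p2143 {n : ℕ} (σ : Equiv.Perm (Fin n)) : PatternContains σ p2143 ↔
    ∃ a b c d : Fin n, a < b ∧ b < c ∧ c < d ∧ σ b < σ a ∧ σ a < σ d ∧ σ d < σ c := by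
  rw [patternContains_four]
  constructor
  · rintro ⟨a, b, c, d, hab, hbc, hcd, h⟩
    exact ⟨a, b, c, d, hab, hbc, hcd, (h 1 0).1 (by decide), (h 0 3).1 (by decide),
      (h 3 2).1 (by decide)⟩
  · rintro ⟨a, b, c, d, hab, hbc, hcd, h1, h2, h3⟩
    refine ⟨a, b, c, d, hab, hbc, hcd, ?_⟩
    simp only [Fin.lt_def] at h1 h2 h3 ⊢
    intro x y
    fin_cases x <;> fin_cases y <;> simp [p2143] <;> omega
/-! ### How the sites change when an entry is appended -/

lemma appendLast_lt_iff {n : ℕ} (σ : Equiv.Perm (Fin n)) (v : Fin (n + 1)) (k l : Fin n) :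
    appendLast σ v k.castSucc < appendLast σ v l.castSucc ↔ σ k < σ l := by
  simp [Fin.succAbove_lt_succAbove_iff]

lemma appendLast_lt_last_iff {n : ℕ} (σ : Equiv.Perm (Fin n)) (v : Fin (n + 1)) (k : Fin n) :
    appendLast σ v k.castSucc < appendLast σ v (Fin.last n) ↔ (σ k : ℕ) < v := by
  rw [Fin.lt_def, appendLast_castSucc_val, appendLast_last]
  split_ifs <;> omega

lemma last_lt_appendLast_iff {n : ℕ} (σ : Equiv.Perm (Fin n)) (v : Fin (n + 1)) (k : Fin n) :
    appendLast σ v (Fin.last n) < appendLast σ v k.castSucc ↔ (v : ℕ) ≤ σ k := by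
  rw [Fin.lt_def, appendLast_castSucc_val, appendLast_last]
  split_ifs <;> omega

section Rules

variable {n : ℕ} (σ : Equiv.Perm (Fin n)) (v : Fin (n + 1))

lemma exists_val_eq {m : ℕ} (hm : m < n) : ∃ c : Fin n, (σ c : ℕ) = m :=
  ⟨σ.symm ⟨m, hm⟩, by simp⟩

lemma lowIncreasing_append_of_le {m : ℕ} (hm : m ≤ v) :
    LowIncreasing (appendLast σ v) m ↔ LowIncreasing σ m := by
  simp only [LowIncreasing, Fin.forall_fin_succ', appendLast_lt_iff, appendLast_castSucc_val,
    appendLast_last, Fin.castSucc_lt_castSucc_iff]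
  constructor
  · intro h a b hab ha hb
    exact (h.1 a).1 b hab (by split_ifs <;> omega) (by split_ifs <;> omega)
  · refine fun h => ⟨fun a => ⟨fun b hab ha hb => ?_, fun _ _ _ => by omega⟩,
      fun _ _ _ => by omega, fun _ _ _ => by omega⟩
    exact h a b hab (by split_ifs at ha <;> omega) (by split_ifs at hb <;> omega)

lemma lowIncreasing_append_succ {m : ℕ} (hv : v ≤ m) (hm : m ≤ n) :
    LowIncreasing (appendLast σ v) (m + 1) ↔ LowIncreasing σ m ∧ m = v := by
  constructor
  · intro h
    refine ⟨fun a b hab ha hb => ?_, ?_⟩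
    · refine (appendLast_lt_iff σ v a b).1
        (h a.castSucc b.castSucc (by simpa using hab) ?_ ?_) <;>
      · rw [appendLast_castSucc_val]; split_ifs <;> omega
    · by_contra hne
      obtain ⟨a, ha⟩ := exists_val_eq σ (m := v) (by omega)
      have := h a.castSucc (Fin.last n) (Fin.castSucc_lt_last a)
        (by rw [appendLast_castSucc_val]; split_ifs <;> omega) (by rw [appendLast_last]; omega)
      rw [appendLast_lt_last_iff] at this
      omega
  · rintro ⟨h, rfl⟩ a b hab ha hb
    induction a using Fin.lastCases with
    | last => exact absurd hab (Fin.le_last b).not_gt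
    | cast a =>
      rw [appendLast_castSucc_val] at ha
      have ha' : (σ a : ℕ) < v := by split_ifs at ha <;> omega
      induction b using Fin.lastCases with
      | last => rwa [appendLast_lt_last_iff]
      | cast b =>
        rw [appendLast_castSucc_val] at hb
        rw [appendLast_lt_iff]
        exact h a b (by simpa using hab) ha' (by split_ifs at hb <;> omega)

lemma straddles_append_of_le {m : ℕ} (hm : m ≤ v) :
    Straddles (appendLast σ v) m ↔ LowIncreasing σ m := by
  constructor
  · intro h a b hab ha hb
    by_contra hlt
    have hne : σ a ≠ σ b := fun e => hab.ne (σ.injective e)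
    have := h a.castSucc b.castSucc (by simpa using hab)
      ((appendLast_lt_iff σ v b a).2 (lt_of_le_of_ne (not_lt.1 hlt) hne.symm))
      (by rw [appendLast_castSucc_val]; split_ifs <;> omega)
      (Fin.last n) (by simpa using hm)
    exact absurd this.2 (Fin.le_last _).not_gt
  · intro h a b hab hlt ha
    exfalso
    have := (lowIncreasing_append_of_le σ v hm).2 h a b hab ha (lt_trans hlt ha)
    exact absurd hlt this.not_gt

lemma straddles_append_succ {m : ℕ} (hv : v ≤ m) :
    Straddles (appendLast σ v) (m + 1) ↔ Straddles σ m ∧ Precedes σ v m := by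
  constructor
  · intro h
    constructor
    · intro a b hab hlt ha c hc
      have := h a.castSucc b.castSucc (by simpa using hab) ((appendLast_lt_iff σ v b a).2 hlt)
        (by rw [appendLast_castSucc_val]; split_ifs <;> omega) c.castSucc
        (by rw [appendLast_castSucc_val]; split_ifs <;> omega)
      simpa using this
    · intro a c hva ha hc
      have := h a.castSucc (Fin.last n) (Fin.castSucc_lt_last a)
        ((last_lt_appendLast_iff σ v a).2 hva)
        (by rw [appendLast_castSucc_val]; split_ifs <;> omega) c.castSucc
        (by rw [appendLast_castSucc_val]; split_ifs <;> omega)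
      simpa using this.1
  · rintro ⟨h, h'⟩ a b hab hlt ha c hc
    induction c using Fin.lastCases with
    | last => rw [appendLast_last] at hc; omega
    | cast c =>
      rw [appendLast_castSucc_val] at hc
      have hc' : m ≤ (σ c : ℕ) := by split_ifs at hc <;> omega
      induction a using Fin.lastCases with
      | last => exact absurd hab (Fin.le_last b).not_gt
      | cast a =>
        rw [appendLast_castSucc_val] at ha
        have ha' : (σ a : ℕ) < m := by split_ifs at ha <;> omega
        induction b using Fin.lastCases with
        | last =>
          rw [last_lt_appendLast_iff] at hlt
          exact ⟨by simpa using h' a c hlt ha' hc', Fin.castSucc_lt_last c⟩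
        | cast b =>
          simpa using h a b (by simpa using hab) ((appendLast_lt_iff σ v b a).1 hlt) ha' c hc'

lemma precedes_append_of_le {u m : ℕ} (hm : m ≤ v) :
    Precedes (appendLast σ v) u m ↔ Precedes σ u m := by
  constructor
  · intro h a c hu ha hc
    simpa using h a.castSucc c.castSucc (by rw [appendLast_castSucc_val]; split_ifs <;> omega)
      (by rw [appendLast_castSucc_val]; split_ifs <;> omega)
      (by rw [appendLast_castSucc_val]; split_ifs <;> omega)
  · intro h a c hu ha hc
    induction a using Fin.lastCases with
    | last => rw [appendLast_last] at ha; omega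
    | cast a =>
      induction c using Fin.lastCases with
      | last => exact Fin.castSucc_lt_last a
      | cast c =>
        rw [appendLast_castSucc_val] at hu ha hc
        simpa using h a c (by split_ifs at hu ha <;> omega) (by split_ifs at ha <;> omega)
          (by split_ifs at hc <;> omega)

lemma precedes_append_succ {u m : ℕ} (hu : v ≤ u) (hm : v ≤ m) :
    Precedes (appendLast σ v) (u + 1) (m + 1) ↔ Precedes σ u m := by
  constructor
  · intro h a c hu ha hc
    simpa using h a.castSucc c.castSucc (by rw [appendLast_castSucc_val]; split_ifs <;> omega)
      (by rw [appendLast_castSucc_val]; split_ifs <;> omega)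
      (by rw [appendLast_castSucc_val]; split_ifs <;> omega)
  · intro h a c hu' ha hc
    induction a using Fin.lastCases with
    | last => rw [appendLast_last] at hu'; omega
    | cast a =>
      induction c using Fin.lastCases with
      | last => exact Fin.castSucc_lt_last a
      | cast c =>
        rw [appendLast_castSucc_val] at hu' ha hc
        simpa using h a c (by split_ifs at hu' <;> omega) (by split_ifs at ha <;> omega)
          (by split_ifs at hc <;> omega)

lemma not_precedes_append {u m : ℕ} (hu : u ≤ v) (hv : v ≤ m) (hm : m < n) :
    ¬ Precedes (appendLast σ v) u (m + 1) := by
  intro h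
  obtain ⟨c, hc⟩ := exists_val_eq σ hm
  have := h (Fin.last n) c.castSucc (by simpa using hu) (by rw [appendLast_last]; omega)
    (by rw [appendLast_castSucc_val]; split_ifs <;> omega)
  exact absurd this (Fin.le_last _).not_gt

lemma precedes_self (u : ℕ) : Precedes σ u u := fun _ _ _ _ _ => by omega

lemma precedes_top (u : ℕ) : Precedes σ u n := fun _ c _ _ hc => absurd (σ c).2 (by omega)

lemma avoidsD_append : AvoidsD (appendLast σ v) ↔ AvoidsD σ ∧ Straddles σ v := by
  simp only [AvoidsD, PatternAvoids, contains_p4213, contains_p2143]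
  constructor
  · rintro ⟨h1, h2⟩
    refine ⟨⟨?_, ?_⟩, ?_⟩
    · rintro ⟨a, b, c, d, h⟩
      exact h1 ⟨a.castSucc, b.castSucc, c.castSucc, d.castSucc, by
        simpa only [appendLast_lt_iff, Fin.castSucc_lt_castSucc_iff] using h⟩
    · rintro ⟨a, b, c, d, h⟩
      exact h2 ⟨a.castSucc, b.castSucc, c.castSucc, d.castSucc, by
        simpa only [appendLast_lt_iff, Fin.castSucc_lt_castSucc_iff] using h⟩
    · intro a b hab hlt ha c hc
      have hca : c ≠ a := by rintro rfl; omega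
      have hcb : c ≠ b := by rintro rfl; have := Fin.lt_def.1 hlt; omega
      constructor
      · by_contra hle
        exact h1 ⟨c.castSucc, a.castSucc, b.castSucc, Fin.last n, by
          simp only [appendLast_lt_iff, Fin.castSucc_lt_castSucc_iff, appendLast_lt_last_iff,
            last_lt_appendLast_iff, Fin.castSucc_lt_last]
          exact ⟨lt_of_le_of_ne (not_lt.1 hle) hca, hab, trivial, hlt, ha, hc⟩⟩
      · by_contra hle
        exact h2 ⟨a.castSucc, b.castSucc, c.castSucc, Fin.last n, by
          simp only [appendLast_lt_iff, Fin.castSucc_lt_castSucc_iff, appendLast_lt_last_iff,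
            last_lt_appendLast_iff, Fin.castSucc_lt_last]
          exact ⟨hab, lt_of_le_of_ne (not_lt.1 hle) hcb.symm, trivial, hlt, ha, hc⟩⟩
  · rintro ⟨⟨h1, h2⟩, hs⟩
    constructor
    · rintro ⟨a, b, c, d, hab, hbc, hcd, h⟩
      obtain ⟨c, rfl⟩ := Fin.exists_castSucc_eq.2 (hcd.trans_le (Fin.le_last d)).ne
      obtain ⟨b, rfl⟩ := Fin.exists_castSucc_eq.2 (hbc.trans_le (Fin.le_last _)).ne
      obtain ⟨a, rfl⟩ := Fin.exists_castSucc_eq.2 (hab.trans_le (Fin.le_last _)).ne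
      rw [Fin.castSucc_lt_castSucc_iff] at hab hbc
      induction d using Fin.lastCases with
      | last =>
        simp only [appendLast_lt_iff, appendLast_lt_last_iff, last_lt_appendLast_iff] at h
        exact absurd (hs b c hbc h.1 h.2.1 a h.2.2).1 hab.not_gt
      | cast d =>
        simp only [appendLast_lt_iff, Fin.castSucc_lt_castSucc_iff] at h hcd
        exact h1 ⟨a, b, c, d, hab, hbc, hcd, h⟩
    · rintro ⟨a, b, c, d, hab, hbc, hcd, h⟩
      obtain ⟨c, rfl⟩ := Fin.exists_castSucc_eq.2 (hcd.trans_le (Fin.le_last d)).ne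
      obtain ⟨b, rfl⟩ := Fin.exists_castSucc_eq.2 (hbc.trans_le (Fin.le_last _)).ne
      obtain ⟨a, rfl⟩ := Fin.exists_castSucc_eq.2 (hab.trans_le (Fin.le_last _)).ne
      rw [Fin.castSucc_lt_castSucc_iff] at hab hbc
      induction d using Fin.lastCases with
      | last =>
        simp only [appendLast_lt_iff, appendLast_lt_last_iff, last_lt_appendLast_iff] at h
        exact absurd (hs a b hab h.1 h.2.1 c h.2.2).2 hbc.not_gt
      | cast d =>
        simp only [appendLast_lt_iff, Fin.castSucc_lt_castSucc_iff] at h hcd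
        exact h2 ⟨a, b, c, d, hab, hbc, hcd, h⟩

lemma avoidsH_iff : AvoidsH σ ↔ AvoidsD σ ∧ PatternAvoids σ p2413 := by
  unfold AvoidsH AvoidsD; tauto

lemma straddles_of_lowIncreasing {m : ℕ} (h : LowIncreasing σ m) : Straddles σ m :=
  fun a b hab hlt ha _ _ => absurd (h a b hab ha (lt_trans (Fin.lt_def.1 hlt) ha)) hlt.not_gt

lemma straddles_top : Straddles σ n := fun _ _ _ _ _ c hc => absurd (σ c).2 (by omega)

lemma avoidsH_append :
    AvoidsH (appendLast σ v) ↔ AvoidsH σ ∧ (LowIncreasing σ v ∨ (v : ℕ) = n) := by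
  rw [avoidsH_iff, avoidsH_iff, avoidsD_append]
  simp only [PatternAvoids, contains_p2413]
  constructor
  · rintro ⟨⟨h1, hs⟩, h2⟩
    refine ⟨⟨h1, ?_⟩, ?_⟩
    · rintro ⟨a, b, c, d, h⟩
      exact h2 ⟨a.castSucc, b.castSucc, c.castSucc, d.castSucc, by
        simpa only [appendLast_lt_iff, Fin.castSucc_lt_castSucc_iff] using h⟩
    · rw [or_iff_not_imp_right]
      intro hv a b hab ha hb
      by_contra hlt
      have hne : σ b ≠ σ a := fun e => hab.ne' (σ.injective e)
      have hlt' : σ b < σ a := lt_of_le_of_ne (not_lt.1 hlt) hne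
      obtain ⟨c, hc⟩ := exists_val_eq σ (m := v) (by omega)
      obtain ⟨hac, hcb⟩ := hs a b hab hlt' ha c hc.ge
      exact h2 ⟨a.castSucc, c.castSucc, b.castSucc, Fin.last n, by
          simp only [appendLast_lt_iff, Fin.castSucc_lt_castSucc_iff, appendLast_lt_last_iff,
            last_lt_appendLast_iff, Fin.castSucc_lt_last]
          exact ⟨hac, hcb, trivial, hlt', ha, hc.ge⟩⟩
  · rintro ⟨⟨h1, h2⟩, hv⟩
    refine ⟨⟨h1, ?_⟩, ?_⟩
    · rcases hv with hv | hv
      · exact straddles_of_lowIncreasing σ hv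
      · rw [hv]; exact straddles_top σ
    · rintro ⟨a, b, c, d, hab, hbc, hcd, h⟩
      obtain ⟨c, rfl⟩ := Fin.exists_castSucc_eq.2 (hcd.trans_le (Fin.le_last d)).ne
      obtain ⟨b, rfl⟩ := Fin.exists_castSucc_eq.2 (hbc.trans_le (Fin.le_last _)).ne
      obtain ⟨a, rfl⟩ := Fin.exists_castSucc_eq.2 (hab.trans_le (Fin.le_last _)).ne
      rw [Fin.castSucc_lt_castSucc_iff] at hab hbc
      induction d using Fin.lastCases with
      | last =>
        simp only [appendLast_lt_iff, appendLast_lt_last_iff, last_lt_appendLast_iff] at h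
        rcases hv with hv | hv
        · exact absurd (hv a c (hab.trans hbc) h.2.1 (lt_trans (Fin.lt_def.1 h.1) h.2.1)) h.1.not_gt
        · have := (σ b).2; omega
      | cast d =>
        simp only [appendLast_lt_iff, Fin.castSucc_lt_castSucc_iff] at h hcd
        exact h2 ⟨a, b, c, d, hab, hbc, hcd, h⟩

end Rules
/-! ### Shapes -/

/-- The data governing the sites of a permutation other than the identity: the values below `m`
are increasing exactly for `m ≤ j`, the permutation starts with its `i` smallest values, and the
sites are the `m ≤ j`, the `m` in `[b, b + s)` and `m = n`. -/
structure HasShape {n : ℕ} (σ : Equiv.Perm (Fin n)) (i j e b s : ℕ) : Prop where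
  i_le : i ≤ j
  le_e : j ≤ e
  e_le : e ≤ b
  lt_b : j < b
  le_n : b + s ≤ n
  low : ∀ m ≤ n, LowIncreasing σ m ↔ m ≤ j
  straddles : ∀ m ≤ n, Straddles σ m ↔ m ≤ j ∨ (b ≤ m ∧ m < b + s) ∨ m = n
  precedes_low : ∀ u m, u < m → m ≤ j → (Precedes σ u m ↔ m ≤ i)
  precedes_special : ∀ u m, u ≤ m → b ≤ m → m < b + s → (Precedes σ u m ↔ e ≤ u)

/-- The site data of an identity permutation. -/
structure IsTrivialShape {n : ℕ} (σ : Equiv.Perm (Fin n)) : Prop where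
  low : ∀ m, LowIncreasing σ m
  precedes : ∀ u m, Precedes σ u m

lemma isTrivialShape_zero (σ : Equiv.Perm (Fin 0)) : IsTrivialShape σ :=
  ⟨fun _ a => a.elim0, fun _ _ a => a.elim0⟩

section Transitions

variable {n : ℕ} {σ : Equiv.Perm (Fin n)} {i j e b s : ℕ}

/-- A shape of the appended permutation may be checked on the old one. -/
lemma hasShape_append {v : Fin (n + 1)} {i' j' e' b' s' : ℕ}
    (h1 : i' ≤ j') (h2 : j' ≤ e') (h3 : e' ≤ b') (h4 : j' < b') (h5 : b' + s' ≤ n + 1)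
    (low_le : ∀ m ≤ (v : ℕ), LowIncreasing σ m ↔ m ≤ j')
    (low_gt : ∀ m ≤ n, v ≤ m → (LowIncreasing σ m ∧ m = v ↔ m + 1 ≤ j'))
    (str_le : ∀ m ≤ (v : ℕ), LowIncreasing σ m ↔ m ≤ j' ∨ (b' ≤ m ∧ m < b' + s'))
    (str_gt : ∀ m ≤ n, v ≤ m → (Straddles σ m ∧ Precedes σ v m ↔
      m + 1 ≤ j' ∨ (b' ≤ m + 1 ∧ m + 1 < b' + s') ∨ m = n))
    (pre_le : ∀ u m, u < m → m ≤ j' → m ≤ v → (Precedes σ u m ↔ m ≤ i'))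
    (pre_gt : (v : ℕ) < j' → (v : ℕ) < n ∧ j' = v + 1 ∧ i' ≤ v)
    (spec_gt : s' ≠ 0 → (v : ℕ) < b' ∧ e' = v + 1)
    (spec : ∀ u m : ℕ, v ≤ u → u ≤ m → b' ≤ m + 1 → m + 1 < b' + s' → Precedes σ u m) :
    HasShape (appendLast σ v) i' j' e' b' s' where
  i_le := h1
  le_e := h2
  e_le := h3
  lt_b := h4
  le_n := h5
  low m hm := by
    rcases le_or_gt m v with h | h
    · rw [lowIncreasing_append_of_le σ v h, low_le m h]
    · obtain ⟨m, rfl⟩ : ∃ k, m = k + 1 := ⟨m - 1, by omega⟩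
      rw [lowIncreasing_append_succ σ v (by omega) (by omega), low_gt m (by omega) (by omega)]
  straddles m hm := by
    rcases le_or_gt m v with h | h
    · rw [straddles_append_of_le σ v h, str_le m h]
      have := v.2
      omega
    · obtain ⟨m, rfl⟩ : ∃ k, m = k + 1 := ⟨m - 1, by omega⟩
      rw [straddles_append_succ σ v (by omega), str_gt m (by omega) (by omega)]
      omega
  precedes_low u m hu hm := by
    rcases le_or_gt m v with h | h
    · rw [precedes_append_of_le σ v h, pre_le u m hu hm h]
    · obtain ⟨hv, hj, hi⟩ := pre_gt (by omega)
      obtain rfl : m = v + 1 := by omega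
      exact iff_of_false (not_precedes_append σ v (by omega) le_rfl hv) (by omega)
  precedes_special u m hu hb hm := by
    obtain ⟨hv, he⟩ := spec_gt (by omega)
    obtain ⟨m, rfl⟩ : ∃ k, m = k + 1 := ⟨m - 1, by omega⟩
    rcases le_or_gt u v with h | h
    · exact iff_of_false (not_precedes_append σ v h (by omega) (by omega)) (by omega)
    · obtain ⟨u, rfl⟩ : ∃ k, u = k + 1 := ⟨u - 1, by omega⟩
      rw [precedes_append_succ σ v (by omega) (by omega)]
      exact iff_of_true (spec u m (by omega) (by omega) hb hm) (by omega)

lemma IsTrivialShape.append_last (h : IsTrivialShape σ) {v : Fin (n + 1)} (hv : (v : ℕ) = n) :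
    IsTrivialShape (appendLast σ v) where
  low m := by
    rcases le_or_gt m v with hm | hm
    · exact (lowIncreasing_append_of_le σ v hm).2 (h.low m)
    · intro a b hab _ _
      have := (lowIncreasing_append_succ σ v (m := n) (by omega) le_rfl).2 ⟨h.low n, hv.symm⟩
      exact this a b hab (Fin.is_lt _) (Fin.is_lt _)
  precedes u m := by
    rcases le_or_gt m v with hm | hm
    · exact (precedes_append_of_le σ v hm).2 (h.precedes u m)
    · intro a c _ _ hc
      have := (appendLast σ v c).2
      omega

lemma IsTrivialShape.append (h : IsTrivialShape σ) {v : Fin (n + 1)} (hv : (v : ℕ) < n) :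
    HasShape (appendLast σ v) v (v + 1) (v + 1) (v + 2) (n - 1 - v) := by
  have hs : ∀ m, Straddles σ m := fun m => straddles_of_lowIncreasing σ (h.low m)
  refine hasShape_append (by omega) (by omega) (by omega) (by omega) (by omega)
    ?_ ?_ ?_ ?_ ?_ ?_ ?_ ?_
  all_goals simp only [h.low, h.precedes, hs, true_and, true_iff, and_true, implies_true]
  all_goals intros; omega

lemma HasShape.append_prefix (h : HasShape σ i j e b s) {v : Fin (n + 1)} (hv : (v : ℕ) < i) :
    HasShape (appendLast σ v) v (v + 1) (v + 1) (v + 2) (i - v) := by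
  obtain ⟨h1, h2, h3, h4, h5, low, str, pl, ps⟩ := h
  refine hasShape_append (by omega) (by omega) (by omega) (by omega) (by omega)
    (fun m hm => ?_) (fun m hm hvm => ?_) (fun m hm => ?_) (fun m hm hvm => ?_)
    (fun u m hu hm hvm => ?_) (fun _ => by omega) (fun _ => by omega) (fun u m hu hm hb hb' => ?_)
  · rw [low m (by omega)]; omega
  · rw [low m (by omega)]; omega
  · rw [low m (by omega)]; omega
  · rw [str m hm]
    rcases hvm.eq_or_lt with rfl | hlt
    · simp only [precedes_self, and_true]; omega
    · rcases le_or_gt m j with hmj | hmj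
      · rw [pl v m hlt hmj]; omega
      · by_cases hsp : b ≤ m ∧ m < b + s
        · rw [ps v m hvm hsp.1 hsp.2]; omega
        · by_cases hmn : m = n
          · subst hmn; exact iff_of_true ⟨by omega, precedes_top σ _⟩ (by omega)
          · omega
  · rw [pl u m hu (by omega)]; omega
  · rcases hm.eq_or_lt with rfl | hlt
    · exact precedes_self σ u
    · exact (pl u m hlt (by omega)).2 (by omega)

lemma HasShape.append_low (h : HasShape σ i j e b s) {v : Fin (n + 1)} (hi : i ≤ v)
    (hv : (v : ℕ) ≤ j) (he : (v : ℕ) < e) :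
    HasShape (appendLast σ v) i (v + 1) (v + 1) (v + 2) 0 := by
  obtain ⟨h1, h2, h3, h4, h5, low, str, pl, ps⟩ := h
  refine hasShape_append (by omega) (by omega) (by omega) (by omega) (by omega)
    (fun m hm => ?_) (fun m hm hvm => ?_) (fun m hm => ?_) (fun m hm hvm => ?_)
    (fun u m hu hm hvm => ?_) (fun _ => by omega) (fun _ => by omega) (fun u m hu hm hb hb' => ?_)
  · rw [low m (by omega)]; omega
  · rw [low m (by omega)]; omega
  · rw [low m (by omega)]; omega
  · rw [str m hm]
    rcases hvm.eq_or_lt with rfl | hlt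
    · simp only [precedes_self, and_true]; omega
    · rcases le_or_gt m j with hmj | hmj
      · rw [pl v m hlt hmj]; omega
      · by_cases hsp : b ≤ m ∧ m < b + s
        · rw [ps v m hvm hsp.1 hsp.2]; omega
        · by_cases hmn : m = n
          · subst hmn; exact iff_of_true ⟨by omega, precedes_top σ _⟩ (by omega)
          · omega
  · rw [pl u m hu (by omega)]
  · omega

lemma HasShape.append_exact (h : HasShape σ i j j b s) {v : Fin (n + 1)} (hv : (v : ℕ) = j) :
    HasShape (appendLast σ v) i (j + 1) (j + 1) (b + 1) s := by
  obtain ⟨h1, h2, h3, h4, h5, low, str, pl, ps⟩ := h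
  refine hasShape_append (by omega) (by omega) (by omega) (by omega) (by omega)
    (fun m hm => ?_) (fun m hm hvm => ?_) (fun m hm => ?_) (fun m hm hvm => ?_)
    (fun u m hu hm hvm => ?_) (fun _ => by omega) (fun _ => by omega) (fun u m hu hm hb hb' => ?_)
  · rw [low m (by omega)]; omega
  · rw [low m (by omega)]; omega
  · rw [low m (by omega)]; omega
  · rw [str m hm]
    rcases hvm.eq_or_lt with rfl | hlt
    · simp only [precedes_self, and_true]; omega
    · by_cases hsp : b ≤ m ∧ m < b + s
      · rw [ps v m hvm hsp.1 hsp.2]; omega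
      · by_cases hmn : m = n
        · subst hmn; exact iff_of_true ⟨by omega, precedes_top σ _⟩ (by omega)
        · omega
  · rw [pl u m hu (by omega)]
  · exact (ps u m hm (by omega) (by omega)).2 (by omega)

lemma HasShape.append_special (h : HasShape σ i j e b s) {v : Fin (n + 1)} (hb : b ≤ v)
    (hv : (v : ℕ) < b + s) :
    HasShape (appendLast σ v) i j (v + 1) (v + 1) (b + s - v) := by
  obtain ⟨h1, h2, h3, h4, h5, low, str, pl, ps⟩ := h
  refine hasShape_append (by omega) (by omega) (by omega) (by omega) (by omega)
    (fun m hm => ?_) (fun m hm hvm => ?_) (fun m hm => ?_) (fun m hm hvm => ?_)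
    (fun u m hu hm hvm => ?_) (fun _ => by omega) (fun _ => by omega) (fun u m hu hm hb hb' => ?_)
  · rw [low m (by omega)]
  · rw [low m (by omega)]; omega
  · rw [low m (by omega)]; omega
  · rw [str m hm]
    by_cases hsp : b ≤ m ∧ m < b + s
    · rw [ps v m hvm hsp.1 hsp.2]; omega
    · by_cases hmn : m = n
      · subst hmn; exact iff_of_true ⟨by omega, precedes_top σ _⟩ (by omega)
      · omega
  · rw [pl u m hu (by omega)]
  · exact (ps u m hm (by omega) (by omega)).2 (by omega)

lemma HasShape.append_top (h : HasShape σ i j e b s) {v : Fin (n + 1)} (hv : (v : ℕ) = n) :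
    HasShape (appendLast σ v) i j j (j + 1) 0 := by
  obtain ⟨h1, h2, h3, h4, h5, low, str, pl, ps⟩ := h
  refine hasShape_append (by omega) (by omega) (by omega) (by omega) (by omega)
    (fun m hm => ?_) (fun m hm hvm => ?_) (fun m hm => ?_) (fun m hm hvm => ?_)
    (fun u m hu hm hvm => ?_) (fun _ => by omega) (fun _ => by omega) (fun u m hu hm hb hb' => ?_)
  · rw [low m (by omega)]
  · rw [low m (by omega)]; omega
  · rw [low m (by omega)]; omega
  · obtain rfl : m = n := by omega
    exact iff_of_true ⟨straddles_top σ, precedes_top σ _⟩ (by omega)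
  · rw [pl u m hu (by omega)]
  · omega

end Transitions
/-! ### Generating series -/

/-- The coefficients of the power series `Y` with `Y = 1 + 3 X Y + X² Y²`. -/
noncomputable def motz : ℕ → ℝ
  | 0 => 1
  | n + 1 => 3 * motz n + ∑ k : Fin n, motz k * motz (n - 1 - k)
decreasing_by all_goals omega

/-- The power series `y` with `y = X (1 + 3 y + y²)`. -/
noncomputable def ySeries : ℝ⟦X⟧ := X * PowerSeries.mk motz

lemma motz_succ (n : ℕ) : motz (n + 1) = 3 * motz n +
    ∑ k ∈ Finset.range n, motz k * motz (n - 1 - k) := by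
  rw [motz, Fin.sum_univ_eq_sum_range (fun k => motz k * motz (n - 1 - k))]

lemma mk_motz_eq : PowerSeries.mk motz
    = 1 + X * (3 * PowerSeries.mk motz + X * PowerSeries.mk motz ^ 2) := by
  ext n
  cases n with
  | zero => simp [motz]
  | succ n =>
    rw [coeff_mk, motz_succ, map_add, coeff_succ_X_mul, map_add,
      show (3 : ℝ⟦X⟧) = C (3 : ℝ) from rfl, coeff_C_mul, coeff_mk, coeff_one, if_neg (by omega),
      zero_add]
    congr 1
    cases n with
    | zero => simp
    | succ n =>
      rw [coeff_succ_X_mul, pow_two, coeff_mul, Finset.Nat.sum_antidiagonal_eq_sum_range_succ_mk]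
      simp

lemma ySeries_eq : ySeries = X * (1 + 3 * ySeries + ySeries ^ 2) := by
  unfold ySeries
  linear_combination X * mk_motz_eq

/-- The series `1 + y`. -/
noncomputable def qSeries : ℝ⟦X⟧ := 1 + ySeries

/-- The geometric series `1 / (1 - X)`. -/
noncomputable def geom : ℝ⟦X⟧ := (1 - X)⁻¹

/-- The generating series of the permutations avoiding 4213, 2413 and 2143. -/
noncomputable def hSeries : ℝ⟦X⟧ := (1 - X * qSeries)⁻¹

lemma geom_mul : (1 - X) * geom = 1 := PowerSeries.mul_inv_cancel _ (by simp)

lemma hSeries_mul : (1 - X * qSeries) * hSeries = 1 := PowerSeries.mul_inv_cancel _ (by simp)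

lemma X_mul_qSeries_sq : X * qSeries ^ 2 * geom = ySeries := by
  unfold qSeries
  linear_combination ySeries * geom_mul - geom * ySeries_eq

/-- The generating series of the descendants of a permutation with label `k` that has no special
sites. -/
noncomputable def wSeries (k : ℕ) : ℝ⟦X⟧ := qSeries ^ (k + 1) * geom

lemma X_mul_sum_wSeries (k : ℕ) :
    X * ∑ v ∈ Finset.range k, wSeries (v + 1) = qSeries ^ k - 1 := by
  induction k with
  | zero => simp
  | succ k ih =>
    rw [Finset.sum_range_succ, mul_add, ih, wSeries, pow_succ _ (k + 1), pow_succ _ k]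
    have h : qSeries = 1 + ySeries := rfl
    linear_combination qSeries ^ k * X_mul_qSeries_sq - qSeries ^ k * h

lemma wSeries_eq (k : ℕ) : wSeries k
    = 1 + X * (∑ v ∈ Finset.range (k + 1), wSeries (v + 1) + wSeries k) := by
  rw [mul_add, X_mul_sum_wSeries, wSeries]
  linear_combination qSeries ^ (k + 1) * geom_mul

lemma hSeries_trivial_eq (n : ℕ) : qSeries ^ n * hSeries
    = 1 + X * (∑ v ∈ Finset.range n, wSeries (v + 1) + qSeries ^ (n + 1) * hSeries) := by
  rw [mul_add, X_mul_sum_wSeries]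
  linear_combination qSeries ^ n * hSeries_mul

/-! ### Counting the permutations avoiding 4213, 2413 and 2143 -/

lemma coeff_succ_of_eq {F G : ℝ⟦X⟧} (h : F = 1 + X * G) (r : ℕ) :
    coeff (r + 1) F = coeff r G := by
  rw [h, map_add, coeff_succ_X_mul, coeff_one, if_neg (by omega), zero_add]

lemma coeff_zero_of_eq {F G : ℝ⟦X⟧} (h : F = 1 + X * G) : coeff 0 F = 1 := by
  rw [h]; simp

lemma cast_descendants_succ (P : ∀ n, Equiv.Perm (Fin n) → Prop) (r : ℕ) {n : ℕ}
    (σ : Equiv.Perm (Fin n)) {g : ℕ → ℝ⟦X⟧}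
    (h : ∀ v : Fin (n + 1), (descendants P r (appendLast σ v) : ℝ) = coeff r (g v)) :
    (descendants P (r + 1) σ : ℝ) = coeff r (∑ v ∈ Finset.range (n + 1), g v) := by
  simp only [descendants, Nat.cast_sum, h]
  rw [map_sum, Fin.sum_univ_eq_sum_range (fun v => coeff r (g v))]

lemma sum_range_sites {j b s n : ℕ} (hb : j < b) (hn : b + s ≤ n) (a c : ℕ → ℝ⟦X⟧) (t : ℝ⟦X⟧) :
    ∑ v ∈ Finset.range (n + 1), (if v ≤ j then a v else if b ≤ v ∧ v < b + s then c v
      else if v = n then t else 0)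
    = ∑ v ∈ Finset.range (j + 1), a v + ∑ p ∈ Finset.range s, c (b + p) + t := by
  rw [Finset.sum_range_succ, if_neg (by omega), if_neg (by omega), if_pos rfl,
    ← Finset.sum_range_add_sum_Ico _ (show j + 1 ≤ n by omega),
    ← Finset.sum_Ico_consecutive _ (show j + 1 ≤ b by omega) (show b ≤ n by omega),
    ← Finset.sum_Ico_consecutive _ (show b ≤ b + s by omega) hn,
    Finset.sum_Ico_eq_sum_range _ b (b + s), Nat.add_sub_cancel_left]
  congr 1
  congr 1
  · refine Finset.sum_congr rfl fun v hv => ?_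
    rw [Finset.mem_range] at hv
    rw [if_pos (by omega)]
  · rw [Finset.sum_eq_zero, Finset.sum_eq_zero (s := Finset.Ico (b + s) n), zero_add, add_zero]
    · refine Finset.sum_congr rfl fun p hp => ?_
      rw [Finset.mem_range] at hp
      rw [if_neg (by omega), if_pos (by omega)]
    · intro v hv
      rw [Finset.mem_Ico] at hv
      rw [if_neg (by omega), if_neg (by omega), if_neg (by omega)]
    · intro v hv
      rw [Finset.mem_Ico] at hv
      rw [if_neg (by omega), if_neg (by omega), if_neg (by omega)]

lemma avoidsH_of_append (n : ℕ) (σ : Equiv.Perm (Fin n)) (v : Fin (n + 1))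
    (h : AvoidsH (appendLast σ v)) : AvoidsH σ := ((avoidsH_append σ v).1 h).1

lemma descendants_avoidsH_of_low (r : ℕ) : ∀ {n : ℕ} {σ : Equiv.Perm (Fin n)} {j : ℕ},
    AvoidsH σ → j < n → (∀ m ≤ n, LowIncreasing σ m ↔ m ≤ j) →
    (descendants (fun _ => AvoidsH) r σ : ℝ) = coeff r (wSeries j) := by
  induction r with
  | zero =>
    intro n σ j hσ _ _
    rw [coeff_zero_of_eq (wSeries_eq j)]
    simp [descendants, hσ]
  | succ r ih =>
    intro n σ j hσ hj low
    rw [cast_descendants_succ (g := fun v => if v ≤ j then wSeries (v + 1)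
      else if j + 1 ≤ v ∧ v < j + 1 + 0 then 0 else if v = n then wSeries j else 0),
      sum_range_sites (Nat.lt_succ_self j) (by omega), coeff_succ_of_eq (wSeries_eq j)]
    · simp
    · intro v
      have hv := v.2
      have hlow : ∀ m ≤ n + 1, LowIncreasing (appendLast σ v) m ↔
          m ≤ if (v : ℕ) ≤ j then (v : ℕ) + 1 else j := by
        intro m hm
        rcases le_or_gt m v with h | h
        · rw [lowIncreasing_append_of_le σ v h, low m (by omega)]
          split_ifs <;> omega
        · obtain ⟨m, rfl⟩ : ∃ k, m = k + 1 := ⟨m - 1, by omega⟩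
          rw [lowIncreasing_append_succ σ v (by omega) (by omega), low m (by omega)]
          split_ifs <;> omega
      rw [if_neg (c := _ ∧ _) (by omega)]
      split_ifs with h1 h2
      · simp only [if_pos h1] at hlow
        exact ih ((avoidsH_append σ v).2 ⟨hσ, Or.inl ((low v (by omega)).2 h1)⟩) (by omega) hlow
      · simp only [if_neg h1] at hlow
        exact ih ((avoidsH_append σ v).2 ⟨hσ, Or.inr h2⟩) (by omega) hlow
      · rw [descendants_eq_zero avoidsH_of_append, map_zero, Nat.cast_zero]
        rw [avoidsH_append, low v (by omega)]
        tauto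

lemma descendants_avoidsH_of_trivial (r : ℕ) : ∀ {n : ℕ} {σ : Equiv.Perm (Fin n)},
    AvoidsH σ → IsTrivialShape σ →
    (descendants (fun _ => AvoidsH) r σ : ℝ) = coeff r (qSeries ^ n * hSeries) := by
  induction r with
  | zero =>
    intro n σ hσ _
    rw [coeff_zero_of_eq (hSeries_trivial_eq n)]
    simp [descendants, hσ]
  | succ r ih =>
    intro n σ hσ h
    rw [cast_descendants_succ (g := fun v => if v < n then wSeries (v + 1)
      else qSeries ^ (n + 1) * hSeries), coeff_succ_of_eq (hSeries_trivial_eq n),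
      Finset.sum_range_succ, if_neg (lt_irrefl n)]
    · congr 2
      refine Finset.sum_congr rfl fun v hv => ?_
      rw [if_pos (Finset.mem_range.1 hv)]
    · intro v
      have hav := (avoidsH_append σ v).2 ⟨hσ, Or.inl (h.low v)⟩
      split_ifs with hv
      · have hs := h.append hv
        exact descendants_avoidsH_of_low r hav (by omega) hs.low
      · exact ih hav (h.append_last (by omega))

lemma hCount_eq_coeff (n : ℕ) : (hCount n : ℝ) = coeff n hSeries := by
  rw [hCount, card_eq_descendants (fun _ => AvoidsH),
    descendants_avoidsH_of_trivial n _ (isTrivialShape_zero _), pow_zero, one_mul]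
  refine ⟨?_, ?_, ?_⟩ <;> exact fun ⟨f, _⟩ => (f 0).elim0

/-! ### Counting the permutations avoiding 4213 and 2143 -/

/-- The factor contributed by `s` special sites of a tight shape. -/
noncomputable def kSeries (s : ℕ) : ℝ⟦X⟧ := 1 + (geom ^ s - 1) * hSeries

/-- The pair of partial sums `∑ A_v` and `∑ A_v / (1 - X) ^ (n - v)` over `v < n`, where `A` is
`aSeries`. -/
noncomputable def partialSums : ℕ → ℝ⟦X⟧ × ℝ⟦X⟧
  | 0 => (0, 0)
  | n + 1 =>
    let p := partialSums n
    let a := 1 + ySeries * ((1 - hSeries) * p.1 + hSeries * p.2)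
    (p.1 + a, geom * (p.2 + a))

/-- The factor contributed by a prefix of `n` sites. -/
noncomputable def aSeries (n : ℕ) : ℝ⟦X⟧ :=
  1 + ySeries * ((1 - hSeries) * (partialSums n).1 + hSeries * (partialSums n).2)

lemma partialSums_fst (n : ℕ) : (partialSums n).1 = ∑ v ∈ Finset.range n, aSeries v := by
  induction n with
  | zero => rfl
  | succ n ih => rw [Finset.sum_range_succ, ← ih]; rfl

lemma partialSums_snd (n : ℕ) :
    (partialSums n).2 = ∑ v ∈ Finset.range n, aSeries v * geom ^ (n - v) := by
  induction n with
  | zero => rfl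
  | succ n ih =>
    have h : ∑ v ∈ Finset.range n, aSeries v * geom ^ (n + 1 - v) = geom * (partialSums n).2 := by
      rw [ih, Finset.mul_sum]
      refine Finset.sum_congr rfl fun v hv => ?_
      rw [Finset.mem_range] at hv
      rw [show n + 1 - v = n - v + 1 by omega]
      ring
    rw [Finset.sum_range_succ, h, show n + 1 - n = 1 by omega, pow_one, mul_comm (aSeries n),
      ← mul_add]
    rfl

lemma X_mul_wSeries_one : X * wSeries 1 = ySeries := by
  rw [wSeries, ← X_mul_qSeries_sq]; ring

lemma X_mul_sum_prefix (i : ℕ) :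
    X * ∑ v ∈ Finset.range i, aSeries v * wSeries 1 * kSeries (i - v) = aSeries i - 1 := by
  have h : ∑ v ∈ Finset.range i, aSeries v * wSeries 1 * kSeries (i - v)
      = wSeries 1 * ((1 - hSeries) * (partialSums i).1 + hSeries * (partialSums i).2) := by
    rw [partialSums_fst, partialSums_snd, Finset.mul_sum, Finset.mul_sum, ← Finset.sum_add_distrib,
      Finset.mul_sum]
    refine Finset.sum_congr rfl fun v _ => ?_
    rw [kSeries]; ring
  rw [h, aSeries]
  linear_combination ((1 - hSeries) * (partialSums i).1 + hSeries * (partialSums i).2)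
    * X_mul_wSeries_one

lemma X_mul_sum_trivial (n : ℕ) :
    X * ∑ v ∈ Finset.range n, aSeries v * wSeries 1 * kSeries (n - 1 - v)
      = ySeries * ((1 - hSeries) * (partialSums n).1 + hSeries * (1 - X) * (partialSums n).2) := by
  have h : ∑ v ∈ Finset.range n, aSeries v * wSeries 1 * kSeries (n - 1 - v)
      = wSeries 1 * ((1 - hSeries) * (partialSums n).1
        + hSeries * (1 - X) * (partialSums n).2) := by
    rw [partialSums_fst, partialSums_snd, Finset.mul_sum, Finset.mul_sum, ← Finset.sum_add_distrib,
      Finset.mul_sum]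
    refine Finset.sum_congr rfl fun v hv => ?_
    rw [Finset.mem_range] at hv
    rw [kSeries, show n - v = n - 1 - v + 1 by omega, pow_succ]
    linear_combination -aSeries v * wSeries 1 * hSeries * geom ^ (n - 1 - v) * geom_mul
  rw [h]
  linear_combination ((1 - hSeries) * (partialSums n).1 + hSeries * (1 - X) * (partialSums n).2)
    * X_mul_wSeries_one

lemma X_mul_sum_geom_pow (s : ℕ) : X * ∑ p ∈ Finset.range s, geom ^ (s - p) = geom ^ s - 1 := by
  induction s with
  | zero => simp
  | succ s ih =>
    rw [Finset.sum_range_succ', Nat.sub_zero, mul_add]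
    simp only [Nat.add_sub_add_right]
    rw [ih, pow_succ]
    linear_combination -geom ^ s * geom_mul

open Classical in
/-- The factor contributed by `s` special sites. -/
noncomputable def specialFactor (tight : Prop) (s : ℕ) : ℝ⟦X⟧ :=
  if tight then kSeries s else geom ^ s

/-- The generating series of the descendants of a permutation with a given shape. -/
noncomputable def shapeSeries (i j : ℕ) (tight : Prop) (s : ℕ) : ℝ⟦X⟧ :=
  aSeries i * wSeries (j - i) * specialFactor tight s

lemma kSeries_zero : kSeries 0 = 1 := by simp [kSeries]

lemma specialFactor_zero (p : Prop) : specialFactor p 0 = 1 := by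
  unfold specialFactor; split_ifs <;> simp [kSeries_zero]

lemma wSeries_mul_kSeries (k s : ℕ) : wSeries k * kSeries s = qSeries ^ k
    + X * wSeries (k + 1) * kSeries s + wSeries k * (geom ^ s - 1) + X * wSeries k := by
  have hq : qSeries = 1 + ySeries := rfl
  have h1 : X * wSeries (k + 1) = qSeries ^ k * ySeries := by
    rw [← X_mul_qSeries_sq, wSeries]; ring
  rw [h1, wSeries, kSeries, pow_succ]
  have h2 : qSeries * geom - ySeries = 1 + X * qSeries * geom := by
    linear_combination qSeries * geom_mul + hq
  have h3 : (qSeries * geom - ySeries) * hSeries = qSeries * geom := by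
    rw [← X_mul_qSeries_sq]
    linear_combination qSeries * geom * hSeries_mul
  linear_combination qSeries ^ k * h2 + qSeries ^ k * (geom ^ s - 1) * h3

lemma wSeries_mul_geom_pow (k s : ℕ) : wSeries k * geom ^ s = qSeries ^ k
    + X * wSeries (k + 1) + wSeries k * (geom ^ s - 1) + X * wSeries k := by
  have hq : qSeries = 1 + ySeries := rfl
  have h1 : X * wSeries (k + 1) = qSeries ^ k * ySeries := by
    rw [← X_mul_qSeries_sq, wSeries]; ring
  rw [h1, wSeries, pow_succ]
  linear_combination qSeries ^ (k + 1) * geom_mul + qSeries ^ k * hq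

open Classical in
lemma shapeSeries_eq {i j : ℕ} (hij : i ≤ j) (tight : Prop) (s : ℕ) : shapeSeries i j tight s
    = 1 + X * (∑ v ∈ Finset.range (j + 1),
        (if v < i then shapeSeries v (v + 1) True (i - v)
          else shapeSeries i (v + 1) True (if v = j ∧ tight then s else 0))
      + ∑ p ∈ Finset.range s, shapeSeries i j False (s - p) + shapeSeries i j True 0) := by
  obtain ⟨k, rfl⟩ := Nat.exists_eq_add_of_le hij
  have e1 : ∑ v ∈ Finset.range (i + k + 1),
        (if v < i then shapeSeries v (v + 1) True (i - v)
          else shapeSeries i (v + 1) True (if v = i + k ∧ tight then s else 0))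
      = ∑ v ∈ Finset.range i, aSeries v * wSeries 1 * kSeries (i - v)
        + aSeries i * ∑ l ∈ Finset.range k, wSeries (l + 1)
        + aSeries i * wSeries (k + 1) * kSeries (if tight then s else 0) := by
    rw [Finset.sum_range_succ, Finset.sum_range_add, if_neg (by omega), Finset.mul_sum]
    congr 1
    · congr 1
      · refine Finset.sum_congr rfl fun v hv => ?_
        rw [if_pos (Finset.mem_range.1 hv), shapeSeries, specialFactor, if_pos trivial,
          Nat.add_sub_cancel_left]
      · refine Finset.sum_congr rfl fun v hv => ?_
        have := Finset.mem_range.1 hv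
        rw [if_neg (by omega), if_neg (fun h => by omega), shapeSeries, specialFactor_zero,
          show i + v + 1 - i = v + 1 by omega, mul_one]
    · rw [shapeSeries, specialFactor, if_pos trivial, show i + k + 1 - i = k + 1 by omega]
      simp
  have e2 : ∑ p ∈ Finset.range s, shapeSeries i (i + k) False (s - p)
      = aSeries i * wSeries k * ∑ p ∈ Finset.range s, geom ^ (s - p) := by
    rw [Finset.mul_sum]
    refine Finset.sum_congr rfl fun p _ => ?_
    rw [shapeSeries, specialFactor, if_neg not_false, Nat.add_sub_cancel_left]
  rw [e1, e2, shapeSeries, shapeSeries, specialFactor_zero, Nat.add_sub_cancel_left]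
  have h1 := X_mul_sum_prefix i
  have h2 := X_mul_sum_wSeries k
  have h3 := X_mul_sum_geom_pow s
  by_cases hx : tight
  · rw [specialFactor, if_pos hx, if_pos hx]
    linear_combination aSeries i * wSeries_mul_kSeries k s - h1 - aSeries i * h2
      - aSeries i * wSeries k * h3
  · rw [specialFactor, if_neg hx, if_neg hx, kSeries_zero]
    linear_combination aSeries i * wSeries_mul_geom_pow k s - h1 - aSeries i * h2
      - aSeries i * wSeries k * h3

lemma avoidsD_of_append (n : ℕ) (σ : Equiv.Perm (Fin n)) (v : Fin (n + 1))
    (h : AvoidsD (appendLast σ v)) : AvoidsD σ := ((avoidsD_append σ v).1 h).1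

open Classical in
lemma descendants_avoidsD_of_hasShape (r : ℕ) : ∀ {n : ℕ} {σ : Equiv.Perm (Fin n)}
    {i j e b s : ℕ}, AvoidsD σ → HasShape σ i j e b s →
    (descendants (fun _ => AvoidsD) r σ : ℝ) = coeff r (shapeSeries i j (e = j) s) := by
  induction r with
  | zero =>
    intro n σ i j e b s hσ h
    rw [coeff_zero_of_eq (shapeSeries_eq h.i_le _ s)]
    simp [descendants, hσ]
  | succ r ih =>
    intro n σ i j e b s hσ h
    rw [cast_descendants_succ (g := fun v => if v ≤ j then
        (if v < i then shapeSeries v (v + 1) True (i - v)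
          else shapeSeries i (v + 1) True (if v = j ∧ e = j then s else 0))
      else if b ≤ v ∧ v < b + s then shapeSeries i j False (b + s - v)
      else if v = n then shapeSeries i j True 0 else 0),
      sum_range_sites h.lt_b h.le_n, coeff_succ_of_eq (shapeSeries_eq h.i_le _ s)]
    · simp only [Nat.add_sub_add_left]
      congr!
    · intro v
      have hv := v.2
      have hij := h.i_le
      have hje := h.le_e
      have hjb := h.lt_b
      have hstr := h.straddles v (by omega)
      by_cases hs : Straddles σ v
      · have hav := (avoidsD_append σ v).2 ⟨hσ, hs⟩
        have hcases := hstr.1 hs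
        split_ifs with h1 h2 h3 h4 h5
        · rw [ih hav (h.append_prefix h2), eq_self_iff_true]
        · obtain ⟨h3, rfl⟩ := h3
          rw [ih hav (h.append_exact h3), eq_self_iff_true, h3]
        · rw [ih hav (h.append_low (by omega) h1 (by omega)), eq_self_iff_true]
        · rw [ih hav (h.append_special h4.1 h4.2), eq_false (by omega : ¬ (v : ℕ) + 1 = j)]
        · rw [ih hav (h.append_top h5), eq_self_iff_true]
        · omega
      · have hcases := mt hstr.2 hs
        rw [if_neg (by omega), if_neg (by omega), if_neg (by omega),
          descendants_eq_zero avoidsD_of_append, map_zero, Nat.cast_zero]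
        rw [avoidsD_append]
        tauto

/-- The denominator of `dSeries`. -/
noncomputable def dDenom : ℝ⟦X⟧ :=
  1 - 2 * X + 2 * X ^ 2 - 2 * X * (1 - 2 * X) * ySeries

/-- The generating series of the permutations avoiding 4213 and 2143. -/
noncomputable def dSeries : ℝ⟦X⟧ := (1 - X) * dDenom⁻¹

lemma dSeries_mul : dDenom * dSeries = 1 - X := by
  have h : dDenom * dDenom⁻¹ = 1 := PowerSeries.mul_inv_cancel _ (by simp [dDenom])
  rw [dSeries]
  linear_combination (1 - X) * h

/-- The coefficient of the geometric partial sum in the series of an identity permutation. -/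
noncomputable def gammaSeries : ℝ⟦X⟧ :=
  ySeries * hSeries * ((1 - X) * dSeries - X) * (1 - X) * (1 - 2 * X)⁻¹

lemma two_sub_X_mul_hSeries : (2 - X) * hSeries = 2 + ySeries := by
  have h : (1 - X * qSeries) * ((2 - X) * hSeries) = (1 - X * qSeries) * (2 + ySeries) := by
    have hq : qSeries = 1 + ySeries := rfl
    rw [hq]
    have h0 := hSeries_mul
    rw [hq] at h0
    linear_combination (2 - X) * h0 - ySeries_eq
  refine mul_left_cancel₀ (fun h0 => ?_) h
  have := congrArg (coeff 0) h0
  simp at this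

lemma one_sub_two_mul_inv : (1 - 2 * X : ℝ⟦X⟧) * (1 - 2 * X)⁻¹ = 1 :=
  PowerSeries.mul_inv_cancel _ (by simp)

lemma dSeries_constant_eq : (1 - X) * dSeries - 1
    = X * (ySeries * (1 - hSeries) * dSeries + gammaSeries * geom) := by
  have hm := one_sub_two_mul_inv
  have hy := ySeries_eq
  have hh := two_sub_X_mul_hSeries
  have hg := geom_mul
  have hd := dSeries_mul
  have hne : ((2 - X) * (1 - 2 * X) * dDenom : ℝ⟦X⟧) ≠ 0 := by
    intro h0
    have := congrArg (coeff 0) h0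
    simp only [dDenom, coeff_zero_eq_constantCoeff, map_mul, map_sub, map_add, map_one, map_pow,
      constantCoeff_X, map_ofNat, map_zero] at this
    norm_num at this
  have hgg : gammaSeries * geom
      = ySeries * hSeries * ((1 - X) * dSeries - X) * (1 - 2 * X)⁻¹ := by
    rw [gammaSeries]
    linear_combination ySeries * hSeries * ((1 - X) * dSeries - X) * (1 - 2 * X)⁻¹ * hg
  refine mul_left_cancel₀ hne ?_
  rw [hgg]
  have hdd : dDenom = 1 - 2 * X + 2 * X ^ 2 - 2 * X * (1 - 2 * X) * ySeries := rfl
  have hpoly : (2 - X) * (1 - 2 * X) * ((1 - X) ^ 2 - dDenom) = X * ySeries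
      * ((1 - X) * (1 - 2 * X) * (-X - ySeries)
        + (2 + ySeries) * ((1 - X) ^ 2 - X * dDenom)) := by
    rw [hdd]
    linear_combination X * (1 - 2 * X) * (2 * X * ySeries + 2 - X) * hy
  linear_combination hpoly + (2 - X) * (1 - 2 * X) * (1 - X) * hd - X * ySeries
    * ((2 - X) * (1 - 2 * X) * (1 - hSeries) * hd - (1 - 2 * X) * (1 - X) * hh
      + (2 - X) * hSeries * dDenom * ((1 - X) * dSeries - X) * hm
      + (2 - X) * hSeries * (1 - X) * hd + ((1 - X) ^ 2 - X * dDenom) * hh)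

/-- The generating series of the descendants of the identity permutation of length `n`. -/
noncomputable def trivialSeries (n : ℕ) : ℝ⟦X⟧ :=
  dSeries + ySeries * (1 - hSeries) * dSeries * (partialSums n).1
    + gammaSeries * (partialSums n).2

lemma trivialSeries_eq (n : ℕ) : trivialSeries n = 1 + X * (∑ v ∈ Finset.range n,
    aSeries v * wSeries 1 * kSeries (n - 1 - v) + trivialSeries (n + 1)) := by
  have h1 := X_mul_sum_trivial n
  have h2 : (partialSums (n + 1)).1 = (partialSums n).1 + aSeries n := rfl
  have h3 : (partialSums (n + 1)).2 = geom * ((partialSums n).2 + aSeries n) := rfl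
  have hm := one_sub_two_mul_inv
  have hc := dSeries_constant_eq
  have hg := geom_mul
  have hgam : gammaSeries * (1 - X * geom)
      = ySeries * hSeries * ((1 - X) * dSeries - X) := by
    have : (1 - X) * (1 - X * geom) = 1 - 2 * X := by linear_combination -X * hg
    rw [gammaSeries]
    linear_combination ySeries * hSeries * ((1 - X) * dSeries - X) * hm
      + ySeries * hSeries * ((1 - X) * dSeries - X) * (1 - 2 * X)⁻¹ * this
  rw [mul_add, h1, trivialSeries, trivialSeries, h2, h3, aSeries]
  linear_combination (1 + ySeries * ((1 - hSeries) * (partialSums n).1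
    + hSeries * (partialSums n).2)) * hc + (partialSums n).2 * hgam

lemma descendants_avoidsD_of_trivial (r : ℕ) : ∀ {n : ℕ} {σ : Equiv.Perm (Fin n)},
    AvoidsD σ → IsTrivialShape σ →
    (descendants (fun _ => AvoidsD) r σ : ℝ) = coeff r (trivialSeries n) := by
  induction r with
  | zero =>
    intro n σ hσ _
    rw [coeff_zero_of_eq (trivialSeries_eq n)]
    simp [descendants, hσ]
  | succ r ih =>
    intro n σ hσ h
    rw [cast_descendants_succ (g := fun v => if v < n then
        aSeries v * wSeries 1 * kSeries (n - 1 - v) else trivialSeries (n + 1)),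
      coeff_succ_of_eq (trivialSeries_eq n), Finset.sum_range_succ, if_neg (lt_irrefl n)]
    · congr 2
      refine Finset.sum_congr rfl fun v hv => ?_
      rw [if_pos (Finset.mem_range.1 hv)]
    · intro v
      have hav := (avoidsD_append σ v).2 ⟨hσ, straddles_of_lowIncreasing σ (h.low v)⟩
      split_ifs with hv
      · rw [descendants_avoidsD_of_hasShape r hav (h.append hv), shapeSeries, specialFactor,
          if_pos rfl, Nat.add_sub_cancel_left]
      · exact ih hav (h.append_last (by omega))

lemma dCount_eq_coeff (n : ℕ) : (dCount n : ℝ) = coeff n dSeries := by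
  have h0 : trivialSeries 0 = dSeries := by simp [trivialSeries, partialSums]
  rw [dCount, card_eq_descendants (fun _ => AvoidsD),
    descendants_avoidsD_of_trivial n _ (isTrivialShape_zero _), h0]
  refine ⟨?_, ?_⟩ <;> exact fun ⟨f, _⟩ => (f 0).elim0

/-! ### Growth of the coefficients of `y` -/

lemma motz_pos (n : ℕ) : 0 < motz n := by
  induction n using Nat.strong_induction_on with
  | _ n ih =>
    cases n with
    | zero => simp [motz]
    | succ n =>
      rw [motz_succ]
      have h1 := ih n (by omega)
      have h2 : 0 ≤ ∑ k ∈ Finset.range n, motz k * motz (n - 1 - k) :=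
        Finset.sum_nonneg fun k hk => by
          have := Finset.mem_range.1 hk
          exact (mul_pos (ih k (by omega)) (ih (n - 1 - k) (by omega))).le
      linarith

/-- The three-term recurrence that follows from the algebraic equation of the generating series. -/
lemma motz_recurrence (n : ℕ) :
    (n + 4) * motz (n + 2) = (6 * n + 15) * motz (n + 1) - 5 * (n + 1) * motz n := by
  set Y : ℝ⟦X⟧ := PowerSeries.mk motz with hY
  obtain ⟨s, hs⟩ : ∃ s : ℝ⟦X⟧, s = 1 - C 3 * X - C 2 * (X ^ 2 * Y) := ⟨_, rfl⟩
  have hsq : s ^ 2 = 1 - C 6 * X + C 5 * X ^ 2 := by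
    have h : Y = 1 + X * (3 * Y + X * Y ^ 2) := mk_motz_eq
    rw [hs, show C (3 : ℝ) = (3 : ℝ⟦X⟧) from rfl, show C (2 : ℝ) = (2 : ℝ⟦X⟧) from rfl,
      show C (6 : ℝ) = (6 : ℝ⟦X⟧) from rfl, show C (5 : ℝ) = (5 : ℝ⟦X⟧) from rfl]
    linear_combination -4 * X ^ 2 * h
  have hode : (1 - C 6 * X + C 5 * X ^ 2) * d⁄dX ℝ s = (C 5 * X - C 3) * s := by
    have h := congrArg (d⁄dX ℝ) hsq
    rw [pow_two, Derivation.leibniz] at h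
    simp only [map_add, map_sub, Derivation.leibniz, derivative_C, derivative_X,
      Derivation.leibniz_pow, smul_eq_mul, Derivation.map_one_eq_zero] at h
    rw [← hsq]
    have h6 : C (6 : ℝ) = (6 : ℝ⟦X⟧) := rfl
    have h3 : C (3 : ℝ) = (3 : ℝ⟦X⟧) := rfl
    have h5 : C (5 : ℝ) = (5 : ℝ⟦X⟧) := rfl
    rw [h6, h5] at h
    rw [h5, h3]
    have hne : (2 : ℝ⟦X⟧) ≠ 0 := by
      intro h0
      have := congrArg constantCoeff h0
      rw [map_ofNat, map_zero] at this
      norm_num at this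
    refine mul_left_cancel₀ hne ?_
    simp at h
    linear_combination s * h
  have hcoef : ∀ m, coeff (m + 2) s = -2 * motz m := by
    intro m
    rw [hs, map_sub, map_sub, coeff_C_mul, coeff_C_mul, coeff_X_pow_mul, coeff_one, coeff_X, hY,
      coeff_mk]
    simp
  have h := congrArg (coeff (n + 3)) hode
  rw [show (1 - C 6 * X + C 5 * X ^ 2) * d⁄dX ℝ s
      = d⁄dX ℝ s - C 6 * (X ^ 1 * d⁄dX ℝ s) + C 5 * (X ^ 2 * d⁄dX ℝ s) by ring,
    show (C 5 * X - C 3) * s = C 5 * (X ^ 1 * s) - C 3 * s by ring, map_add, map_sub, map_sub,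
    coeff_C_mul, coeff_C_mul, coeff_C_mul, coeff_C_mul,
    show n + 3 = (n + 2) + 1 by omega, coeff_X_pow_mul, coeff_X_pow_mul,
    show n + 2 + 1 = (n + 1) + 2 by omega, coeff_X_pow_mul,
    coeff_derivative, coeff_derivative, coeff_derivative, hcoef, hcoef,
    show n + 1 + 1 = n + 2 by omega, hcoef] at h
  push_cast at h
  linarith

/-- The coefficients `motz n`, scaled by the radius of convergence. -/
noncomputable def tau (n : ℕ) : ℝ := motz n / 5 ^ n

lemma tau_pos (n : ℕ) : 0 < tau n := div_pos (motz_pos n) (by positivity)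

lemma tau_recurrence (n : ℕ) :
    5 * (n + 4) * tau (n + 2) = (6 * n + 15) * tau (n + 1) - (n + 1) * tau n := by
  have h := motz_recurrence n
  unfold tau
  have h5 : (5 : ℝ) ^ n ≠ 0 := by positivity
  rw [pow_add, pow_add]
  field_simp
  linarith

lemma tau_succ_bounds (n : ℕ) :
    tau (n + 1) ≤ tau n ∧ (n + 1) * tau n ≤ (n + 3) * tau (n + 1) := by
  induction n with
  | zero => norm_num [tau, motz_succ, motz]
  | succ n ih =>
    obtain ⟨h1, h2⟩ := ih
    have h := tau_recurrence n
    have hp := tau_pos (n + 1)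
    have hn : (0 : ℝ) ≤ n := n.cast_nonneg
    push_cast
    constructor
    · have : (n + 1) * tau (n + 1) ≤ (n + 1) * tau n := by gcongr
      have h3 : (n + 4) * tau (n + 2) ≤ (n + 4) * tau (n + 1) := by nlinarith
      exact le_of_mul_le_mul_left h3 (by linarith)
    · ring_nf at *
      nlinarith

lemma tau_mul_le {m n : ℕ} (h : m ≤ n) :
    (m + 1) * (m + 2) * tau m ≤ (n + 1) * (n + 2) * tau n := by
  have hm : Monotone fun n : ℕ => ((n : ℝ) + 1) * (n + 2) * tau n := by
    refine monotone_nat_of_le_succ fun n => ?_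
    have h2 := (tau_succ_bounds n).2
    have h3 : ((n : ℝ) + 2) * ((n + 1) * tau n) ≤ (n + 2) * ((n + 3) * tau (n + 1)) := by gcongr
    push_cast
    linarith
  exact hm h

lemma tau_sub_le {k n : ℕ} (h : k ≤ n / 2) : tau (n - k) ≤ 4 * tau n := by
  have h1 := tau_mul_le (Nat.sub_le n k)
  have hk : ((n - k : ℕ) : ℝ) = n - k := Nat.cast_sub (by omega)
  have h2 : 2 * (k : ℝ) ≤ n := by exact_mod_cast (by omega : 2 * k ≤ n)
  have hp := tau_pos n
  have hq := tau_pos (n - k)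
  have hn : (0 : ℝ) ≤ k := k.cast_nonneg
  rw [hk] at h1
  have h3 : ((n : ℝ) + 1) * (n + 2) * tau (n - k)
      ≤ 4 * ((n - k + 1) * (n - k + 2)) * tau (n - k) := by
    refine mul_le_mul_of_nonneg_right ?_ hq.le
    nlinarith
  have h4 : ((n : ℝ) + 1) * (n + 2) * tau (n - k) ≤ (n + 1) * (n + 2) * (4 * tau n) := by
    linarith
  exact le_of_mul_le_mul_left h4 (by nlinarith)

lemma tendsto_tau_ratio (k : ℕ) : Tendsto (fun n => tau n / tau (n + k)) atTop (𝓝 1) := by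
  induction k with
  | zero =>
    refine tendsto_const_nhds.congr fun n => ?_
    rw [add_zero, div_self (tau_pos n).ne']
  | succ k ih =>
    have h1 : Tendsto (fun n => tau n / tau (n + 1)) atTop (𝓝 1) := by
      have hlim : Tendsto (fun n : ℕ => 1 + 2 * (1 / ((n : ℝ) + 1))) atTop (𝓝 (1 + 2 * 0)) :=
        (tendsto_one_div_add_atTop_nhds_zero_nat.const_mul 2).const_add 1
      rw [mul_zero, add_zero] at hlim
      refine tendsto_of_tendsto_of_tendsto_of_le_of_le tendsto_const_nhds hlim ?_ ?_
      · intro n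
        exact (one_le_div (tau_pos _)).2 (tau_succ_bounds n).1
      · intro n
        have h2 := (tau_succ_bounds n).2
        have hn : (0 : ℝ) < n + 1 := by positivity
        show tau n / tau (n + 1) ≤ _
        rw [div_le_iff₀ (tau_pos _)]
        have : (1 + 2 * (1 / ((n : ℝ) + 1))) * tau (n + 1)
            = (n + 3) * tau (n + 1) / (n + 1) := by
          field_simp; ring
        rw [this, le_div_iff₀ hn]
        linarith
    have h2 := ih.mul (h1.comp (tendsto_add_atTop_nat k))
    rw [mul_one] at h2
    refine h2.congr fun n => ?_
    have := (tau_pos (n + k)).ne'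
    have := (tau_pos (n + (k + 1))).ne'
    simp only [Function.comp_apply, ← add_assoc] at *
    field_simp

/-- The convolution of two sequences. -/
def conv (a b : ℕ → ℝ) (n : ℕ) : ℝ := ∑ k ∈ Finset.range (n + 1), a k * b (n - k)

lemma conv_eq_half_add_half (a b : ℕ → ℝ) (n : ℕ) :
    conv a b n = ∑ k ∈ Finset.range (n / 2 + 1), a k * b (n - k)
      + ∑ k ∈ Finset.range ((n + 1) / 2), b k * a (n - k) := by
  rw [conv, ← Finset.sum_range_add_sum_Ico _ (show n / 2 + 1 ≤ n + 1 by omega)]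
  congr 1
  have h := Finset.sum_Ico_reflect (fun k => a k * b (n - k)) 0 (show (n + 1) / 2 ≤ n + 1 by omega)
  rw [← Finset.range_eq_Ico, show n + 1 - (n + 1) / 2 = n / 2 + 1 by omega, Nat.sub_zero] at h
  rw [← h]
  refine Finset.sum_congr rfl fun k hk => ?_
  have := Finset.mem_range.1 hk
  rw [show n - (n - k) = k by omega, mul_comm]

lemma exists_abs_le_mul_tau {a : ℕ → ℝ} {α : ℝ}
    (ha : Tendsto (fun n => a n / tau n) atTop (𝓝 α)) : ∃ M, 0 ≤ M ∧ ∀ n, |a n| ≤ M * tau n := by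
  obtain ⟨M, hM⟩ := (ha.abs).bddAbove_range
  have h : ∀ n, |a n / tau n| ≤ M := fun n => hM ⟨n, rfl⟩
  refine ⟨M, (abs_nonneg _).trans (h 0), fun n => ?_⟩
  have := h n
  rwa [abs_div, abs_of_pos (tau_pos n), div_le_iff₀ (tau_pos n)] at this

lemma tendsto_half_conv {a b : ℕ → ℝ} {β : ℝ} (ha : Summable a)
    (hb : Tendsto (fun n => b n / tau n) atTop (𝓝 β)) {m : ℕ → ℕ} (hm : ∀ n, m n ≤ n / 2 + 1)
    (hm' : Tendsto m atTop atTop) :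
    Tendsto (fun n => (∑ k ∈ Finset.range (m n), a k * b (n - k)) / tau n) atTop
      (𝓝 ((∑' k, a k) * β)) := by
  obtain ⟨M, hM0, hM⟩ := exists_abs_le_mul_tau hb
  have hsum : ∀ n, (∑ k ∈ Finset.range (m n), a k * b (n - k)) / tau n
      = ∑' k, if k < m n then a k * b (n - k) / tau n else 0 := by
    intro n
    rw [tsum_eq_sum (s := Finset.range (m n)), Finset.sum_div]
    · refine Finset.sum_congr rfl fun k hk => ?_
      rw [if_pos (Finset.mem_range.1 hk)]
    · intro k hk
      rw [if_neg (by simpa using hk)]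
  simp only [hsum]
  rw [← tsum_mul_right]
  refine tendsto_tsum_of_dominated_convergence (bound := fun k => |a k| * (M * 4))
    (ha.abs.mul_right _) ?_ ?_
  · intro k
    have h1 : Tendsto (fun n => b (n - k) / tau n) atTop (𝓝 β) := by
      rw [← tendsto_add_atTop_iff_nat k]
      have h2 := hb.mul (tendsto_tau_ratio k)
      rw [mul_one] at h2
      refine h2.congr fun n => ?_
      have := (tau_pos n).ne'
      have := (tau_pos (n + k)).ne'
      rw [Nat.add_sub_cancel]
      field_simp
    refine (h1.const_mul (a k)).congr' ?_
    filter_upwards [hm'.eventually_gt_atTop k] with n hn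
    rw [if_pos hn, mul_div_assoc]
  · refine Eventually.of_forall fun n k => ?_
    split_ifs with hk
    · have h1 := hM (n - k)
      have h2 := tau_sub_le (show k ≤ n / 2 by have := hm n; omega)
      rw [Real.norm_eq_abs, abs_div, abs_of_pos (tau_pos n), abs_mul, div_le_iff₀ (tau_pos n)]
      have h3 : |b (n - k)| ≤ M * (4 * tau n) := h1.trans (by gcongr)
      calc |a k| * |b (n - k)| ≤ |a k| * (M * (4 * tau n)) := by gcongr
        _ = _ := by ring
    · rw [norm_zero]; positivity

lemma tendsto_conv {a b : ℕ → ℝ} {s t α β : ℝ} (has : HasSum a s) (hbs : HasSum b t)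
    (ha : Tendsto (fun n => a n / tau n) atTop (𝓝 α))
    (hb : Tendsto (fun n => b n / tau n) atTop (𝓝 β)) :
    Tendsto (fun n => conv a b n / tau n) atTop (𝓝 (α * t + β * s)) := by
  have h1 := tendsto_half_conv (m := fun n => n / 2 + 1) has.summable hb (fun n => le_rfl)
    (tendsto_atTop_atTop.2 fun b => ⟨2 * b, fun a ha => by omega⟩)
  have h2 := tendsto_half_conv (m := fun n => (n + 1) / 2) hbs.summable ha (fun n => by omega)
    (tendsto_atTop_atTop.2 fun b => ⟨2 * b, fun a ha => by omega⟩)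
  rw [has.tsum_eq] at h1
  rw [hbs.tsum_eq] at h2
  have h3 := h1.add h2
  rw [show s * β + t * α = α * t + β * s by ring] at h3
  refine h3.congr fun n => ?_
  rw [conv_eq_half_add_half, add_div]

lemma tau_succ_eq (n : ℕ) : tau (n + 2) = 3 / 5 * tau (n + 1) + 1 / 25 * conv tau tau n := by
  have h : conv tau tau n = (∑ k ∈ Finset.range (n + 1), motz k * motz (n - k)) / 5 ^ n := by
    rw [conv, Finset.sum_div]
    refine Finset.sum_congr rfl fun k hk => ?_
    have := Finset.mem_range.1 hk
    rw [tau, tau, div_mul_div_comm, ← pow_add, show k + (n - k) = n by omega]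
  rw [h, tau, motz_succ, Nat.add_sub_cancel, tau, pow_add, pow_add]
  field_simp
  ring

lemma sum_tau_le (N : ℕ) : ∑ n ∈ Finset.range N, tau n ≤ 5 := by
  induction N with
  | zero => simp
  | succ N ih =>
    have h0 : tau 0 = 1 := by simp [tau, motz]
    cases N with
    | zero => simp [h0]
    | succ N =>
      have hP : 0 ≤ ∑ n ∈ Finset.range (N + 1), tau n :=
        Finset.sum_nonneg fun n _ => (tau_pos n).le
      have hconv : ∑ n ∈ Finset.range N, conv tau tau n
          ≤ (∑ n ∈ Finset.range (N + 1), tau n) ^ 2 := by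
        simp only [conv]
        rw [Finset.sum_range_diag_flip N (fun i j => tau i * tau j), pow_two, Finset.sum_mul_sum]
        refine (Finset.sum_le_sum fun i _ => ?_).trans
          (Finset.sum_le_sum_of_subset_of_nonneg (Finset.range_mono (Nat.le_succ N)) ?_)
        · exact Finset.sum_le_sum_of_subset_of_nonneg (Finset.range_mono (by omega))
            fun j _ _ => (mul_pos (tau_pos i) (tau_pos j)).le
        · exact fun i _ _ => Finset.sum_nonneg fun j _ => (mul_pos (tau_pos i) (tau_pos j)).le
      have h1 : tau 1 = 3 / 5 := by norm_num [tau, motz_succ, motz]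
      have hsplit : ∑ n ∈ Finset.range (N + 1 + 1), tau n
          = 1 + 3 / 5 * ∑ n ∈ Finset.range (N + 1), tau n
            + 1 / 25 * ∑ n ∈ Finset.range N, conv tau tau n := by
        rw [Finset.sum_range_succ', Finset.sum_range_succ', Finset.sum_range_succ' _ N, h0, h1]
        simp only [tau_succ_eq, Finset.sum_add_distrib, ← Finset.mul_sum]
        ring
      rw [hsplit]
      nlinarith

lemma hasSum_conv {a b : ℕ → ℝ} {s t : ℝ} (ha : HasSum a s) (hb : HasSum b t) :
    HasSum (conv a b) (s * t) := by
  have hs : Summable (conv a b) := summable_norm_iff.1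
    (summable_norm_sum_mul_range_of_summable_norm ha.summable.norm hb.summable.norm)
  have h : (∑' n, a n) * (∑' n, b n) = ∑' n, conv a b n :=
    tsum_mul_tsum_eq_tsum_sum_range_of_summable_norm ha.summable.norm hb.summable.norm
  rw [ha.tsum_eq, hb.tsum_eq] at h
  exact h ▸ hs.hasSum

lemma hasSum_tau : HasSum tau 5 := by
  have hs : Summable tau :=
    summable_of_sum_range_le (fun n => (tau_pos n).le) sum_tau_le
  have hc := hasSum_conv hs.hasSum hs.hasSum
  have h0 : tau 0 = 1 := by simp [tau, motz]
  have h1 : tau 1 = 3 / 5 := by norm_num [tau, motz_succ, motz]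
  have e1 : ∑' n, tau (n + 1) = ∑' n, tau n - 1 := by
    rw [hs.tsum_eq_zero_add, h0]; ring
  have hs1 : Summable fun n => tau (n + 1) := (summable_nat_add_iff 1).2 hs
  have e2 : ∑' n, tau (n + 2) = ∑' n, tau n - 1 - 3 / 5 := by
    rw [← e1, hs1.tsum_eq_zero_add, zero_add, h1]; ring
  simp only [tau_succ_eq] at e2
  rw [(hs1.mul_left _).tsum_add (hc.summable.mul_left _), tsum_mul_left, tsum_mul_left, e1,
    hc.tsum_eq] at e2
  have h5 : (∑' n, tau n - 5) ^ 2 = 0 := by linarith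
  have h6 : ∑' n, tau n = 5 := by
    have := pow_eq_zero_iff (two_ne_zero) |>.1 h5
    linarith
  exact h6 ▸ hs.hasSum

/-! ### Power series with coefficients comparable to those of `y` -/

/-- The coefficients of a power series, scaled by the radius of convergence of `y`. -/
noncomputable def scaled (A : ℝ⟦X⟧) (n : ℕ) : ℝ := coeff n A / 5 ^ n

/-- The scaled coefficients of `A` sum to `s` and are asymptotic to `α` times those of `y`. -/
structure Tame (A : ℝ⟦X⟧) (s α : ℝ) : Prop where
  hasSum : HasSum (scaled A) s
  tendsto : Tendsto (fun n => scaled A n / tau n) atTop (𝓝 α)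

lemma scaled_add (A B : ℝ⟦X⟧) (n : ℕ) : scaled (A + B) n = scaled A n + scaled B n := by
  simp only [scaled, map_add, add_div]

lemma scaled_mul (A B : ℝ⟦X⟧) (n : ℕ) : scaled (A * B) n = conv (scaled A) (scaled B) n := by
  rw [scaled, coeff_mul, Finset.Nat.sum_antidiagonal_eq_sum_range_succ_mk, conv, Finset.sum_div]
  refine Finset.sum_congr rfl fun k hk => ?_
  have := Finset.mem_range.1 hk
  rw [scaled, scaled, div_mul_div_comm, ← pow_add, show k + (n - k) = n by omega]

namespace Tame

variable {A B : ℝ⟦X⟧} {s t α β : ℝ}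

lemma add (hA : Tame A s α) (hB : Tame B t β) : Tame (A + B) (s + t) (α + β) where
  hasSum := (hA.hasSum.add hB.hasSum).congr_fun fun n => scaled_add A B n
  tendsto := (hA.tendsto.add hB.tendsto).congr fun n => by rw [scaled_add, add_div]

lemma mul (hA : Tame A s α) (hB : Tame B t β) : Tame (A * B) (s * t) (α * t + β * s) where
  hasSum := (hasSum_conv hA.hasSum hB.hasSum).congr_fun fun n => scaled_mul A B n
  tendsto := (tendsto_conv hA.hasSum hB.hasSum hA.tendsto hB.tendsto).congr fun n => by
    rw [scaled_mul]

lemma of_eventually (hs : HasSum (scaled A) s) (h : ∀ᶠ n in atTop, scaled A n = 0) :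
    Tame A s 0 where
  hasSum := hs
  tendsto := tendsto_const_nhds.congr' (by filter_upwards [h] with n hn; rw [hn, zero_div])

lemma of_C (r : ℝ) : Tame (C r) r 0 := by
  refine of_eventually ?_ ?_
  · have h := hasSum_single (f := scaled (C r)) 0 fun n hn => by simp [scaled, coeff_C, hn]
    simpa [scaled] using h
  · filter_upwards [eventually_gt_atTop 0] with n hn
    simp [scaled, coeff_C, hn.ne']

lemma of_X : Tame X (1 / 5) 0 := by
  refine of_eventually ?_ ?_
  · have h := hasSum_single (f := scaled X) 1 fun n hn => by simp [scaled, coeff_X, hn]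
    simpa [scaled] using h
  · filter_upwards [eventually_gt_atTop 1] with n hn
    simp [scaled, coeff_X, hn.ne']

lemma of_motz : Tame (PowerSeries.mk motz) 5 1 where
  hasSum := hasSum_tau.congr_fun fun n => by simp [scaled, tau]
  tendsto := tendsto_const_nhds.congr fun n => by
    rw [show scaled (PowerSeries.mk motz) n = tau n by simp [scaled, tau], div_self (tau_pos n).ne']

end Tame

lemma conv_mono_right {f a b : ℕ → ℝ} (hf : ∀ n, 0 ≤ f n) (h : ∀ n, a n ≤ b n) (n : ℕ) :
    conv f a n ≤ conv f b n :=
  Finset.sum_le_sum fun k _ => mul_le_mul_of_nonneg_left (h _) (hf k)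

section Renewal

variable {f u g : ℕ → ℝ} {F c υ G : ℝ}

lemma renewal_bounded (hf : ∀ n, 0 ≤ f n) (hf0 : f 0 = 0) (hfs : HasSum f F)
    (hfc : Tendsto (fun n => f n / tau n) atTop (𝓝 c))
    (huc : Tendsto (fun n => u n / tau n) atTop (𝓝 υ)) (hlt : 5 * c + F < 1)
    (hg : ∀ n, g n = u n + conv f g n) : ∃ M, ∀ n, |g n| ≤ M * tau n := by
  obtain ⟨K, hK0, hK⟩ := exists_abs_le_mul_tau huc
  have hlim := tendsto_conv hfs hasSum_tau hfc
    (tendsto_const_nhds.congr fun n => (div_self (tau_pos n).ne').symm)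
  obtain ⟨θ, hθ1, hθ2⟩ := exists_between hlt
  obtain ⟨N, hN⟩ := eventually_atTop.1
    (hlim.eventually_le_const (show c * 5 + 1 * F < θ by linarith))
  have hsum0 : 0 ≤ ∑ n ∈ Finset.range N, |g n| / tau n :=
    Finset.sum_nonneg fun n _ => div_nonneg (abs_nonneg _) (tau_pos n).le
  refine ⟨K / (1 - θ) + ∑ n ∈ Finset.range N, |g n| / tau n, fun n => ?_⟩
  set M := K / (1 - θ) + ∑ n ∈ Finset.range N, |g n| / tau n with hM
  have hKM : K + M * θ ≤ M := by
    have h1 : K / (1 - θ) ≤ M := by linarith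
    rw [div_le_iff₀ (by linarith)] at h1
    linarith
  have hM0 : 0 ≤ M := by
    have : 0 ≤ K / (1 - θ) := div_nonneg hK0 (by linarith)
    linarith
  induction n using Nat.strong_induction_on with
  | _ n ih =>
    rcases lt_or_ge n N with hn | hn
    · rw [← div_le_iff₀ (tau_pos n)]
      have h1 := Finset.single_le_sum (f := fun n => |g n| / tau n)
        (fun n _ => div_nonneg (abs_nonneg _) (tau_pos n).le) (Finset.mem_range.2 hn)
      have : 0 ≤ K / (1 - θ) := div_nonneg hK0 (by linarith)
      linarith
    · have h1 : |conv f g n| ≤ M * conv f tau n := by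
        rw [conv, conv, Finset.mul_sum]
        refine (Finset.abs_sum_le_sum_abs _ _).trans (Finset.sum_le_sum fun k hk => ?_)
        have hk' := Finset.mem_range.1 hk
        rcases Nat.eq_zero_or_pos k with rfl | hk0
        · simp [hf0]
        · rw [abs_mul, abs_of_nonneg (hf k)]
          calc f k * |g (n - k)| ≤ f k * (M * tau (n - k)) :=
                mul_le_mul_of_nonneg_left (ih _ (by omega)) (hf k)
            _ = _ := by ring
      have h2 := hN n hn
      rw [div_le_iff₀ (tau_pos n)] at h2
      have h3 : M * conv f tau n ≤ M * (θ * tau n) := mul_le_mul_of_nonneg_left h2 hM0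
      have h4 : (K + M * θ) * tau n ≤ M * tau n := mul_le_mul_of_nonneg_right hKM (tau_pos n).le
      have h5 := hK n
      rw [hg n]
      have h6 := abs_add_le (u n) (conv f g n)
      linarith

lemma renewal_eventually_le (hf : ∀ n, 0 ≤ f n) (hfs : HasSum f F)
    (hfc : Tendsto (fun n => f n / tau n) atTop (𝓝 c))
    (huc : Tendsto (fun n => u n / tau n) atTop (𝓝 υ))
    (hg : ∀ n, g n = u n + conv f g n) (hgs : HasSum g G) {x y : ℝ}
    (hx : ∀ᶠ n in atTop, g n ≤ x * tau n) (hy : υ + c * G + F * x < y) :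
    ∀ᶠ n in atTop, g n ≤ y * tau n := by
  obtain ⟨N₀, hN₀⟩ := eventually_atTop.1 hx
  have hz : HasSum (fun n => g n - x * tau n) (G - x * 5) := hgs.sub (hasSum_tau.mul_left x)
  have hB : Tendsto (fun N => υ + (c * (x * 5 + ∑ n ∈ Finset.range N, (g n - x * tau n)) + x * F))
      atTop (𝓝 (υ + (c * (x * 5 + (G - x * 5)) + x * F))) :=
    (((hz.tendsto_sum_nat.const_add _).const_mul c).add_const _).const_add _
  obtain ⟨N, hN, hNN⟩ := ((hB.eventually_lt_const
    (show υ + (c * (x * 5 + (G - x * 5)) + x * F) < y by linarith)).and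
    (eventually_ge_atTop N₀)).exists
  obtain ⟨b, hb⟩ : ∃ b : ℕ → ℝ,
      b = fun n => x * tau n + if n < N then g n - x * tau n else 0 := ⟨_, rfl⟩
  have hgb : ∀ n, g n ≤ b n := by
    intro n
    simp only [hb]
    split_ifs with h
    · linarith
    · have := hN₀ n (by omega)
      linarith
  have hbs : HasSum b (x * 5 + ∑ n ∈ Finset.range N, (g n - x * tau n)) := by
    rw [hb]
    refine (hasSum_tau.mul_left x).add ?_
    have h : HasSum (fun n => if n < N then g n - x * tau n else 0)
        (∑ n ∈ Finset.range N, if n < N then g n - x * tau n else 0) :=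
      hasSum_sum_of_ne_finset_zero fun n hn => if_neg (by simpa using hn)
    rwa [Finset.sum_congr rfl fun n hn => if_pos (Finset.mem_range.1 hn)] at h
  have hbc : Tendsto (fun n => b n / tau n) atTop (𝓝 x) := by
    refine tendsto_const_nhds.congr' ?_
    filter_upwards [eventually_ge_atTop N] with n hn
    rw [hb]
    simp only
    rw [if_neg (by omega), add_zero, mul_div_cancel_right₀ _ (tau_pos n).ne']
  have hlim := huc.add (tendsto_conv hfs hbs hfc hbc)
  filter_upwards [hlim.eventually_le_const hN] with n hn
  rw [← add_div, div_le_iff₀ (tau_pos n)] at hn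
  rw [hg n]
  have := conv_mono_right hf hgb n
  linarith

lemma renewal_limsup_le (hf : ∀ n, 0 ≤ f n) (hfs : HasSum f F) (hF : F < 1)
    (hfc : Tendsto (fun n => f n / tau n) atTop (𝓝 c))
    (huc : Tendsto (fun n => u n / tau n) atTop (𝓝 υ))
    (hg : ∀ n, g n = u n + conv f g n) (hgs : HasSum g G) {M : ℝ} (hM : ∀ n, |g n| ≤ M * tau n)
    {ε : ℝ} (hε : 0 < ε) :
    ∀ᶠ n in atTop, g n ≤ ((υ + c * G) / (1 - F) + ε) * tau n := by
  set L := (υ + c * G) / (1 - F) with hL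
  have hLeq : υ + c * G + F * L = L := by
    have : (1 - F) ≠ 0 := by linarith
    rw [hL]; field_simp; ring
  have hF0 : 0 ≤ F := hfs.nonneg hf
  obtain ⟨θ, hθ1, hθ2⟩ := exists_between hF
  have hiter : ∀ m : ℕ, ∀ᶠ n in atTop, g n ≤ (L + θ ^ m * (|M - L| + 1)) * tau n := by
    intro m
    induction m with
    | zero =>
      refine Eventually.of_forall fun n => (le_abs_self _).trans ((hM n).trans ?_)
      refine mul_le_mul_of_nonneg_right ?_ (tau_pos n).le
      have := le_abs_self (M - L)
      rw [pow_zero]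
      linarith
    | succ m ih =>
      refine renewal_eventually_le hf hfs hfc huc hg hgs ih ?_
      have hpos : 0 < θ ^ m * (|M - L| + 1) := by
        have : 0 < θ := by linarith
        positivity
      have : F * (θ ^ m * (|M - L| + 1)) < θ * (θ ^ m * (|M - L| + 1)) :=
        mul_lt_mul_of_pos_right hθ1 hpos
      rw [pow_succ]
      linarith
  have hlim : Tendsto (fun m : ℕ => θ ^ m * (|M - L| + 1)) atTop (𝓝 (0 * (|M - L| + 1))) :=
    (tendsto_pow_atTop_nhds_zero_of_lt_one (by linarith) hθ2).mul_const _
  rw [zero_mul] at hlim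
  obtain ⟨m, hm⟩ := (hlim.eventually_le_const hε).exists
  filter_upwards [hiter m] with n hn
  exact hn.trans (mul_le_mul_of_nonneg_right (by linarith) (tau_pos n).le)

end Renewal

lemma conv_neg_right (f g : ℕ → ℝ) (n : ℕ) : conv f (fun n => -g n) n = -conv f g n := by
  simp [conv]

/-- The renewal theorem for tame power series. -/
lemma Tame.renewal {A U g : ℝ⟦X⟧} {F c S υ : ℝ} (hA : Tame A F c) (hU : Tame U S υ)
    (hA0 : ∀ n, 0 ≤ coeff n A) (hA00 : coeff 0 A = 0) (hc : 0 ≤ c) (hlt : 5 * c + F < 1)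
    (hg : g = U + A * g) : Tame g (S / (1 - F)) ((υ + c * (S / (1 - F))) / (1 - F)) := by
  have hf : ∀ n, 0 ≤ scaled A n := fun n => div_nonneg (hA0 n) (by positivity)
  have hf0 : scaled A 0 = 0 := by rw [scaled, hA00, zero_div]
  have hrec : ∀ n, scaled g n = scaled U n + conv (scaled A) (scaled g) n := by
    intro n
    rw [← scaled_mul, ← scaled_add, ← hg]
  obtain ⟨M, hM⟩ := renewal_bounded hf hf0 hA.hasSum hA.tendsto hU.tendsto hlt hrec
  have hF : F < 1 := by linarith
  have hsum : Summable (scaled g) :=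
    Summable.of_norm_bounded (hasSum_tau.summable.mul_left M) hM
  have hG : ∑' n, scaled g n = S / (1 - F) := by
    have h3 := (hU.hasSum.add (hasSum_conv hA.hasSum hsum.hasSum)).congr_fun hrec
    have h5 := h3.tsum_eq
    rw [eq_div_iff (by linarith)]
    linarith
  have hgs : HasSum (scaled g) (S / (1 - F)) := hG ▸ hsum.hasSum
  refine ⟨hgs, Metric.tendsto_atTop'.2 fun ε hε => ?_⟩
  have hup := renewal_limsup_le hf hA.hasSum hF hA.tendsto hU.tendsto hrec hgs hM (half_pos hε)
  have hlow := renewal_limsup_le (u := fun n => -scaled U n) (g := fun n => -scaled g n) hf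
    hA.hasSum hF hA.tendsto (hU.tendsto.neg.congr fun n => by rw [neg_div])
    (fun n => by rw [conv_neg_right, hrec n]; ring) hgs.neg
    (fun n => by rw [abs_neg]; exact hM n) (half_pos hε)
  have hneg : (-υ + c * -(S / (1 - F))) / (1 - F) = -((υ + c * (S / (1 - F))) / (1 - F)) := by
    rw [← neg_div]; ring
  rw [hneg] at hlow
  obtain ⟨N, hN⟩ := eventually_atTop.1 (hup.and hlow)
  refine ⟨N, fun n hn => ?_⟩
  obtain ⟨h1, h2⟩ := hN n hn.le
  have h3 := (div_le_iff₀ (tau_pos n)).2 h1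
  have h4 := (div_le_iff₀ (tau_pos n)).2 h2
  rw [neg_div] at h4
  rw [Real.dist_eq, abs_lt]
  constructor <;> linarith

lemma tame_hSeries : Tame hSeries (5 / 3) (1 / 9) := by
  have hA := Tame.of_X.add ((Tame.of_X.mul Tame.of_X).mul Tame.of_motz)
  have h := hA.renewal (g := hSeries) (Tame.of_C 1) ?_ ?_ (by norm_num) (by norm_num) ?_
  · convert h using 1 <;> norm_num
  · intro n
    rw [map_add, mul_assoc]
    refine add_nonneg (by rw [coeff_X]; positivity) ?_
    rcases n with _ | _ | n <;> simp [coeff_succ_X_mul, (motz_pos _).le]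
  · simp
  · have h := hSeries_mul
    rw [qSeries, ySeries] at h
    rw [map_one]
    linear_combination h

lemma tame_dSeries : Tame dSeries (20 / 11) (24 / 121) := by
  have hX3 := Tame.of_X.mul (Tame.of_X.mul Tame.of_X)
  have hA := (Tame.of_C 2).mul (Tame.of_X.add ((hX3.mul Tame.of_motz).add
    ((Tame.of_X.mul hX3).mul (Tame.of_motz.mul Tame.of_motz))))
  have h := hA.renewal (g := dSeries) ((Tame.of_C 1).add ((Tame.of_C (-1)).mul Tame.of_X))
    ?_ ?_ (by norm_num) (by norm_num) ?_
  · convert h using 1 <;> norm_num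
  · intro n
    have hmm : ∀ n, 0 ≤ coeff n (PowerSeries.mk motz * PowerSeries.mk motz) := by
      intro n
      rw [coeff_mul]
      exact Finset.sum_nonneg fun p _ => by
        rw [coeff_mk, coeff_mk]
        exact (mul_pos (motz_pos _) (motz_pos _)).le
    have hX : ∀ {A : ℝ⟦X⟧}, (∀ n, 0 ≤ coeff n A) → ∀ n, 0 ≤ coeff n (X * A) := by
      intro A hA n
      cases n with
      | zero => simp
      | succ n => rw [coeff_succ_X_mul]; exact hA n
    have hY : ∀ n, 0 ≤ coeff n (PowerSeries.mk motz) := fun n => by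
      rw [coeff_mk]; exact (motz_pos n).le
    rw [coeff_C_mul, map_add, map_add]
    simp only [mul_assoc]
    have h1 := hX (hX (hX hY)) n
    have h2 := hX (hX (hX (hX hmm))) n
    have h3 : (0 : ℝ) ≤ coeff n (X : ℝ⟦X⟧) := by rw [coeff_X]; positivity
    positivity
  · simp
  · have h := dSeries_mul
    rw [dDenom, ySeries] at h
    rw [show C (2 : ℝ) = (2 : ℝ⟦X⟧) from rfl, map_neg, map_one]
    have hy := mk_motz_eq
    linear_combination h + 2 * X ^ 2 * dSeries * hy

theorem ratio_hCount_dCount :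
    Tendsto (fun n : ℕ => (hCount n : ℝ) / (dCount n : ℝ)) atTop (nhds (121 / 216)) ∧
    ∀ᶠ n : ℕ in atTop, dCount n < 2 * hCount n := by
  have hlim : Tendsto (fun n : ℕ => (hCount n : ℝ) / (dCount n : ℝ)) atTop (nhds (121 / 216)) := by
    have h := tame_hSeries.tendsto.div tame_dSeries.tendsto (by norm_num)
    rw [show (1 / 9 : ℝ) / (24 / 121) = 121 / 216 by norm_num] at h
    refine h.congr fun n => ?_
    simp only [Pi.div_apply]
    rw [div_div_div_cancel_right₀ (tau_pos n).ne', scaled, scaled,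
      div_div_div_cancel_right₀ (by positivity), hCount_eq_coeff, dCount_eq_coeff]
  refine ⟨hlim, ?_⟩
  filter_upwards [hlim.eventually_const_lt (show (1 / 2 : ℝ) < 121 / 216 by norm_num)] with n hn
  have hd : (0 : ℝ) < dCount n := by
    rcases Nat.eq_zero_or_pos (dCount n) with h0 | h0
    · rw [h0, Nat.cast_zero, div_zero] at hn
      norm_num at hn
    · exact_mod_cast h0
  rw [lt_div_iff₀ hd] at hn
  have : (dCount n : ℝ) < 2 * hCount n := by linarith
  exact_mod_cast this
end
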